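/- arXiv:1011.3390 — 3 statements merged into one kernel-verified Lean document; each statement's English description precedes it below -/
import Mathlib

section
/- Let n ≥ 1 and let V : ℝⁿ → ℝ be a smooth function. Suppose there exist a compact set K ⊆ ℝⁿ and a smooth function φ : ℝⁿ → ℝ with φ(x) > 0 for all x ∈ ℝⁿ and Δφ(x) = V(x)·φ(x) for all x ∈ ℝⁿ \ K (i.e. φ is a positive solution of the Schrödinger equation (−Δ + V)φ = 0 outside a compact set). Then the Schrödinger operator −Δ + V has finite Morse index in the quadratic-form sense: there exists N ∈ ℕ such that every subspace F of C_c^∞(ℝⁿ) satisfying ∫_{ℝⁿ}(‖∇f‖² + V·f²) ≤ 0 for every f ∈ F has dimension at most N. -/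
/-!
Substituting `f = φ u` (the ground state transform) turns the energy into
`∫ (‖∇f‖² + V f²) = ∫ (φ² ‖∇u‖² + w u²)` with `w = V φ² - φ Δφ`: the two integrands differ by the
divergence of the compactly supported field `φ u² ∇φ` (`energy_mul`). The equation for `φ` says
exactly that the continuous function `w` vanishes outside the compact set `K`, so the only possibly
negative contribution comes from a bounded region.

Cover `K` by finitely many disjoint cubes of diameter at most `δ` (`exists_grid`). If `u` has mean
zero on each cube, the Poincaré inequality on convex sets (`poincare_convex`) bounds `∫ u²` over
their union by `2ⁿ δ² ∫ ‖∇u‖²`. Since `φ²` is bounded below and `|w|` above near `K`, for small `δ`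
the term `∫ w u²` is absorbed by half of `∫ φ² ‖∇u‖²`; energy `≤ 0` then forces `∇u = 0`, hence
`u = 0` because `u` has compact support (`eq_zero_of_energy_nonpos`). Therefore the linear map
sending `f` to the integrals of `f / φ` over the cubes is injective on every subspace `F` of the
statement, and the number of cubes bounds `dim F`.
-/

open MeasureTheory

/-- The Euclidean Laplacian `Δf = ∑ i, ∂²f/∂xᵢ²` on `ℝⁿ`. -/
noncomputable def euclideanLaplacian {n : ℕ} (f : EuclideanSpace ℝ (Fin n) → ℝ)
    (x : EuclideanSpace ℝ (Fin n)) : ℝ :=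
  ∑ i : Fin n,
    fderiv ℝ (fun y => fderiv ℝ f y (EuclideanSpace.single i 1)) x (EuclideanSpace.single i 1)

/-! ### Poincaré inequality on bounded convex sets -/

theorem integrable_of_eq_zero_off_tsupport {X : Type*} [TopologicalSpace X] [MeasurableSpace X]
    [T2Space X] [OpensMeasurableSpace X] {μ : Measure X} [IsFiniteMeasureOnCompacts μ] {u g : X → ℝ}
    (hg : Continuous g) (hu : HasCompactSupport u) (h : ∀ x ∉ tsupport u, g x = 0) :
    Integrable g μ :=
  hg.integrable_of_hasCompactSupport (HasCompactSupport.intro hu.isCompact h)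

/-- The homothety `x ↦ y + t (x - y)` maps the convex set `Q` into itself, and for `t ≥ 1/2` its
inverse distorts volume by `t⁻ⁿ ≤ 2ⁿ`. -/
theorem lintegral_comp_lineMap_le {E : Type*} [NormedAddCommGroup E] [NormedSpace ℝ E]
    [FiniteDimensional ℝ E] [MeasurableSpace E] [BorelSpace E] (μ : Measure E)
    [μ.IsAddHaarMeasure] {Q : Set E} (hQ : MeasurableSet Q) (hconv : Convex ℝ Q)
    {G : E → ENNReal} (hG : Measurable G) {y : E} (hy : y ∈ Q) {t : ℝ}
    (ht : 1 / 2 ≤ t) (ht1 : t ≤ 1) :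
    ∫⁻ x in Q, G (y + t • (x - y)) ∂μ ≤
      2 ^ Module.finrank ℝ E * ∫⁻ x in Q, G x ∂μ := by
  have ht0 : 0 < t := by linarith
  have hGi : Measurable (Q.indicator G) := hG.indicator hQ
  calc ∫⁻ x in Q, G (y + t • (x - y)) ∂μ
      ≤ ∫⁻ x, Q.indicator G ((y - t • y) + t • x) ∂μ := by
        rw [← lintegral_indicator hQ]
        refine lintegral_mono fun x => ?_
        by_cases hx : x ∈ Q
        · have e : (y - t • y) + t • x = y + t • (x - y) := by rw [smul_sub]; abel
          have hm : y + t • (x - y) ∈ Q := hconv.add_smul_sub_mem hy hx ⟨ht0.le, ht1⟩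
          rw [e, Set.indicator_of_mem hx, Set.indicator_of_mem hm]
        · rw [Set.indicator_of_notMem hx]; exact zero_le
    _ = ∫⁻ z, Q.indicator G ((y - t • y) + z) ∂(Measure.map (fun x => t • x) μ) := by
        rw [lintegral_map (f := fun z => Q.indicator G ((y - t • y) + z))
          (hGi.comp (measurable_const_add _)) (measurable_const_smul t)]
    _ = ENNReal.ofReal |(t ^ Module.finrank ℝ E)⁻¹| * ∫⁻ z, Q.indicator G z ∂μ := by
        rw [Measure.map_addHaar_smul μ ht0.ne', lintegral_smul_measure,
          lintegral_add_left_eq_self, smul_eq_mul]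
    _ ≤ 2 ^ Module.finrank ℝ E * ∫⁻ x in Q, G x ∂μ := by
        rw [lintegral_indicator hQ]
        gcongr
        rw [abs_of_pos (by positivity), ← inv_pow]
        have : t⁻¹ ≤ 2 := by rw [inv_le_comm₀ ht0 (by norm_num)]; linarith
        calc ENNReal.ofReal (t⁻¹ ^ Module.finrank ℝ E)
            ≤ ENNReal.ofReal (2 ^ Module.finrank ℝ E) := by
              apply ENNReal.ofReal_le_ofReal; gcongr
          _ = _ := by rw [ENNReal.ofReal_pow (by norm_num)]; norm_num

/-- Averaging `G` over all segments joining two points of `Q`. For `t ≥ 1/2` the point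
`y + t (x - y)` is a homothetic image of `x` with ratio `t`, for `t ≤ 1/2` one of `y` with ratio
`1 - t`; in both cases `lintegral_comp_lineMap_le` applies. -/
theorem lintegral_segment_le {E : Type*} [NormedAddCommGroup E] [NormedSpace ℝ E]
    [FiniteDimensional ℝ E] [MeasurableSpace E] [BorelSpace E] (μ : Measure E)
    [μ.IsAddHaarMeasure] {Q : Set E} (hQ : MeasurableSet Q) (hconv : Convex ℝ Q)
    {G : E → ENNReal} (hG : Measurable G) :
    ∫⁻ x in Q, ∫⁻ y in Q, ∫⁻ t in Set.Icc (0 : ℝ) 1, G (y + t • (x - y)) ∂volume ∂μ ∂μ ≤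
      2 ^ Module.finrank ℝ E * μ Q * ∫⁻ x in Q, G x ∂μ := by
  set A := 2 ^ Module.finrank ℝ E * ∫⁻ x in Q, G x ∂μ
  have key : ∀ t ∈ Set.Icc (0 : ℝ) 1,
      ∫⁻ x in Q, ∫⁻ y in Q, G (y + t • (x - y)) ∂μ ∂μ ≤ A * μ Q := by
    intro t ht
    rcases le_total (1 / 2) t with h | h
    · rw [lintegral_lintegral_swap (by
        apply Measurable.aemeasurable; unfold Function.uncurry; fun_prop)]
      rw [← setLIntegral_const]
      exact setLIntegral_mono' hQ fun y hy =>
        lintegral_comp_lineMap_le μ hQ hconv hG hy h ht.2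
    · rw [← setLIntegral_const]
      refine setLIntegral_mono' hQ fun x hx => ?_
      refine le_trans (le_of_eq ?_)
        (lintegral_comp_lineMap_le μ hQ hconv hG hx (t := 1 - t) (by linarith) (by linarith [ht.1]))
      congr with y
      congr 1
      module
  calc ∫⁻ x in Q, ∫⁻ y in Q, ∫⁻ t in Set.Icc (0 : ℝ) 1, G (y + t • (x - y)) ∂volume ∂μ ∂μ
      = ∫⁻ x in Q, ∫⁻ t in Set.Icc (0 : ℝ) 1, ∫⁻ y in Q, G (y + t • (x - y)) ∂μ ∂volume ∂μ := by
        congr with x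
        rw [lintegral_lintegral_swap (by
          apply Measurable.aemeasurable; unfold Function.uncurry; fun_prop)]
    _ = ∫⁻ t in Set.Icc (0 : ℝ) 1, ∫⁻ x in Q, ∫⁻ y in Q, G (y + t • (x - y)) ∂μ ∂μ := by
        rw [lintegral_lintegral_swap]
        apply Measurable.aemeasurable
        unfold Function.uncurry
        apply Measurable.lintegral_prod_right' (f := fun p : (E × ℝ) × E => G (p.2 + p.1.2 • (p.1.1 - p.2)))
        fun_prop
    _ ≤ ∫⁻ t in Set.Icc (0 : ℝ) 1, A * μ Q := setLIntegral_mono' measurableSet_Icc key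
    _ = _ := by
        rw [setLIntegral_const]
        simp [A]
        ring

/-- The fundamental theorem of calculus on the segment from `y` to `x`, followed by Cauchy-Schwarz. -/
theorem sq_sub_le_lintegral {E : Type*} [NormedAddCommGroup E] [NormedSpace ℝ E]
    {u : E → ℝ} (hu : ContDiff ℝ 1 u) {δ : ℝ} {x y : E} (hxy : ‖x - y‖ ≤ δ) :
    ENNReal.ofReal ((u x - u y) ^ 2) ≤ ENNReal.ofReal (δ ^ 2) *
      ∫⁻ t in Set.Icc (0 : ℝ) 1, ENNReal.ofReal (‖fderiv ℝ u (y + t • (x - y))‖ ^ 2) := by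
  have hc : Continuous (fderiv ℝ u) := hu.continuous_fderiv one_ne_zero
  have hline : Continuous fun t : ℝ => y + t • (x - y) := by fun_prop
  have hcl : Continuous fun t : ℝ => fderiv ℝ u (y + t • (x - y)) := hc.comp hline
  set h : ℝ → ℝ := fun t => fderiv ℝ u (y + t • (x - y)) (x - y) with hh
  have hhc : Continuous h := hcl.clm_apply continuous_const
  have ftc : ∫ t in (0 : ℝ)..1, h t = u x - u y := by
    have := intervalIntegral.integral_eq_sub_of_hasDerivAt (a := 0) (b := 1)
      (f := fun t : ℝ => u (y + t • (x - y))) (f' := h) (fun t _ => by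
        have h1 : HasDerivAt (fun t : ℝ => y + t • (x - y)) (x - y) t := by
          simpa using ((hasDerivAt_id t).smul_const (x - y)).const_add y
        exact ((hu.differentiable one_ne_zero _).hasFDerivAt.comp_hasDerivAt t h1))
      (hhc.intervalIntegrable _ _)
    simpa using this
  set a := u x - u y
  -- expanding `0 ≤ ∫ (h - a)²` gives the Cauchy-Schwarz bound `a² ≤ ∫ h²`
  have cs : a ^ 2 ≤ ∫ t in (0 : ℝ)..1, h t ^ 2 := by
    have h0 : 0 ≤ ∫ t in (0 : ℝ)..1, (h t - a) ^ 2 :=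
      intervalIntegral.integral_nonneg zero_le_one fun t _ => sq_nonneg _
    have h1 : ∫ t in (0 : ℝ)..1, (h t - a) ^ 2
        = (∫ t in (0 : ℝ)..1, h t ^ 2) - 2 * a * (∫ t in (0 : ℝ)..1, h t) + a ^ 2 := by
      have e : ∀ t, (h t - a) ^ 2 = h t ^ 2 - 2 * a * h t + a ^ 2 := fun t => by ring
      simp_rw [e]
      rw [intervalIntegral.integral_add, intervalIntegral.integral_sub,
        intervalIntegral.integral_const_mul]
      · simp
      all_goals exact Continuous.intervalIntegrable (by fun_prop) _ _
    rw [h1, ftc] at h0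
    nlinarith
  have hle : ∫ t in (0 : ℝ)..1, h t ^ 2 ≤
      ∫ t in (0 : ℝ)..1, δ ^ 2 * ‖fderiv ℝ u (y + t • (x - y))‖ ^ 2 := by
    refine intervalIntegral.integral_mono_on zero_le_one
      ((hhc.pow 2).intervalIntegrable _ _)
      (Continuous.intervalIntegrable (by fun_prop) _ _) fun t _ => ?_
    have h1 := (fderiv ℝ u (y + t • (x - y))).le_opNorm (x - y)
    rw [← mul_pow, ← sq_abs (h t)]
    refine pow_le_pow_left₀ (abs_nonneg _) ?_ 2
    calc |h t| ≤ _ := h1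
      _ ≤ ‖fderiv ℝ u (y + t • (x - y))‖ * δ := by gcongr
      _ = _ := mul_comm _ _
  refine (ENNReal.ofReal_le_ofReal (cs.trans hle)).trans (le_of_eq ?_)
  rw [intervalIntegral.integral_const_mul, ENNReal.ofReal_mul (by positivity),
    intervalIntegral.integral_of_le zero_le_one, ← integral_Icc_eq_integral_Ioc,
    ofReal_integral_eq_lintegral_ofReal]
  · exact (Continuous.integrableOn_Icc (by fun_prop))
  · exact Filter.Eventually.of_forall fun t => by positivity

theorem lintegral_sq_sub_le {E : Type*} [NormedAddCommGroup E] [NormedSpace ℝ E]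
    [FiniteDimensional ℝ E] [MeasurableSpace E] [BorelSpace E] (μ : Measure E)
    [μ.IsAddHaarMeasure] {Q : Set E} (hQ : MeasurableSet Q) (hconv : Convex ℝ Q)
    {δ : ℝ} (hδ : ∀ x ∈ Q, ∀ y ∈ Q, ‖x - y‖ ≤ δ) {u : E → ℝ} (hu : ContDiff ℝ 1 u) :
    ∫⁻ x in Q, ∫⁻ y in Q, ENNReal.ofReal ((u x - u y) ^ 2) ∂μ ∂μ ≤
      ENNReal.ofReal (δ ^ 2) * (2 ^ Module.finrank ℝ E * μ Q *
        ∫⁻ x in Q, ENNReal.ofReal (‖fderiv ℝ u x‖ ^ 2) ∂μ) := by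
  have hc : Continuous (fderiv ℝ u) := hu.continuous_fderiv one_ne_zero
  calc ∫⁻ x in Q, ∫⁻ y in Q, ENNReal.ofReal ((u x - u y) ^ 2) ∂μ ∂μ
      _ ≤ ∫⁻ x in Q, ∫⁻ y in Q, ENNReal.ofReal (δ ^ 2) * ∫⁻ t in Set.Icc (0 : ℝ) 1,
            ENNReal.ofReal (‖fderiv ℝ u (y + t • (x - y))‖ ^ 2) ∂volume ∂μ ∂μ :=
          setLIntegral_mono' hQ fun x hx => setLIntegral_mono' hQ fun y hy =>
            sq_sub_le_lintegral hu (hδ x hx y hy)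
      _ = ENNReal.ofReal (δ ^ 2) * ∫⁻ x in Q, ∫⁻ y in Q, ∫⁻ t in Set.Icc (0 : ℝ) 1,
            ENNReal.ofReal (‖fderiv ℝ u (y + t • (x - y))‖ ^ 2) ∂volume ∂μ ∂μ := by
          simp_rw [lintegral_const_mul' _ _ ENNReal.ofReal_ne_top]
      _ ≤ ENNReal.ofReal (δ ^ 2) * (2 ^ Module.finrank ℝ E * μ Q *
            ∫⁻ x in Q, ENNReal.ofReal (‖fderiv ℝ u x‖ ^ 2) ∂μ) := by
          gcongr
          exact lintegral_segment_le μ hQ hconv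
            (G := fun z => ENNReal.ofReal (‖fderiv ℝ u z‖ ^ 2))
            (ENNReal.measurable_ofReal.comp (hc.norm.pow 2).measurable)

/-- **Poincaré inequality** for mean-zero functions on a convex set of diameter at most `δ`. When
`u` has mean zero, `∬ (u x - u y)² = 2 μ(Q) ∫ u²`, and the left side is bounded through
`lintegral_sq_sub_le`. -/
theorem poincare_convex {E : Type*} [NormedAddCommGroup E] [NormedSpace ℝ E]
    [FiniteDimensional ℝ E] [MeasurableSpace E] [BorelSpace E] (μ : Measure E)
    [μ.IsAddHaarMeasure] {Q : Set E} (hQ : MeasurableSet Q) (hconv : Convex ℝ Q)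
    {δ : ℝ} (hδ : ∀ x ∈ Q, ∀ y ∈ Q, ‖x - y‖ ≤ δ)
    {u : E → ℝ} (hu : ContDiff ℝ 1 u) (hsupp : HasCompactSupport u)
    (hmean : ∫ x in Q, u x ∂μ = 0) :
    ∫ x in Q, u x ^ 2 ∂μ ≤
      2 ^ Module.finrank ℝ E * δ ^ 2 * ∫ x in Q, ‖fderiv ℝ u x‖ ^ 2 ∂μ := by
  have hbdd : Bornology.IsBounded Q := Metric.isBounded_iff.2
    ⟨δ, fun x hx y hy => by rw [dist_eq_norm]; exact hδ x hx y hy⟩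
  have hfin : μ Q < ⊤ := hbdd.measure_lt_top
  have : IsFiniteMeasure (μ.restrict Q) := ⟨by simpa using hfin⟩
  have hc : Continuous (fderiv ℝ u) := hu.continuous_fderiv one_ne_zero
  have huc : Continuous u := hu.continuous
  have hui : Integrable u μ := huc.integrable_of_hasCompactSupport hsupp
  have hu2i : Integrable (fun x => u x ^ 2) μ :=
    integrable_of_eq_zero_off_tsupport (by fun_prop) hsupp fun x hx => by
      simp [image_eq_zero_of_notMem_tsupport hx]
  have hgi : Integrable (fun x => ‖fderiv ℝ u x‖ ^ 2) μ :=
    integrable_of_eq_zero_off_tsupport (by fun_prop) hsupp fun x hx => by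
      simp [fderiv_of_notMem_tsupport (𝕜 := ℝ) hx]
  set v := μ.real Q with hv
  set I := ∫ x in Q, u x ^ 2 ∂μ with hI
  set D := ∫ x in Q, ‖fderiv ℝ u x‖ ^ 2 ∂μ with hD
  have hv0 : 0 ≤ v := measureReal_nonneg
  have hI0 : 0 ≤ I := integral_nonneg fun x => sq_nonneg _
  have hD0 : 0 ≤ D := integral_nonneg fun x => by positivity
  have inner_int : ∀ x, Integrable (fun y => (u x - u y) ^ 2) (μ.restrict Q) := fun x => by
    have e : (fun y => (u x - u y) ^ 2) = fun y => u x ^ 2 - 2 * u x * u y + u y ^ 2 := by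
      funext y; ring
    rw [e]
    exact ((integrable_const _).sub (hui.restrict.const_mul _)).add hu2i.restrict
  have inner : ∀ x, ∫ y in Q, (u x - u y) ^ 2 ∂μ = v * u x ^ 2 + I := fun x => by
    have e : ∀ y, (u x - u y) ^ 2 = u x ^ 2 - 2 * u x * u y + u y ^ 2 := fun y => by ring
    simp_rw [e]
    have hsub : Integrable (fun y => u x ^ 2 - 2 * u x * u y) (μ.restrict Q) :=
      (integrable_const _).sub (hui.restrict.const_mul _)
    rw [integral_add hsub hu2i.restrict,
      integral_sub (integrable_const _) (hui.restrict.const_mul _), integral_const_mul, hmean]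
    simp [hv, hI]
  have houter : Integrable (fun x => v * u x ^ 2 + I) (μ.restrict Q) :=
    (hu2i.restrict.const_mul _).add (integrable_const _)
  have outer : ∫ x in Q, (v * u x ^ 2 + I) ∂μ = 2 * v * I := by
    rw [integral_add (hu2i.restrict.const_mul _) (integrable_const _), integral_const_mul]
    simp [hv, ← hI]; ring
  have main : ENNReal.ofReal (2 * v * I) ≤
      ENNReal.ofReal (δ ^ 2 * (2 ^ Module.finrank ℝ E * v * D)) := by
    rw [← outer, ofReal_integral_eq_lintegral_ofReal
      houter
      (Filter.Eventually.of_forall fun x => by positivity)]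
    calc ∫⁻ x in Q, ENNReal.ofReal (v * u x ^ 2 + I) ∂μ
        = ∫⁻ x in Q, ∫⁻ y in Q, ENNReal.ofReal ((u x - u y) ^ 2) ∂μ ∂μ := by
          congr with x
          rw [← inner x, ofReal_integral_eq_lintegral_ofReal (inner_int x)
            (Filter.Eventually.of_forall fun y => by positivity)]
      _ ≤ _ := lintegral_sq_sub_le μ hQ hconv hδ hu
      _ = _ := by
          rw [← ofReal_integral_eq_lintegral_ofReal hgi.restrict
            (Filter.Eventually.of_forall fun x => by positivity), ← hD,
            ENNReal.ofReal_mul (by positivity), ENNReal.ofReal_mul (by positivity),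
            ENNReal.ofReal_mul (by positivity), ENNReal.ofReal_pow (by norm_num) (Module.finrank ℝ E),
            hv, ofReal_measureReal hfin.ne]
          norm_num
  have main' := (ENNReal.ofReal_le_ofReal_iff (by positivity)).1 main
  -- the factor `μ(Q)` can only be cancelled when it is nonzero
  rcases (measureReal_nonneg : 0 ≤ μ.real Q).eq_or_lt with h0 | hpos
  · have hz : μ Q = 0 := by
      rwa [eq_comm, measureReal_eq_zero_iff hfin.ne] at h0
    have : I = 0 := by rw [hI, Measure.restrict_eq_zero.2 hz]; simp
    rw [this]; positivity
  · have : v * (2 * I) ≤ v * (2 ^ Module.finrank ℝ E * δ ^ 2 * D) := by linarith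
    have := le_of_mul_le_mul_left this hpos
    linarith

/-! ### Ground state transform -/

theorem norm_fderiv_sq_eq_sum {n : ℕ} (f : EuclideanSpace ℝ (Fin n) → ℝ)
    (x : EuclideanSpace ℝ (Fin n)) :
    ‖fderiv ℝ f x‖ ^ 2 = ∑ i, fderiv ℝ f x (EuclideanSpace.single i 1) ^ 2 := by
  have h := (EuclideanSpace.basisFun (Fin n) ℝ).sum_sq_norm_inner_left (gradient f x)
  have hn : ‖gradient f x‖ = ‖fderiv ℝ f x‖ := by simp [gradient]
  rw [← hn, ← h]
  refine Finset.sum_congr rfl fun i _ => ?_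
  simp [gradient]

theorem continuous_euclideanLaplacian {n : ℕ} {φ : EuclideanSpace ℝ (Fin n) → ℝ}
    (hφ : ContDiff ℝ (⊤ : ℕ∞) φ) : Continuous (euclideanLaplacian φ) := by
  unfold euclideanLaplacian
  refine continuous_finsetSum _ fun i _ => ?_
  have h : ContDiff ℝ (⊤ : ℕ∞) fun y => fderiv ℝ φ y (EuclideanSpace.single i 1) :=
    (hφ.fderiv_right (m := (⊤ : ℕ∞)) (by simp)).clm_apply contDiff_const
  exact (h.continuous_fderiv (by simp)).clm_apply continuous_const

/-- **Ground state transform**: the energy of `φ u` differs from the right-hand side by the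
integral of the divergence of `φ u² ∇φ`, which is zero. -/
theorem energy_mul {n : ℕ} {V φ u : EuclideanSpace ℝ (Fin n) → ℝ} (hV : Continuous V)
    (hφ : ContDiff ℝ (⊤ : ℕ∞) φ) (hu : ContDiff ℝ (⊤ : ℕ∞) u) (hsupp : HasCompactSupport u) :
    ∫ x, (‖gradient (fun y => φ y * u y) x‖ ^ 2 + V x * (φ x * u x) ^ 2) =
      ∫ x, (φ x ^ 2 * ‖fderiv ℝ u x‖ ^ 2 +
        (V x * φ x ^ 2 - φ x * euclideanLaplacian φ x) * u x ^ 2) := by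
  set e : Fin n → EuclideanSpace ℝ (Fin n) := fun i => EuclideanSpace.single i 1
  have htop : ((⊤ : ℕ∞) : WithTop ℕ∞) ≠ 0 := by simp
  have hφd : Differentiable ℝ φ := hφ.differentiable htop
  have hud : Differentiable ℝ u := hu.differentiable htop
  have hdφ : ∀ i, ContDiff ℝ (⊤ : ℕ∞) fun y => fderiv ℝ φ y (e i) := fun i =>
    (hφ.fderiv_right (m := (⊤ : ℕ∞)) (by simp)).clm_apply contDiff_const
  have hφc := hφ.continuous
  have huc := hu.continuous
  have hφ' := hφ.continuous_fderiv htop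
  have hu' := hu.continuous_fderiv htop
  have hdφ' := fun i => (hdφ i).continuous_fderiv htop
  -- the components `∂ᵢ(φ u² ∂ᵢφ)` of the divergence integrate to zero
  set g : EuclideanSpace ℝ (Fin n) → ℝ := fun x => φ x * u x ^ 2 with hg
  have hgC : ContDiff ℝ (⊤ : ℕ∞) g := hφ.mul (hu.pow 2)
  have hgd : Differentiable ℝ g := hgC.differentiable htop
  have hg' := hgC.continuous_fderiv htop
  have hgc := hgC.continuous
  have hgf : ∀ x v, fderiv ℝ g x v = fderiv ℝ φ x v * u x ^ 2 + φ x * (2 * u x * fderiv ℝ u x v) := by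
    intro x v
    have h1 : HasFDerivAt g _ x := (hφd x).hasFDerivAt.mul ((hud x).hasFDerivAt.pow 2)
    rw [h1.fderiv]
    simp
    ring
  have hz : ∀ x ∉ tsupport u, u x = 0 := fun x hx => image_eq_zero_of_notMem_tsupport hx
  have hz' : ∀ x ∉ tsupport u, fderiv ℝ u x = 0 := fun x hx =>
    fderiv_of_notMem_tsupport (𝕜 := ℝ) hx
  have i1 : ∀ i, Integrable fun x => fderiv ℝ g x (e i) * fderiv ℝ φ x (e i) := fun i =>
    integrable_of_eq_zero_off_tsupport (by fun_prop) hsupp fun x hx => by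
      simp [hgf, hz x hx]
  have i2 : ∀ i, Integrable fun x => g x * fderiv ℝ (fun y => fderiv ℝ φ y (e i)) x (e i) :=
    fun i => integrable_of_eq_zero_off_tsupport
      (hgc.mul ((hdφ' i).clm_apply continuous_const)) hsupp fun x hx => by
      simp [hg, hz x hx]
  have i3 : ∀ i, Integrable fun x => g x * fderiv ℝ φ x (e i) := fun i =>
    integrable_of_eq_zero_off_tsupport (by fun_prop) hsupp fun x hx => by
      simp [hg, hz x hx]
  have i12 : ∀ i, Integrable fun x => fderiv ℝ g x (e i) * fderiv ℝ φ x (e i) +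
      g x * fderiv ℝ (fun y => fderiv ℝ φ y (e i)) x (e i) := fun i => (i1 i).add (i2 i)
  have ibp : ∀ i, ∫ x, (fderiv ℝ g x (e i) * fderiv ℝ φ x (e i) +
      g x * fderiv ℝ (fun y => fderiv ℝ φ y (e i)) x (e i)) = 0 := fun i => by
    rw [integral_add (i1 i) (i2 i), integral_mul_fderiv_eq_neg_fderiv_mul_of_integrable
      (i1 i) (i2 i) (i3 i) (fun x _ => hgd x) (fun x _ => (hdφ i).differentiable htop x)]
    ring
  have hdiv : ∫ x, ∑ i, (fderiv ℝ g x (e i) * fderiv ℝ φ x (e i) +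
      g x * fderiv ℝ (fun y => fderiv ℝ φ y (e i)) x (e i)) = 0 := by
    rw [integral_finsetSum _ fun i _ => i12 i]
    exact Finset.sum_eq_zero fun i _ => ibp i
  have hΔ : Continuous (euclideanLaplacian φ) := continuous_euclideanLaplacian hφ
  have hmain : Integrable fun x => φ x ^ 2 * ‖fderiv ℝ u x‖ ^ 2 +
      (V x * φ x ^ 2 - φ x * euclideanLaplacian φ x) * u x ^ 2 :=
    integrable_of_eq_zero_off_tsupport (by fun_prop) hsupp fun x hx => by
      simp [hz x hx, hz' x hx]
  have hsum : Integrable fun x => ∑ i, (fderiv ℝ g x (e i) * fderiv ℝ φ x (e i) +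
      g x * fderiv ℝ (fun y => fderiv ℝ φ y (e i)) x (e i)) :=
    integrable_finsetSum _ fun i _ => i12 i
  rw [← add_zero (∫ x, (φ x ^ 2 * _ + _)), ← hdiv, ← integral_add hmain hsum]
  congr 1
  funext x
  have hn : ‖gradient (fun y => φ y * u y) x‖ = ‖fderiv ℝ (fun y => φ y * u y) x‖ := by
    simp [gradient]
  have hprod : ∀ v, fderiv ℝ (fun y => φ y * u y) x v =
      φ x * fderiv ℝ u x v + u x * fderiv ℝ φ x v := fun v => by
    rw [fderiv_fun_mul (hφd x) (hud x)]; simp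
  rw [hn, norm_fderiv_sq_eq_sum, norm_fderiv_sq_eq_sum]
  have hsq : ∑ i, fderiv ℝ (fun y => φ y * u y) x (e i) ^ 2 =
      φ x ^ 2 * ∑ i, fderiv ℝ u x (e i) ^ 2 - φ x * euclideanLaplacian φ x * u x ^ 2 +
      ∑ i, (fderiv ℝ g x (e i) * fderiv ℝ φ x (e i) +
        g x * fderiv ℝ (fun y => fderiv ℝ φ y (e i)) x (e i)) := by
    unfold euclideanLaplacian
    rw [Finset.mul_sum, Finset.mul_sum, Finset.sum_mul, ← Finset.sum_sub_distrib,
      ← Finset.sum_add_distrib]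
    refine Finset.sum_congr rfl fun i _ => ?_
    rw [hprod, hgf]
    simp only [hg, e]
    ring
  rw [hsq]
  ring

/-! ### Grid of cubes and absorption of the negative part -/

/-- A compact set is covered by finitely many disjoint half-open cubes of diameter at most `δ`,
all meeting it: the fibres of `x ↦ (⌊xᵢ / h⌋)ᵢ` with `h = δ / (n + 1)`. -/
theorem exists_grid {n : ℕ} {K : Set (EuclideanSpace ℝ (Fin n))} (hK : IsCompact K) {δ : ℝ}
    (hδ : 0 < δ) :
    ∃ (S : Finset (Fin n → ℤ)) (Q : (Fin n → ℤ) → Set (EuclideanSpace ℝ (Fin n))),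
      (∀ k, MeasurableSet (Q k)) ∧ (∀ k, Convex ℝ (Q k)) ∧
      Pairwise (Function.onFun Disjoint Q) ∧
      (∀ k, ∀ x ∈ Q k, ∀ y ∈ Q k, ‖x - y‖ ≤ δ) ∧
      (K ⊆ ⋃ k ∈ S, Q k) ∧ ∀ k ∈ S, (Q k ∩ K).Nonempty := by
  classical
  set h : ℝ := δ / (n + 1) with hh
  have hpos : 0 < h := by positivity
  set κ : EuclideanSpace ℝ (Fin n) → Fin n → ℤ := fun x i => ⌊x i / h⌋ with hκ
  have hfin : (κ '' K).Finite := by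
    obtain ⟨R, hR⟩ := hK.isBounded.exists_norm_le
    refine (Set.finite_Icc (fun _ : Fin n => ⌊-R / h⌋) (fun _ => ⌊R / h⌋)).subset ?_
    rintro _ ⟨x, hx, rfl⟩
    have hxi : ∀ i, |x i| ≤ R := fun i => (PiLp.norm_apply_le x i).trans (hR x hx)
    refine ⟨fun i => Int.floor_mono ?_, fun i => Int.floor_mono ?_⟩
    · have := (abs_le.1 (hxi i)).1
      gcongr
    · have := (abs_le.1 (hxi i)).2
      gcongr
  have hmem : ∀ k x, x ∈ κ ⁻¹' {k} ↔ ∀ i, k i * h ≤ x i ∧ x i < (k i + 1) * h := by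
    intro k x
    simp only [Set.mem_preimage, Set.mem_singleton_iff, hκ, funext_iff, Int.floor_eq_iff,
      le_div_iff₀ hpos, div_lt_iff₀ hpos]
  refine ⟨hfin.toFinset, fun k => κ ⁻¹' {k}, fun k => ?_, fun k => ?_, ?_, ?_, ?_, ?_⟩
  · have : Measurable κ := measurable_pi_lambda _ fun i =>
      Int.measurable_floor.comp (Measurable.div_const (by fun_prop) _)
    exact this (measurableSet_singleton k)
  · intro x hx y hy a b ha hb hab
    rw [hmem] at hx hy ⊢
    intro i
    obtain ⟨h1, h2⟩ := hx i
    obtain ⟨h3, h4⟩ := hy i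
    have := convex_Ico (𝕜 := ℝ) (k i * h) ((k i + 1) * h) ⟨h1, h2⟩ ⟨h3, h4⟩ ha hb hab
    simpa using this
  · intro j k hjk
    exact Disjoint.preimage _ (Set.disjoint_singleton.2 hjk)
  · intro k x hx y hy
    rw [hmem] at hx hy
    refine (sq_le_sq₀ (norm_nonneg _) hδ.le).1 ?_
    rw [EuclideanSpace.norm_sq_eq]
    calc ∑ i, ‖(x - y) i‖ ^ 2 ≤ ∑ i : Fin n, h ^ 2 := by
          refine Finset.sum_le_sum fun i _ => ?_
          refine pow_le_pow_left₀ (norm_nonneg _) ?_ 2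
          rw [Real.norm_eq_abs, abs_le]
          obtain ⟨h1, h2⟩ := hx i
          obtain ⟨h3, h4⟩ := hy i
          simp only [PiLp.sub_apply]
          constructor <;> linarith
      _ = n * h ^ 2 := by simp
      _ ≤ (n + 1) ^ 2 * h ^ 2 := by gcongr; nlinarith [(Nat.cast_nonneg n : (0 : ℝ) ≤ n)]
      _ = δ ^ 2 := by rw [hh]; field_simp
  · intro x hx
    simp only [Set.mem_iUnion]
    exact ⟨κ x, by simpa using ⟨x, hx, rfl⟩, rfl⟩
  · intro k hk
    obtain ⟨x, hx, rfl⟩ := hfin.mem_toFinset.1 hk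
    exact ⟨x, rfl, hx⟩

/-- If `u` has mean zero on each of the small cubes covering `K`, the negative part of the energy
is at most half of `∫ φ² ‖∇u‖²`, so nonpositive energy forces `u = 0`. -/
theorem eq_zero_of_energy_nonpos {n : ℕ} (hn : 1 ≤ n) {K' : Set (EuclideanSpace ℝ (Fin n))}
    {K : Set (EuclideanSpace ℝ (Fin n))} {φ w u : EuclideanSpace ℝ (Fin n) → ℝ}
    (hφ : Continuous φ) (hφ0 : ∀ x, 0 < φ x) (hw : Continuous w) (hu : ContDiff ℝ 1 u)
    (hsupp : HasCompactSupport u) (hwK : ∀ x ∉ K, w x = 0)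
    {c C δ : ℝ} (hC0 : 0 ≤ C) (hc : ∀ x ∈ K', c ≤ φ x ^ 2) (hC : ∀ x ∈ K', |w x| ≤ C)
    (hδ : C * (2 ^ n * δ ^ 2) ≤ c / 2) {ι : Type*} (S : Finset ι)
    {Q : ι → Set (EuclideanSpace ℝ (Fin n))} (hQm : ∀ k, MeasurableSet (Q k))
    (hQc : ∀ k, Convex ℝ (Q k)) (hQd : Pairwise (Function.onFun Disjoint Q))
    (hQδ : ∀ k, ∀ x ∈ Q k, ∀ y ∈ Q k, ‖x - y‖ ≤ δ) (hKQ : K ⊆ ⋃ k ∈ S, Q k)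
    (hQK' : ∀ k ∈ S, Q k ⊆ K') (hmean : ∀ k ∈ S, ∫ x in Q k, u x = 0)
    (hE : ∫ x, (φ x ^ 2 * ‖fderiv ℝ u x‖ ^ 2 + w x * u x ^ 2) ≤ 0) : u = 0 := by
  have hu' : Continuous (fderiv ℝ u) := hu.continuous_fderiv one_ne_zero
  have huc : Continuous u := hu.continuous
  have hz : ∀ x ∉ tsupport u, u x = 0 := fun x hx => image_eq_zero_of_notMem_tsupport hx
  have hz' : ∀ x ∉ tsupport u, fderiv ℝ u x = 0 := fun x hx =>
    fderiv_of_notMem_tsupport (𝕜 := ℝ) hx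
  have i1 : Integrable fun x => φ x ^ 2 * ‖fderiv ℝ u x‖ ^ 2 :=
    integrable_of_eq_zero_off_tsupport (by fun_prop) hsupp fun x hx => by simp [hz' x hx]
  have i2 : Integrable fun x => w x * u x ^ 2 :=
    integrable_of_eq_zero_off_tsupport (by fun_prop) hsupp fun x hx => by simp [hz x hx]
  have i3 : Integrable fun x => u x ^ 2 :=
    integrable_of_eq_zero_off_tsupport (by fun_prop) hsupp fun x hx => by simp [hz x hx]
  have i4 : Integrable fun x => ‖fderiv ℝ u x‖ ^ 2 :=
    integrable_of_eq_zero_off_tsupport (by fun_prop) hsupp fun x hx => by simp [hz' x hx]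
  set U := ⋃ k ∈ S, Q k with hU
  have hUm : MeasurableSet U := Finset.measurableSet_biUnion _ fun k _ => hQm k
  have hUK' : U ⊆ K' := Set.iUnion₂_subset hQK'
  have hB : ∫ x, w x * u x ^ 2 = ∫ x in U, w x * u x ^ 2 :=
    (setIntegral_eq_integral_of_forall_compl_eq_zero fun x hx => by
      rw [hwK x fun h => hx (hKQ h), zero_mul]).symm
  have hP : ∫ x in U, u x ^ 2 ≤ 2 ^ n * δ ^ 2 * ∫ x in U, ‖fderiv ℝ u x‖ ^ 2 := by
    rw [hU, integral_biUnion_finset S (fun k _ => hQm k) (hQd.set_pairwise _)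
      fun k _ => i3.integrableOn, integral_biUnion_finset S (fun k _ => hQm k)
      (hQd.set_pairwise _) fun k _ => i4.integrableOn, Finset.mul_sum]
    refine Finset.sum_le_sum fun k hk => ?_
    simpa using poincare_convex volume (hQm k) (hQc k) (hQδ k) hu hsupp (hmean k hk)
  have hlow : -(C * ∫ x in U, u x ^ 2) ≤ ∫ x in U, w x * u x ^ 2 := by
    rw [← neg_mul, ← integral_const_mul]
    refine setIntegral_mono_on (i3.const_mul _).integrableOn i2.integrableOn hUm fun x hx => ?_
    have := (abs_le.1 (hC x (hUK' hx))).1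
    gcongr
  have hup : c * ∫ x in U, ‖fderiv ℝ u x‖ ^ 2 ≤ ∫ x, φ x ^ 2 * ‖fderiv ℝ u x‖ ^ 2 := by
    rw [← integral_const_mul]
    refine le_trans (setIntegral_mono_on (i4.const_mul _).integrableOn i1.integrableOn hUm
      fun x hx => ?_) (setIntegral_le_integral i1 (Filter.Eventually.of_forall fun x => ?_))
    · have := hc x (hUK' hx)
      gcongr
    · positivity
  have hD0 : 0 ≤ ∫ x in U, ‖fderiv ℝ u x‖ ^ 2 := integral_nonneg fun x => by positivity
  have hA : ∫ x, φ x ^ 2 * ‖fderiv ℝ u x‖ ^ 2 ≤ 0 := by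
    rw [integral_add i1 i2, hB] at hE
    have h1 := mul_le_mul_of_nonneg_left hP hC0
    have h2 := mul_le_mul_of_nonneg_right hδ hD0
    nlinarith
  have hgrad : ∀ x, fderiv ℝ u x = 0 := by
    intro x
    by_contra hx
    have hpos := Continuous.integral_pos_of_hasCompactSupport_nonneg_nonzero (μ := volume)
      (f := fun x => φ x ^ 2 * ‖fderiv ℝ u x‖ ^ 2) (x := x) (by fun_prop)
      (HasCompactSupport.intro hsupp.isCompact fun y hy => by simp [hz' y hy])
      (fun y => by positivity)
      (mul_ne_zero (pow_ne_zero _ (hφ0 x).ne') (pow_ne_zero _ (norm_ne_zero_iff.2 hx)))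
    exact absurd hpos (not_lt.2 hA)
  have hconst := is_const_of_fderiv_eq_zero (𝕜 := ℝ) (hu.differentiable one_ne_zero) hgrad
  have : Nonempty (Fin n) := ⟨⟨0, hn⟩⟩
  -- a nontrivial Euclidean space is not compact, so `u` vanishes somewhere
  obtain ⟨x₀, hx₀⟩ : ∃ x, x ∉ tsupport u := by
    by_contra! hall
    exact noncompact_univ (EuclideanSpace ℝ (Fin n))
      (by rw [← Set.eq_univ_of_forall hall]; exact hsupp.isCompact)
  funext x
  rw [hconst x x₀, hz x₀ hx₀, Pi.zero_apply]

theorem stmt_0 (n : ℕ) (hn : 1 ≤ n) (V : EuclideanSpace ℝ (Fin n) → ℝ)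
    (hV : ContDiff ℝ (⊤ : ℕ∞) V)
    (K : Set (EuclideanSpace ℝ (Fin n))) (hK : IsCompact K)
    (φ : EuclideanSpace ℝ (Fin n) → ℝ) (hφ : ContDiff ℝ (⊤ : ℕ∞) φ)
    (hφpos : ∀ x, 0 < φ x)
    (hsol : ∀ x ∉ K, euclideanLaplacian φ x = V x * φ x) :
    ∃ N : ℕ, ∀ F : Submodule ℝ (EuclideanSpace ℝ (Fin n) → ℝ),
      (∀ f ∈ F, ContDiff ℝ (⊤ : ℕ∞) f ∧ HasCompactSupport f) →
      (∀ f ∈ F, (∫ x, (‖gradient f x‖ ^ 2 + V x * f x ^ 2)) ≤ 0) →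
      Module.rank ℝ F ≤ N := by
  have hφc : Continuous φ := hφ.continuous
  have hVc : Continuous V := hV.continuous
  set w : EuclideanSpace ℝ (Fin n) → ℝ :=
    fun x => V x * φ x ^ 2 - φ x * euclideanLaplacian φ x with hw
  have hwc : Continuous w := by
    have := continuous_euclideanLaplacian hφ
    fun_prop
  have hwK : ∀ x ∉ K, w x = 0 := fun x hx => by
    simp only [hw, hsol x hx]
    ring
  have hK' : IsCompact (Metric.cthickening 1 K) := hK.cthickening
  obtain ⟨c, hc0, hc⟩ := hK'.exists_forall_le' (f := fun x => φ x ^ 2) (a := 0)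
    (by fun_prop) fun x _ => pow_pos (hφpos x) 2
  obtain ⟨C₀, hC₀⟩ := hK'.exists_bound_of_continuousOn hwc.continuousOn
  set C := max C₀ 0 with hCdef
  have hC0 : 0 ≤ C := le_max_right _ _
  have hC : ∀ x ∈ Metric.cthickening 1 K, |w x| ≤ C := fun x hx =>
    (hC₀ x hx).trans (le_max_left _ _)
  -- `δ ≤ 1` keeps the cubes inside the thickening; the second bound gives `C 2ⁿ δ² ≤ c / 2`
  set δ : ℝ := min 1 (c / (2 * (C + 1) * 2 ^ n)) with hδdef
  have hδ0 : 0 < δ := lt_min one_pos (by positivity)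
  have hδ1 : δ ≤ 1 := min_le_left _ _
  have hδ : C * (2 ^ n * δ ^ 2) ≤ c / 2 := by
    have h1 : δ * (2 * (C + 1) * 2 ^ n) ≤ c := (le_div_iff₀ (by positivity)).1 (min_le_right _ _)
    calc C * (2 ^ n * δ ^ 2) ≤ (C + 1) * (2 ^ n * δ) := by
          gcongr
          · linarith
          · nlinarith
      _ ≤ c / 2 := by linarith
  obtain ⟨S, Q, hQm, hQc, hQd, hQδ, hKQ, hQK⟩ := exists_grid hK hδ0
  have hQK' : ∀ k ∈ S, Q k ⊆ Metric.cthickening 1 K := by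
    intro k hk x hx
    obtain ⟨y, hyQ, hyK⟩ := hQK k hk
    refine Metric.mem_cthickening_of_dist_le x y 1 K hyK ?_
    rw [dist_eq_norm]
    exact (hQδ k x hx y hyQ).trans hδ1
  refine ⟨S.card, fun F hF hE => ?_⟩
  have hdiv : ∀ f ∈ F, Continuous (fun x => f x / φ x) := fun f hf =>
    (hF f hf).1.continuous.div hφc fun x => (hφpos x).ne'
  have hdivs : ∀ f ∈ F, HasCompactSupport (fun x => f x / φ x) := fun f hf =>
    HasCompactSupport.intro (hF f hf).2.isCompact fun x hx => by
      simp [image_eq_zero_of_notMem_tsupport hx]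
  have hdivi : ∀ f ∈ F, Integrable (fun x => f x / φ x) := fun f hf =>
    (hdiv f hf).integrable_of_hasCompactSupport (hdivs f hf)
  let T : F →ₗ[ℝ] (S → ℝ) :=
    { toFun := fun f k => ∫ x in Q k, (f : EuclideanSpace ℝ (Fin n) → ℝ) x / φ x
      map_add' := fun f g => by
        funext k
        simp only [Submodule.coe_add, Pi.add_apply, add_div]
        exact integral_add (hdivi f f.2).restrict (hdivi g g.2).restrict
      map_smul' := fun a f => by
        funext k
        simp only [Submodule.coe_smul, Pi.smul_apply, smul_eq_mul, mul_div_assoc,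
          RingHom.id_apply]
        exact integral_const_mul _ _ }
  have hT : Function.Injective T := by
    rw [injective_iff_map_eq_zero]
    rintro ⟨f, hf⟩ hTf
    set u : EuclideanSpace ℝ (Fin n) → ℝ := fun x => f x / φ x with hu
    have huC : ContDiff ℝ (⊤ : ℕ∞) u := (hF f hf).1.div hφ fun x => (hφpos x).ne'
    have hfu : f = fun x => φ x * u x := by
      funext x
      simp only [hu]
      rw [mul_div_cancel₀ _ (hφpos x).ne']
    have hEf := hE f hf
    rw [hfu, energy_mul hVc hφ huC (hdivs f hf)] at hEf
    have hu0 : u = 0 := eq_zero_of_energy_nonpos hn hφc hφpos hwc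
      (huC.of_le (by exact_mod_cast le_top)) (hdivs f hf) hwK hC0 hc hC hδ S hQm hQc hQd hQδ hKQ hQK'
      (fun k hk => congrFun hTf ⟨k, hk⟩) hEf
    ext x
    simp [hfu, hu0]
  calc Module.rank ℝ F ≤ Module.rank ℝ (S → ℝ) := LinearMap.rank_le_of_injective T hT
    _ = S.card := by simp
end

section
/- Let n ≥ 1 and let V : ℝⁿ → ℝ be a smooth function. Assume the Schrödinger operator −Δ + V is bounded from below in the quadratic-form sense: there exists c ≥ 0 such that ∫_{ℝⁿ}(‖∇f‖² + V·f²) ≥ −c·∫_{ℝⁿ} f² for all f ∈ C_c^∞(ℝⁿ). Assume it has finite Morse index: there exists N ∈ ℕ such that every subspace F of C_c^∞(ℝⁿ) on which ∫_{ℝⁿ}(‖∇f‖² + V·f²) < 0 for every nonzero f ∈ F has dimension at most N. Then there exist a compact set K ⊆ ℝⁿ and a smooth function φ : ℝⁿ → ℝ with φ(x) > 0 for all x ∈ ℝⁿ and Δφ(x) = V(x)·φ(x) for all x ∈ ℝⁿ \ K. -/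
/-!
A test function on which the form `∫ |∇f|² + V f²` is negative can be sought outside any ball. If
one could always be found, induction would give infinitely many with pairwise disjoint supports;
these span negative definite spaces of every dimension, which contradicts finite Morse index. So
the form is nonnegative on test functions supported in `{R < ‖x‖}` for some `R`
(`nonneg_outside_ball`).

Let `U` be a connected component of that region. For `ε > 0` and a bump `F ≥ 0` supported in `U`,
the functional `f ↦ ∫ |∇f|² + (V + ε) f² - 2 F f` is bounded below on test functions, and a
minimising sequence converges in `L²` to a distributional solution of `-Δu + (V + ε) u = F`.
Replacing `f` by a smoothed `|f|` almost does not increase the functional, so `u ≥ 0`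
(`exists_min_seq`, `exists_weakSol`). With `ε → 0` and bumps leaving every compact subset of `U`,
normalising these solutions at a fixed point gives a family with a positive limit solving
`Δv = V v` in `U` (`exists_pos_weakSol`), once compactness is known.

The local estimates do not use Sobolev spaces. They come from two radial kernels supported in the
ball of radius `t`, related by `∂_t ρ_t = t Δη_t` and `2 η_t ≤ ρ_t`. The first relation turns the
weak equation into a formula for the `t`-derivative of the mean of `u` against `ρ_t`, and the second
bounds the potential term in it by the mean itself. If `|W| ≤ B` on the ball, the means times
`exp (-B t² / 4)` are decreasing, and, where the source vanishes, the means times `exp (B t² / 4)`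
are increasing (`antitone_mean`, `monotone_mean`). The resulting mean value inequalities
(`Sol.mean_le`, `Sol.le_mean`) yield the Harnack inequality `Sol.harnack`, the equicontinuity of
locally bounded families `Sol.equicontinuous` and the strong maximum principle `Sol.pos`. The limit
is then taken along an ultrafilter.

Regularity rests on the same formula. Integrating it in `t` expresses a continuous solution as a
smooth mean minus an integral operator applied to `V v` (`mean_sub_eq_gain`), and that operator maps
`C^k` to `C^(k+1)` (`contDiff_gain`), so bootstrapping makes `v` smooth and a classical solution
(`contDiffAt_weakSol`, `lap_eq_of_isWeakSol`). The solutions on the components form one positive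
solution on `{R < ‖x‖}` (`exists_pos_solution`), and a cutoff replaces it by the constant `1` on a
smaller ball (`exists_extension`).
-/

open MeasureTheory

namespace FiniteMorse

open Filter Topology Set
open scoped Convolution

/-- Euclidean space `ℝⁿ`. -/
abbrev Eu (n : ℕ) := EuclideanSpace ℝ (Fin n)

variable {n : ℕ}

/-! ### Test functions and the quadratic form -/

/-- The `i`-th partial derivative. -/
noncomputable def pd (i : Fin n) (f : Eu n → ℝ) (x : Eu n) : ℝ :=
  fderiv ℝ f x (EuclideanSpace.single i 1)

lemma lap_eq (f : Eu n → ℝ) (x : Eu n) :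
    euclideanLaplacian f x = ∑ i, pd i (pd i f) x := rfl

lemma grad_sq (f : Eu n → ℝ) (x : Eu n) : ‖gradient f x‖ ^ 2 = ∑ i, pd i f x ^ 2 := by
  rw [EuclideanSpace.norm_sq_eq]
  refine Finset.sum_congr rfl fun i _ => ?_
  have h : pd i f x = inner ℝ (gradient f x) (EuclideanSpace.single i (1 : ℝ)) := by
    unfold pd gradient
    rw [InnerProductSpace.toDual_symm_apply]
  rw [h, EuclideanSpace.inner_single_right]
  simp

/-- Smooth functions with compact support in `U`. -/
def TestFn (U : Set (Eu n)) : Submodule ℝ (Eu n → ℝ) where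
  carrier := {f | ContDiff ℝ (⊤ : ℕ∞) f ∧ HasCompactSupport f ∧ tsupport f ⊆ U}
  add_mem' := by
    rintro f g ⟨hf, hf', hf''⟩ ⟨hg, hg', hg''⟩
    refine ⟨hf.add hg, hf'.add hg', ?_⟩
    exact (tsupport_add f g).trans (union_subset hf'' hg'')
  zero_mem' := by
    refine ⟨contDiff_const, HasCompactSupport.zero, ?_⟩
    simp [tsupport]
  smul_mem' := by
    rintro c f ⟨hf, hf', hf''⟩
    refine ⟨contDiff_const.smul hf, hf'.smul_left (f := fun _ => c), ?_⟩
    exact (tsupport_smul_subset_right (fun _ => c) f).trans hf''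

lemma TestFn.mono {U U' : Set (Eu n)} (h : U ⊆ U') {f : Eu n → ℝ} (hf : f ∈ TestFn U) :
    f ∈ TestFn U' := ⟨hf.1, hf.2.1, hf.2.2.trans h⟩

lemma contDiff_pd {f : Eu n → ℝ} (hf : ContDiff ℝ (⊤ : ℕ∞) f) (i : Fin n) :
    ContDiff ℝ (⊤ : ℕ∞) (pd i f) :=
  (hf.fderiv_right (m := (⊤ : ℕ∞)) (by simp)).clm_apply contDiff_const

lemma hasCompactSupport_pd {f : Eu n → ℝ} (hf : HasCompactSupport f) (i : Fin n) :
    HasCompactSupport (pd i f) := hf.fderiv_apply ℝ _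

lemma tsupport_pd (f : Eu n → ℝ) (i : Fin n) : tsupport (pd i f) ⊆ tsupport f :=
  tsupport_fderiv_apply_subset ℝ _

lemma pd_mem {U : Set (Eu n)} {f : Eu n → ℝ} (hf : f ∈ TestFn U) (i : Fin n) :
    pd i f ∈ TestFn U :=
  ⟨contDiff_pd hf.1 i, hasCompactSupport_pd hf.2.1 i, (tsupport_pd f i).trans hf.2.2⟩

lemma lap_mem {U : Set (Eu n)} {f : Eu n → ℝ} (hf : f ∈ TestFn U) :
    euclideanLaplacian f ∈ TestFn U := by
  have : euclideanLaplacian f = ∑ i, pd i (pd i f) := by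
    ext x; simp [lap_eq]
  rw [this]
  exact Submodule.sum_mem _ fun i _ => pd_mem (pd_mem hf i) i

lemma TestFn.continuous {U : Set (Eu n)} {f : Eu n → ℝ} (hf : f ∈ TestFn U) : Continuous f :=
  hf.1.continuous

lemma TestFn.integrable {U : Set (Eu n)} {f : Eu n → ℝ} (hf : f ∈ TestFn U) :
    Integrable f := hf.1.continuous.integrable_of_hasCompactSupport hf.2.1

lemma pd_add {f g : Eu n → ℝ} (hf : ContDiff ℝ (⊤ : ℕ∞) f) (hg : ContDiff ℝ (⊤ : ℕ∞) g)
    (i : Fin n) (x : Eu n) : pd i (f + g) x = pd i f x + pd i g x := by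
  unfold pd
  rw [fderiv_add (hf.differentiable (by simp) x) (hg.differentiable (by simp) x)]
  rfl

lemma pd_smul {f : Eu n → ℝ} (hf : ContDiff ℝ (⊤ : ℕ∞) f) (c : ℝ)
    (i : Fin n) (x : Eu n) : pd i (c • f) x = c * pd i f x := by
  unfold pd
  rw [fderiv_const_smul (hf.differentiable (by simp) x)]
  rfl

lemma integral_pd_mul {f g : Eu n → ℝ} (hf : ContDiff ℝ (⊤ : ℕ∞) f)
    (hg : ContDiff ℝ (⊤ : ℕ∞) g) (hgs : HasCompactSupport g) (i : Fin n) :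
    ∫ x, f x * pd i g x = - ∫ x, pd i f x * g x := by
  unfold pd
  refine integral_mul_fderiv_eq_neg_fderiv_mul_of_integrable ?_ ?_ ?_
    (fun x _ => hf.differentiable (by simp) x) (fun x _ => hg.differentiable (by simp) x)
  · exact (((contDiff_pd hf i).continuous).mul hg.continuous).integrable_of_hasCompactSupport
      hgs.mul_left
  · exact ((hf.continuous).mul (contDiff_pd hg i).continuous).integrable_of_hasCompactSupport
      (hasCompactSupport_pd hgs i).mul_left
  · exact (hf.continuous.mul hg.continuous).integrable_of_hasCompactSupport hgs.mul_left

/-- Green's second identity. -/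
lemma integral_mul_lap {f g : Eu n → ℝ} (hf : ContDiff ℝ (⊤ : ℕ∞) f)
    (hg : ContDiff ℝ (⊤ : ℕ∞) g) (hgs : HasCompactSupport g) :
    ∫ x, f x * euclideanLaplacian g x = ∫ x, euclideanLaplacian f x * g x := by
  have h1 : ∀ i : Fin n, Integrable (fun x => f x * pd i (pd i g) x) := fun i =>
    ((hf.continuous).mul (contDiff_pd (contDiff_pd hg i) i).continuous).integrable_of_hasCompactSupport
      (hasCompactSupport_pd (hasCompactSupport_pd hgs i) i).mul_left
  have h2 : ∀ i : Fin n, Integrable (fun x => pd i (pd i f) x * g x) := fun i =>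
    (((contDiff_pd (contDiff_pd hf i) i).continuous).mul hg.continuous).integrable_of_hasCompactSupport
      hgs.mul_left
  simp only [lap_eq, Finset.mul_sum, Finset.sum_mul]
  rw [integral_finsetSum _ fun i _ => h1 i, integral_finsetSum _ fun i _ => h2 i]
  refine Finset.sum_congr rfl fun i _ => ?_
  rw [integral_pd_mul hf (contDiff_pd hg i) (hasCompactSupport_pd hgs i),
    integral_pd_mul (contDiff_pd hf i) hg hgs, neg_neg]

/-- The bilinear form `∫ ⟨∇f, ∇g⟩ + W f g` of the Schrödinger operator `-Δ + W`. -/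
noncomputable def qf (W f g : Eu n → ℝ) : ℝ := ∫ x, (∑ i, pd i f x * pd i g x + W x * (f x * g x))

section qf
variable {U : Set (Eu n)} {W : Eu n → ℝ}

lemma qf_integrable (hW : Continuous W) {f g : Eu n → ℝ} (hf : f ∈ TestFn U) (hg : g ∈ TestFn U) :
    Integrable (fun x => ∑ i, pd i f x * pd i g x + W x * (f x * g x)) := by
  refine Integrable.add (integrable_finsetSum _ fun i _ => ?_) ?_
  · exact ((pd_mem hf i).1.continuous.mul (pd_mem hg i).1.continuous).integrable_of_hasCompactSupport
      (pd_mem hg i).2.1.mul_left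
  · exact (hW.mul (hf.1.continuous.mul hg.1.continuous)).integrable_of_hasCompactSupport
      (hg.2.1.mul_left).mul_left

/-- The form `qf W` as a bilinear form on test functions. -/
noncomputable def qfB (U : Set (Eu n)) (W : Eu n → ℝ) (hW : Continuous W) :
    TestFn U →ₗ[ℝ] TestFn U →ₗ[ℝ] ℝ :=
  LinearMap.mk₂ ℝ (fun f g => qf W f g)
    (by
      intro f f' g
      simp only [qf]
      rw [← integral_add (qf_integrable hW f.2 g.2) (qf_integrable hW f'.2 g.2)]
      congr 1; ext x
      simp only [Submodule.coe_add, pd_add f.2.1 f'.2.1, add_mul, Finset.sum_add_distrib, Pi.add_apply]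
      ring)
    (by
      intro c f g
      simp only [qf, smul_eq_mul]
      rw [← integral_const_mul]
      congr 1; ext x
      simp only [Submodule.coe_smul, pd_smul f.2.1, Pi.smul_apply, smul_eq_mul, mul_assoc, ← Finset.mul_sum]
      ring)
    (by
      intro f g g'
      simp only [qf]
      rw [← integral_add (qf_integrable hW f.2 g.2) (qf_integrable hW f.2 g'.2)]
      congr 1; ext x
      simp only [Submodule.coe_add, pd_add g.2.1 g'.2.1, mul_add, Finset.sum_add_distrib, Pi.add_apply]
      ring)
    (by
      intro c f g
      simp only [qf, smul_eq_mul]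
      rw [← integral_const_mul]
      congr 1; ext x
      simp only [Submodule.coe_smul, pd_smul g.2.1, Pi.smul_apply, smul_eq_mul]
      rw [mul_add, Finset.mul_sum]
      congr 1
      · exact Finset.sum_congr rfl fun i _ => by ring
      · ring)

lemma qfB_apply (hW : Continuous W) (f g : TestFn U) : qfB U W hW f g = qf W f g := rfl

lemma qf_comm (f g : Eu n → ℝ) : qf W f g = qf W g f := by
  unfold qf
  congr 1; ext x
  simp only [mul_comm]

lemma qf_self (f : Eu n → ℝ) : qf W f f = ∫ x, (‖gradient f x‖ ^ 2 + W x * f x ^ 2) := by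
  simp only [qf, grad_sq]
  simp only [pow_two]

/-- The form `qf` after integration by parts: `-Δ + W` falls on the second argument. -/
lemma qf_eq (hW : Continuous W) {f g : Eu n → ℝ} (hf : f ∈ TestFn U) (hg : g ∈ TestFn U) :
    qf W f g = ∫ x, f x * (W x * g x - euclideanLaplacian g x) := by
  have h1 : ∀ i : Fin n, Integrable (fun x => pd i f x * pd i g x) := fun i =>
    ((pd_mem hf i).1.continuous.mul (pd_mem hg i).1.continuous).integrable_of_hasCompactSupport
      (pd_mem hg i).2.1.mul_left
  have h1' : ∀ i : Fin n, Integrable (fun x => f x * pd i (pd i g) x) := fun i =>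
    (hf.1.continuous.mul (pd_mem (pd_mem hg i) i).1.continuous).integrable_of_hasCompactSupport
      (hf.2.1).mul_right
  have h2 : Integrable (fun x => W x * (f x * g x)) :=
    (hW.mul (hf.1.continuous.mul hg.1.continuous)).integrable_of_hasCompactSupport
      (hg.2.1.mul_left).mul_left
  have h3 : Integrable (fun x => f x * euclideanLaplacian g x) := 
    (hf.1.continuous.mul (lap_mem hg).1.continuous).integrable_of_hasCompactSupport
      (hf.2.1).mul_right
  have e1 : ∀ x, f x * (W x * g x - euclideanLaplacian g x)
      = W x * (f x * g x) - f x * euclideanLaplacian g x := fun x => by ring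
  simp only [e1]
  rw [integral_sub h2 h3]
  unfold qf
  rw [integral_add (integrable_finsetSum _ fun i _ => h1 i) h2,
    integral_finsetSum _ fun i _ => h1 i]
  simp only [lap_eq, Finset.mul_sum]
  rw [integral_finsetSum _ fun i _ => h1' i]
  have : ∀ i : Fin n, ∫ x, f x * pd i (pd i g) x = - ∫ x, pd i f x * pd i g x := fun i =>
    integral_pd_mul hf.1 (pd_mem hg i).1 (pd_mem hg i).2.1 i
  simp only [this, Finset.sum_neg_distrib]
  ring

end qf

/-- Minimizing sequences of the quadratic functional `B x x - 2 ℓ x` converge to a solution of the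
Euler–Lagrange equation, and can be chosen inside any class `P` which suffices for computing the
infimum. -/
lemma exists_min_seq {X H : Type*} [AddCommGroup X] [Module ℝ X] [NormedAddCommGroup H]
    [InnerProductSpace ℝ H] [CompleteSpace H] (B : X →ₗ[ℝ] X →ₗ[ℝ] ℝ)
    (hsymm : ∀ x y, B x y = B y x) (ι : X →ₗ[ℝ] H) (ε : ℝ) (hε : 0 < ε)
    (hB : ∀ x, ε * ‖ι x‖ ^ 2 ≤ B x x) (ℓ : X →ₗ[ℝ] ℝ) (b : H)
    (hℓ : ∀ x, ℓ x = inner ℝ b (ι x)) (P : X → Prop)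
    (hP : ∀ x, ∀ δ > 0, ∃ p, P p ∧ B p p - 2 * ℓ p ≤ B x x - 2 * ℓ x + δ) :
    ∃ (p : ℕ → X) (u : H), (∀ k, P (p k)) ∧ Tendsto (fun k => ι (p k)) atTop (𝓝 u) ∧
      ∀ x, Tendsto (fun k => B (p k) x) atTop (𝓝 (ℓ x)) := by
  set J : X → ℝ := fun x => B x x - 2 * ℓ x with hJ
  have hbdd : BddBelow (range J) := by
    refine ⟨-(‖b‖ ^ 2 / ε), ?_⟩
    rintro _ ⟨x, rfl⟩
    have h1 := hB x
    have h2 : ℓ x ≤ ‖b‖ * ‖ι x‖ := by rw [hℓ]; exact real_inner_le_norm _ _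
    have h3 : 0 ≤ (ε * ‖ι x‖ - ‖b‖) ^ 2 / ε := by positivity
    have h4 : (ε * ‖ι x‖ - ‖b‖) ^ 2 / ε = ε * ‖ι x‖ ^ 2 - 2 * (‖b‖ * ‖ι x‖) + ‖b‖ ^ 2 / ε := by
      field_simp; ring
    simp only [hJ]; linarith
  set m := ⨅ x, J x with hm
  have hmle : ∀ x, m ≤ J x := fun x => ciInf_le hbdd x
  have hex : ∀ δ > 0, ∃ p, P p ∧ J p ≤ m + δ := by
    intro δ hδ
    obtain ⟨x, hx⟩ := exists_lt_of_ciInf_lt (show (⨅ x, J x) < m + δ / 2 by linarith)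
    obtain ⟨p, hp, hp'⟩ := hP x (δ / 2) (by linarith)
    exact ⟨p, hp, by simp only [hJ] at hx ⊢; linarith⟩
  choose p hpP hpJ using fun k : ℕ => hex (1 / ((k : ℝ) + 1)) (by positivity)
  set d : ℕ → ℝ := fun k => 1 / ((k : ℝ) + 1) with hd
  have hd0 : Tendsto d atTop (𝓝 0) := tendsto_one_div_add_atTop_nhds_zero_nat
  have hdpos : ∀ k, 0 < d k := fun k => by simp only [hd]; positivity
  -- Parallelogram identity: near-minimisers are close, by minimality tested at their midpoint.
  have hpar : ∀ k l, ε * ‖ι (p k) - ι (p l)‖ ^ 2 ≤ 2 * (d k + d l) := by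
    intro k l
    have h1 := hB (p k - p l)
    rw [map_sub] at h1
    have h2 := hmle ((1 / 2 : ℝ) • (p k + p l))
    simp only [hJ, map_smul, map_add, LinearMap.add_apply, LinearMap.smul_apply, smul_eq_mul,
      map_sub, LinearMap.sub_apply] at h1 h2
    have h3 := hpJ k
    have h4 := hpJ l
    simp only [hJ] at h3 h4
    have h5 := hsymm (p k) (p l)
    simp only [hd] at *
    linarith
  have hcauchy : CauchySeq (fun k => ι (p k)) := by
    rw [Metric.cauchySeq_iff']
    intro r hr
    have : ∀ᶠ k in atTop, d k < ε * r ^ 2 / 4 :=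
      hd0.eventually_lt_const (by positivity)
    obtain ⟨K, hK⟩ := eventually_atTop.1 this
    refine ⟨K, fun k hk => ?_⟩
    have h1 := hpar k K
    have h2 := hK k hk
    have h3 := hK K le_rfl
    have : ‖ι (p k) - ι (p K)‖ ^ 2 < r ^ 2 := by
      have : ε * ‖ι (p k) - ι (p K)‖ ^ 2 < ε * r ^ 2 := by linarith
      exact lt_of_mul_lt_mul_left this hε.le
    rw [dist_eq_norm]
    exact lt_of_pow_lt_pow_left₀ 2 hr.le this
  obtain ⟨u, hu⟩ := cauchySeq_tendsto_of_complete hcauchy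
  refine ⟨p, u, hpP, hu, fun x => ?_⟩
  -- Minimality tested along `p k + s • x` at `s = -a / (B x x + 1)`; the optimal step `-a / B x x`
  -- would be undefined when `B x x = 0`.
  have hvar : ∀ k, (B (p k) x - ℓ x) ^ 2 ≤ d k * (B x x + 1) := by
    intro k
    set a := B (p k) x - ℓ x with ha
    have hq : 0 ≤ B x x := le_trans (by positivity) (hB x)
    have h1 := hmle (p k + (-(a / (B x x + 1))) • x)
    have h3 := hpJ k
    have h5 := hsymm (p k) x
    simp only [hJ, map_smul, map_add, LinearMap.add_apply, LinearMap.smul_apply, smul_eq_mul] at h1 h3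
    have h6 : B (p k) x = a + ℓ x := by rw [ha]; ring
    rw [← h5, h6] at h1
    have h7 : -(d k) ≤ -2 * (a ^ 2 / (B x x + 1)) + a ^ 2 / (B x x + 1) * (B x x / (B x x + 1)) := by
      have : -2 * (a ^ 2 / (B x x + 1)) + a ^ 2 / (B x x + 1) * (B x x / (B x x + 1))
        = 2 * (-(a / (B x x + 1)) * a) +
          -(a / (B x x + 1)) * (-(a / (B x x + 1)) * B x x) := by
        field_simp
      rw [this]
      simp only [hd]
      linarith
    have h8 : B x x / (B x x + 1) ≤ 1 := by rw [div_le_one (by linarith)]; linarith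
    have h9 : 0 ≤ a ^ 2 / (B x x + 1) := by positivity
    have h10 : a ^ 2 / (B x x + 1) ≤ d k := by nlinarith
    rwa [div_le_iff₀ (by linarith)] at h10
  have hlim : Tendsto (fun k => (B (p k) x - ℓ x) ^ 2) atTop (𝓝 0) := by
    refine squeeze_zero (fun k => sq_nonneg _) hvar ?_
    simpa using hd0.mul_const (B x x + 1)
  have h2 : Tendsto (fun k => |B (p k) x - ℓ x|) atTop (𝓝 0) := by
    have := hlim.sqrt
    simpa [Real.sqrt_sq_eq_abs] using this
  rw [tendsto_iff_norm_sub_tendsto_zero]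
  simpa [Real.norm_eq_abs] using h2

/-! ### Nonnegativity outside a ball and weak solutions with a source -/

/-- Test functions with disjoint supports are orthogonal for `qf`. -/
lemma qf_disjoint (W : Eu n → ℝ) {f g : Eu n → ℝ} (h : Disjoint (tsupport f) (tsupport g)) :
    qf W f g = 0 := by
  unfold qf
  refine integral_eq_zero_of_ae (Eventually.of_forall fun x => ?_)
  by_cases hx : x ∈ tsupport f
  · have hx' : x ∉ tsupport g := fun h' => (disjoint_left.1 h) hx h'
    have h1 : g x = 0 := image_eq_zero_of_notMem_tsupport hx'
    have h2 : ∀ i, pd i g x = 0 := fun i =>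
      image_eq_zero_of_notMem_tsupport fun h' => hx' (tsupport_pd g i h')
    simp [h1, h2]
  · have h1 : f x = 0 := image_eq_zero_of_notMem_tsupport hx
    have h2 : ∀ i, pd i f x = 0 := fun i =>
      image_eq_zero_of_notMem_tsupport fun h' => hx (tsupport_pd f i h')
    simp [h1, h2]

/-- Finite Morse index forces the form to be nonnegative outside a ball: otherwise infinitely many
negative directions with disjoint supports could be found. -/
lemma nonneg_outside_ball (V : Eu n → ℝ) (hV : Continuous V) (N : ℕ)
    (hMorse : ∀ F : Submodule ℝ (EuclideanSpace ℝ (Fin n) → ℝ),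
      (∀ f ∈ F, ContDiff ℝ (⊤ : ℕ∞) f ∧ HasCompactSupport f) →
      (∀ f ∈ F, f ≠ 0 → (∫ x, (‖gradient f x‖ ^ 2 + V x * f x ^ 2)) < 0) →
      Module.rank ℝ F ≤ N) :
    ∃ R : ℝ, 0 ≤ R ∧ ∀ f ∈ TestFn {x : Eu n | R < ‖x‖}, 0 ≤ qf V f f := by
  by_contra! hcon
  let P : TestFn (univ : Set (Eu n)) → Prop := fun f => qf V f f < 0
  let r : TestFn (univ : Set (Eu n)) → TestFn (univ : Set (Eu n)) → Prop := fun f g =>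
    Disjoint (tsupport (f : Eu n → ℝ)) (tsupport (g : Eu n → ℝ))
  have : Std.Symm r := ⟨fun f g h => Disjoint.symm h⟩
  -- Each new function is supported outside a ball containing the supports of the earlier ones.
  obtain ⟨f, hfP, hfr⟩ := exists_seq_of_forall_finset_exists' P r (by
    intro s _
    have hK : IsCompact (⋃ g ∈ s, tsupport ((g : TestFn (univ : Set (Eu n))) : Eu n → ℝ)) :=
      s.isCompact_biUnion fun g _ => g.2.2.1
    obtain ⟨R, hR⟩ := hK.isBounded.exists_norm_le
    obtain ⟨g, hg, hg'⟩ := hcon (max R 0) (le_max_right _ _)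
    refine ⟨⟨g, TestFn.mono (subset_univ _) hg⟩, hg', fun x hx => ?_⟩
    refine disjoint_left.2 fun y hy hy' => ?_
    have h1 := hR y (mem_biUnion hx hy)
    have h2 : max R 0 < ‖y‖ := hg.2.2 hy'
    exact absurd (lt_of_le_of_lt (le_max_left _ _) h2) (not_lt.2 h1))
  -- By orthogonality the form is diagonal, hence negative definite, on the span.
  have hsum : ∀ c : Fin (N + 1) → ℝ,
      qfB univ V hV (∑ i, c i • f i) (∑ i, c i • f i) = ∑ i, c i ^ 2 * qf V (f i) (f i) := by
    intro c
    simp only [map_sum, LinearMap.sum_apply, map_smul, LinearMap.smul_apply, smul_eq_mul]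
    refine Finset.sum_congr rfl fun i _ => ?_
    rw [Finset.sum_eq_single i]
    · rw [qfB_apply]; ring
    · intro j _ hji
      rw [qfB_apply, qf_disjoint V (hfr (fun h => hji (Fin.ext h))), mul_zero]
    · simp
  have hneg : ∀ c : Fin (N + 1) → ℝ, c ≠ 0 →
      qfB univ V hV (∑ i, c i • f i) (∑ i, c i • f i) < 0 := by
    intro c hc
    rw [hsum]
    obtain ⟨i, hi⟩ := Function.ne_iff.1 hc
    refine Finset.sum_neg' (fun j _ => ?_) ⟨i, Finset.mem_univ _, ?_⟩
    · exact mul_nonpos_of_nonneg_of_nonpos (sq_nonneg _) (hfP j).le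
    · exact mul_neg_of_pos_of_neg (sq_pos_of_ne_zero hi) (hfP i)
  have hli : LinearIndependent ℝ (fun i : Fin (N + 1) => ((f i : TestFn _) : Eu n → ℝ)) := by
    rw [Fintype.linearIndependent_iff]
    intro c hc
    by_contra hne
    have hc0 : c ≠ 0 := fun h => hne fun i => by simp [h]
    have h1 := hneg c hc0
    have h2 : (∑ i, c i • f i) = 0 := by
      apply Subtype.ext
      simpa using hc
    rw [h2] at h1
    simp at h1
  have hspan : ∀ g ∈ Submodule.span ℝ (range fun i : Fin (N + 1) => ((f i : TestFn _) : Eu n → ℝ)),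
      ∃ c : Fin (N + 1) → ℝ, g = ((∑ i, c i • f i : TestFn (univ : Set (Eu n))) : Eu n → ℝ) := by
    intro g hg
    obtain ⟨c, hc⟩ := (Submodule.mem_span_range_iff_exists_fun ℝ).1 hg
    exact ⟨c, by simp [← hc]⟩
  have hrank := hMorse (Submodule.span ℝ (range fun i : Fin (N + 1) =>
    ((f i : TestFn _) : Eu n → ℝ)))
    (by
      intro g hg
      obtain ⟨c, rfl⟩ := hspan g hg
      exact ⟨(∑ i, c i • f i : TestFn (univ : Set (Eu n))).2.1,
        (∑ i, c i • f i : TestFn (univ : Set (Eu n))).2.2.1⟩)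
    (by
      intro g hg hg0
      obtain ⟨c, rfl⟩ := hspan g hg
      rw [← qf_self]
      refine hneg c ?_
      rintro rfl
      simp at hg0)
  rw [rank_span hli, Cardinal.mk_range_eq _ hli.injective] at hrank
  simp only [Cardinal.mk_fin] at hrank
  have := Nat.cast_le.1 hrank
  omega

/-- `u` solves `-Δu + W u = F` in `U` in the sense of distributions. -/
def IsWeakSol (W F u : Eu n → ℝ) (U : Set (Eu n)) : Prop :=
  ∀ φ ∈ TestFn U, ∫ x, u x * (W x * φ x - euclideanLaplacian φ x) = ∫ x, F x * φ x

/-- Smooth approximation `√(f² + δ²) - δ` of `|f|`; subtracting `δ` keeps the support compact. -/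
noncomputable def sabs (δ : ℝ) (f : Eu n → ℝ) (x : Eu n) : ℝ := √(f x ^ 2 + δ ^ 2) - δ

lemma sabs_mem {U : Set (Eu n)} {f : Eu n → ℝ} (hf : f ∈ TestFn U) {δ : ℝ} (hδ : 0 < δ) :
    sabs δ f ∈ TestFn U := by
  have hsub : Function.support (sabs δ f) ⊆ Function.support f := by
    intro x hx hx'
    apply hx
    simp [sabs, hx', Real.sqrt_sq hδ.le]
  refine ⟨?_, hf.2.1.mono hsub, (closure_mono hsub).trans hf.2.2⟩
  refine ContDiff.sub (ContDiff.sqrt ?_ fun x => by positivity) contDiff_const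
  exact (hf.1.pow 2).add contDiff_const

lemma sabs_nonneg (f : Eu n → ℝ) {δ : ℝ} (hδ : 0 < δ) (x : Eu n) : 0 ≤ sabs δ f x := by
  unfold sabs
  have : δ ≤ √(f x ^ 2 + δ ^ 2) := Real.le_sqrt_of_sq_le (by nlinarith [sq_nonneg (f x)])
  linarith

lemma sabs_sq (f : Eu n → ℝ) (δ : ℝ) (x : Eu n) :
    sabs δ f x ^ 2 = f x ^ 2 - 2 * δ * sabs δ f x := by
  unfold sabs
  have := Real.sq_sqrt (show 0 ≤ f x ^ 2 + δ ^ 2 by positivity)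
  linear_combination this

lemma sabs_le (f : Eu n → ℝ) {δ : ℝ} (hδ : 0 < δ) (x : Eu n) : sabs δ f x ≤ |f x| := by
  have h0 := sabs_nonneg f hδ x
  have h1 := sabs_sq f δ x
  refine abs_le_of_sq_le_sq' (a := sabs δ f x) (b := |f x|) ?_ (abs_nonneg _) |>.2
  rw [sq_abs]; nlinarith

lemma le_sabs (f : Eu n → ℝ) (δ : ℝ) (x : Eu n) : |f x| - δ ≤ sabs δ f x := by
  unfold sabs
  have : |f x| ≤ √(f x ^ 2 + δ ^ 2) := Real.abs_le_sqrt (by nlinarith [sq_nonneg δ])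
  linarith

/-- Passing to the smoothed absolute value does not increase the gradient. -/
lemma pd_sabs_sq_le {f : Eu n → ℝ} (hf : ContDiff ℝ (⊤ : ℕ∞) f) {δ : ℝ} (hδ : 0 < δ) (i : Fin n)
    (x : Eu n) : pd i (sabs δ f) x ^ 2 ≤ pd i f x ^ 2 := by
  have hpos : 0 < f x ^ 2 + δ ^ 2 := by positivity
  have h1 : HasFDerivAt (sabs δ f)
      ((1 / (2 * √(f x ^ 2 + δ ^ 2))) • ((2 * f x) • fderiv ℝ f x)) x := by
    have h2 := (hf.differentiable (by simp) x).hasFDerivAt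
    have h3 := ((h2.pow 2).add_const (δ ^ 2)).sqrt hpos.ne'
    have h4 := h3.sub_const δ
    have h5 : (2 : ℕ) • f x ^ (2 - 1) = 2 * f x := by simp
    rw [h5] at h4
    exact h4
  unfold pd
  rw [h1.fderiv]
  simp only [_root_.smul_apply, smul_eq_mul]
  set s := √(f x ^ 2 + δ ^ 2) with hs
  have hs0 : 0 < s := Real.sqrt_pos.2 hpos
  have hs2 : s ^ 2 = f x ^ 2 + δ ^ 2 := Real.sq_sqrt hpos.le
  have : 1 / (2 * s) * (2 * f x * fderiv ℝ f x (EuclideanSpace.single i 1))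
      = (f x / s) * fderiv ℝ f x (EuclideanSpace.single i 1) := by field_simp
  rw [this, mul_pow, div_pow, hs2]
  have : f x ^ 2 / (f x ^ 2 + δ ^ 2) ≤ 1 := by rw [div_le_one hpos]; nlinarith
  nlinarith [sq_nonneg (fderiv ℝ f x (EuclideanSpace.single i 1))]

lemma memLp_of_mem {U : Set (Eu n)} {f : Eu n → ℝ} (hf : f ∈ TestFn U) : MemLp f 2 :=
  hf.1.continuous.memLp_of_hasCompactSupport hf.2.1

/-- The inclusion of test functions in `L²`. -/
noncomputable def toL2 (U : Set (Eu n)) : TestFn U →ₗ[ℝ] Lp ℝ 2 (volume : Measure (Eu n)) where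
  toFun f := (memLp_of_mem f.2).toLp f
  map_add' f g := MemLp.toLp_add (memLp_of_mem f.2) (memLp_of_mem g.2)
  map_smul' c f := MemLp.toLp_const_smul c (memLp_of_mem f.2)

lemma inner_toLp {f g : Eu n → ℝ} (hf : MemLp f 2) (hg : MemLp g 2) :
    inner ℝ (hf.toLp f) (hg.toLp g) = ∫ x, g x * f x := by
  rw [L2.inner_def]
  refine integral_congr_ae ?_
  filter_upwards [hf.coeFn_toLp, hg.coeFn_toLp] with x h1 h2
  simp [h1, h2]

/-- If `-Δ + V ≥ 0` on `U`, then `(-Δ + V + ε) u = F` with `F ≥ 0` has a nonnegative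
distributional solution in `L²`. -/
lemma exists_weakSol {U : Set (Eu n)} {V : Eu n → ℝ} (hV : Continuous V)
    (hpos : ∀ f ∈ TestFn U, 0 ≤ qf V f f) {ε : ℝ} (hε : 0 < ε) {F : Eu n → ℝ} (hF : F ∈ TestFn U)
    (hF0 : ∀ x, 0 ≤ F x) :
    ∃ u : Eu n → ℝ, MemLp u 2 ∧ (∀ x, 0 ≤ u x) ∧ IsWeakSol (fun x => V x + ε) F u U := by
  have hW : Continuous (fun x => V x + ε) := hV.add continuous_const
  let ℓ : TestFn U →ₗ[ℝ] ℝ :=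
    { toFun := fun f => ∫ x, F x * f.1 x
      map_add' := by
        intro f g
        rw [← integral_add]
        · simp only [Submodule.coe_add, Pi.add_apply, mul_add]
        · exact (hF.1.continuous.mul f.2.1.continuous).integrable_of_hasCompactSupport hF.2.1.mul_right
        · exact (hF.1.continuous.mul g.2.1.continuous).integrable_of_hasCompactSupport hF.2.1.mul_right
      map_smul' := by
        intro c f
        simp only [Submodule.coe_smul, Pi.smul_apply, smul_eq_mul, RingHom.id_apply]
        rw [← integral_const_mul]
        congr 1; ext x; ring }
  obtain ⟨p, u, hp, hu, hlim⟩ := exists_min_seq (qfB U _ hW) (fun f g => qf_comm _ _) (toL2 U) ε hε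
    (by
      intro f
      have h1 : ‖toL2 U f‖ ^ 2 = ∫ x, f.1 x * f.1 x := by
        rw [← real_inner_self_eq_norm_sq]
        exact inner_toLp (memLp_of_mem f.2) (memLp_of_mem f.2)
      rw [h1, ← integral_const_mul, qfB_apply]
      have h2 := hpos f f.2
      have hi1 : Integrable fun x => ε * (f.1 x * f.1 x) :=
        ((f.2.1.continuous.mul f.2.1.continuous).integrable_of_hasCompactSupport
          f.2.2.1.mul_right).const_mul ε
      have h3 : qf (fun x => V x + ε) f.1 f.1 = qf V f.1 f.1 + ∫ x, ε * (f.1 x * f.1 x) := by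
        unfold qf
        rw [← integral_add (qf_integrable hV f.2 f.2) hi1]
        congr 1; ext x; ring
      rw [h3]; linarith)
    ℓ ((memLp_of_mem hF).toLp F)
    (by
      intro f
      refine Eq.trans ?_ (inner_toLp (memLp_of_mem hF) (memLp_of_mem f.2)).symm
      simp only [ℓ, mul_comm]; rfl)
    (fun f => ∀ x, 0 ≤ f.1 x)
    (by
      intro f δ hδ
      -- The smoothed absolute value `sabs t f` exceeds the energy of `f` by at most `2 t (A + C)`.
      have hi2 : Integrable (fun x => |V x + ε| * |f.1 x|) :=
        (hW.abs.mul f.2.1.continuous.abs).integrable_of_hasCompactSupport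
          (HasCompactSupport.mul_left (f.2.2.1.norm))
      have hi3 : Integrable F := TestFn.integrable hF
      set A := ∫ x, |V x + ε| * |f.1 x| with hA
      set C := ∫ x, F x with hC
      have hA0 : 0 ≤ A := integral_nonneg fun x => by positivity
      have hC0 : 0 ≤ C := integral_nonneg hF0
      set t := δ / (2 * (A + C) + 1) with ht
      have ht0 : 0 < t := by positivity
      refine ⟨⟨sabs t f.1, sabs_mem f.2 ht0⟩, sabs_nonneg _ ht0, ?_⟩
      have hs := sabs_mem f.2 ht0
      have hFf : Integrable fun x => F x * f.1 x :=
        (hF.1.continuous.mul f.2.1.continuous).integrable_of_hasCompactSupport hF.2.1.mul_right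
      have hFs : Integrable fun x => F x * sabs t f.1 x :=
        (hF.1.continuous.mul hs.1.continuous).integrable_of_hasCompactSupport hF.2.1.mul_right
      have e1 : qf (fun x => V x + ε) (sabs t f.1) (sabs t f.1) - 2 * ∫ x, F x * sabs t f.1 x
          ≤ qf (fun x => V x + ε) f.1 f.1 - 2 * (∫ x, F x * f.1 x) + 2 * t * (A + C) := by
        unfold qf
        have j1 := (qf_integrable hW hs hs).sub (hFs.const_mul 2)
        have j2 := (qf_integrable hW f.2 f.2).sub (hFf.const_mul 2)
        have j3 := (hi2.add hi3).const_mul (2 * t)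
        have k1 := integral_sub (qf_integrable hW hs hs) (hFs.const_mul 2)
        have k2 := integral_sub (qf_integrable hW f.2 f.2) (hFf.const_mul 2)
        have k3 := integral_add j2 j3
        have k4 := integral_add hi2 hi3
        simp only [Pi.add_apply, Pi.sub_apply, integral_const_mul] at k1 k2 k3 k4
        rw [hA, hC, ← k4, ← k1, ← k2, ← k3]
        refine integral_mono j1 (j2.add j3) ?_
        intro x
        simp only [← pow_two, sabs_sq, Pi.add_apply, Pi.sub_apply]
        have g1 : ∑ i, pd i (sabs t f.1) x ^ 2 ≤ ∑ i, pd i f.1 x ^ 2 :=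
          Finset.sum_le_sum fun i _ => pd_sabs_sq_le f.2.1 ht0 i x
        have g2 : -(V x + ε) * sabs t f.1 x ≤ |V x + ε| * |f.1 x| := by
          have := sabs_le f.1 ht0 x
          have h0 := sabs_nonneg f.1 ht0 x
          calc -(V x + ε) * sabs t f.1 x ≤ |V x + ε| * sabs t f.1 x :=
                mul_le_mul_of_nonneg_right (neg_le_abs _) h0
            _ ≤ _ := mul_le_mul_of_nonneg_left this (abs_nonneg _)
        have g3 : F x * (f.1 x - t) ≤ F x * sabs t f.1 x :=
          mul_le_mul_of_nonneg_left (by linarith [le_sabs f.1 t x, le_abs_self (f.1 x)]) (hF0 x)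
        nlinarith
      have e2 : 2 * t * (A + C) ≤ δ := by
        have : t * (2 * (A + C) + 1) = δ := by rw [ht]; field_simp
        nlinarith
      simp only [qfB_apply, ℓ, LinearMap.coe_mk, AddHom.coe_mk]
      linarith)
  -- Nonnegativity passes to the `L²` limit because `Lp.negPart` is continuous.
  have hu0 : 0 ≤ᵐ[volume] u := by
    have h1 : Tendsto (fun k => Lp.negPart (toL2 U (p k))) atTop (𝓝 (Lp.negPart u)) :=
      (Lp.continuous_negPart.tendsto u).comp hu
    have h2 : ∀ k, Lp.negPart (toL2 U (p k)) = 0 := by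
      intro k
      apply Lp.ext
      filter_upwards [Lp.coeFn_negPart_eq_max (toL2 U (p k)), (memLp_of_mem (p k).2).coeFn_toLp,
        Lp.coeFn_zero ℝ 2 (volume : Measure (Eu n))] with x h3 h4 h5
      rw [h3, h5]
      have : (toL2 U (p k)) x = (p k).1 x := h4
      rw [this]
      simp [hp k x]
    simp only [h2] at h1
    have h3 : Lp.negPart u = 0 := tendsto_nhds_unique h1 tendsto_const_nhds
    filter_upwards [Lp.coeFn_negPart_eq_max u, Lp.coeFn_zero ℝ 2 (volume : Measure (Eu n))] with x h4 h5
    rw [h3, h5] at h4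
    have : max (-u x) 0 = 0 := h4.symm
    have := max_eq_right_iff.1 this
    simpa using this
  have habs : (fun x => |u x|) =ᵐ[volume] u := by
    filter_upwards [hu0] with x hx
    exact abs_of_nonneg hx
  refine ⟨fun x => |u x|, (memLp_congr_ae habs).2 (Lp.memLp u), fun x => abs_nonneg _, ?_⟩
  intro φ hφ
  have h1 := hlim ⟨φ, hφ⟩
  have hψL : MemLp (fun x => (V x + ε) * φ x - euclideanLaplacian φ x) 2 (volume : Measure (Eu n)) := by
    refine Continuous.memLp_of_hasCompactSupport ?_ ?_
    · exact (hW.mul hφ.1.continuous).sub (lap_mem hφ).1.continuous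
    · exact (hφ.2.1.mul_left).sub (lap_mem hφ).2.1
  have h2 : ∀ k, qfB U _ hW (p k) ⟨φ, hφ⟩ = inner ℝ (hψL.toLp _) (toL2 U (p k)) := by
    intro k
    rw [qfB_apply, qf_eq hW (p k).2 hφ]
    exact (inner_toLp hψL (memLp_of_mem (p k).2)).symm
  simp only [h2] at h1
  have h3 : Tendsto (fun k => inner ℝ (hψL.toLp _) (toL2 U (p k))) atTop
      (𝓝 (inner ℝ (hψL.toLp _) u)) := Tendsto.inner tendsto_const_nhds hu
  have h4 := tendsto_nhds_unique h1 h3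
  have h5 : inner ℝ (hψL.toLp _) u = ∫ x, u x * ((V x + ε) * φ x - euclideanLaplacian φ x) := by
    rw [L2.inner_def]
    refine integral_congr_ae ?_
    filter_upwards [hψL.coeFn_toLp] with x h1
    simp [h1]
  rw [h5] at h4
  calc ∫ x, |u x| * ((V x + ε) * φ x - euclideanLaplacian φ x)
      = ∫ x, u x * ((V x + ε) * φ x - euclideanLaplacian φ x) := by
        refine integral_congr_ae ?_
        filter_upwards [habs] with x hx
        simp only [hx]
    _ = _ := h4.symm

/-! ### Radial kernels -/

/-- The derivative of `expNegInvGlue`. -/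
noncomputable def e1 (x : ℝ) : ℝ := (x⁻¹) ^ 2 * expNegInvGlue x

lemma hasDerivAt_e (x : ℝ) : HasDerivAt expNegInvGlue (e1 x) x := by
  have := expNegInvGlue.hasDerivAt_polynomial_eval_inv_mul 1 x
  simpa [e1] using this

lemma deriv_e : deriv expNegInvGlue = e1 := funext fun x => (hasDerivAt_e x).deriv

lemma contDiff_e : ContDiff ℝ (⊤ : ℕ∞) expNegInvGlue := expNegInvGlue.contDiff

lemma contDiff_e1 : ContDiff ℝ (⊤ : ℕ∞) e1 := by
  rw [← deriv_e]
  exact (contDiff_infty_iff_deriv.1 contDiff_e).2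

/-- The second derivative of `expNegInvGlue`. -/
noncomputable def e2 : ℝ → ℝ := deriv e1

lemma contDiff_e2 : ContDiff ℝ (⊤ : ℕ∞) e2 := (contDiff_infty_iff_deriv.1 contDiff_e1).2

lemma hasDerivAt_e1 (x : ℝ) : HasDerivAt e1 (e2 x) x :=
  (contDiff_e1.differentiable (by simp) x).hasDerivAt

lemma e1_nonneg (x : ℝ) : 0 ≤ e1 x := mul_nonneg (sq_nonneg _) (expNegInvGlue.nonneg x)

lemma e1_of_nonpos {x : ℝ} (hx : x ≤ 0) : e1 x = 0 := by
  simp [e1, expNegInvGlue.zero_of_nonpos hx]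

lemma e2_of_nonpos {x : ℝ} (hx : x ≤ 0) : e2 x = 0 := by
  have h1 : HasDerivWithinAt e1 (e2 x) (Iic x) x := (hasDerivAt_e1 x).hasDerivWithinAt
  have h2 : HasDerivWithinAt e1 0 (Iic x) x :=
    (hasDerivWithinAt_const x (Iic x) (0 : ℝ)).congr
      (fun y hy => e1_of_nonpos (le_trans hy hx)) (e1_of_nonpos hx)
  exact (uniqueDiffWithinAt_Iic x).eq_deriv _ h1 h2

lemma e1_pos {x : ℝ} (hx : 0 < x) : 0 < e1 x :=
  mul_pos (by positivity) (expNegInvGlue.pos_of_pos hx)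

/-- The profile is bounded by its derivative on `(-∞, 1]`, where all arguments of the kernels lie;
this is the source of `two_etaK_le`. -/
lemma e_le_e1 {x : ℝ} (hx : x ≤ 1) : expNegInvGlue x ≤ e1 x := by
  rcases le_or_gt x 0 with h | h
  · rw [e1_of_nonpos h, expNegInvGlue.zero_of_nonpos h]
  · have h1 : 1 ≤ x⁻¹ := (one_le_inv₀ h).2 hx
    have h2 : 1 ≤ x⁻¹ ^ 2 := one_le_pow₀ h1
    unfold e1
    nlinarith [expNegInvGlue.nonneg x]

/-- The radial kernel on `ℝⁿ` with profile `g`, rescaled to the ball of radius `t`. -/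
noncomputable def ker (g : ℝ → ℝ) (t : ℝ) (z : Eu n) : ℝ := (t ^ n)⁻¹ * g (1 - ‖z‖ ^ 2 / t ^ 2)

section ker
variable {g : ℝ → ℝ}

lemma contDiff_ker (hg : ContDiff ℝ (⊤ : ℕ∞) g) (t : ℝ) :
    ContDiff ℝ (⊤ : ℕ∞) (ker g t : Eu n → ℝ) := by
  refine contDiff_const.mul (hg.comp ?_)
  exact contDiff_const.sub ((contDiff_norm_sq ℝ).div_const _)

lemma ker_eq_zero (hg0 : ∀ x ≤ 0, g x = 0) {t : ℝ} (ht : 0 < t) {z : Eu n} (hz : t ≤ ‖z‖) :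
    ker g t z = 0 := by
  unfold ker
  rw [hg0, mul_zero]
  have : 1 ≤ ‖z‖ ^ 2 / t ^ 2 := by
    rw [one_le_div (by positivity)]
    exact pow_le_pow_left₀ ht.le hz 2
  linarith

lemma tsupport_ker (hg0 : ∀ x ≤ 0, g x = 0) {t : ℝ} (ht : 0 < t) :
    tsupport (ker g t : Eu n → ℝ) ⊆ Metric.closedBall 0 t := by
  refine closure_minimal ?_ Metric.isClosed_closedBall
  intro z hz
  rw [mem_closedBall_zero_iff]
  by_contra h
  exact hz (ker_eq_zero hg0 ht (not_le.1 h).le)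

lemma hasCompactSupport_ker (hg0 : ∀ x ≤ 0, g x = 0) {t : ℝ} (ht : 0 < t) :
    HasCompactSupport (ker g t : Eu n → ℝ) :=
  (isCompact_closedBall (0 : Eu n) t).of_isClosed_subset (isClosed_tsupport _)
    (tsupport_ker hg0 ht)

lemma ker_sub_mem (hg : ContDiff ℝ (⊤ : ℕ∞) g) (hg0 : ∀ x ≤ 0, g x = 0) {t : ℝ} (ht : 0 < t)
    (y : Eu n) : (fun x => ker g t (y - x)) ∈ TestFn (Metric.closedBall y t) := by
  have hsub : tsupport (fun x => ker g t (y - x)) ⊆ Metric.closedBall y t := by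
    refine closure_minimal ?_ Metric.isClosed_closedBall
    intro z hz
    rw [Metric.mem_closedBall, dist_comm, dist_eq_norm]
    by_contra h
    exact hz (ker_eq_zero hg0 ht (not_le.1 h).le)
  exact ⟨(contDiff_ker hg t).comp (contDiff_const.sub contDiff_id),
    (isCompact_closedBall y t).of_isClosed_subset (isClosed_tsupport _) hsub, hsub⟩

lemma ker_scale (t : ℝ) (z : Eu n) : ker g t z = (t ^ n)⁻¹ * ker g 1 (t⁻¹ • z) := by
  unfold ker
  rw [norm_smul, mul_pow]
  simp [div_eq_inv_mul]

lemma integrable_ker_mul (hg : ContDiff ℝ (⊤ : ℕ∞) g) (hg0 : ∀ x ≤ 0, g x = 0) {t : ℝ}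
    (ht : 0 < t) (y : Eu n) {u : Eu n → ℝ} (hu : LocallyIntegrable u) :
    Integrable (fun x => ker g t (y - x) * u x) :=
  hu.integrable_smul_left_of_hasCompactSupport (ker_sub_mem hg hg0 ht y).1.continuous
    (ker_sub_mem hg hg0 ht y).2.1

lemma integral_ker (g : ℝ → ℝ) {t : ℝ} (ht : 0 < t) (y : Eu n) :
    ∫ x, ker g t (y - x) = ∫ z : Eu n, ker g 1 z := by
  rw [integral_sub_left_eq_self (fun z => ker g t z) volume y]
  simp only [ker_scale t]
  rw [integral_const_mul, Measure.integral_comp_inv_smul, finrank_euclideanSpace_fin,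
    abs_of_pos (by positivity), smul_eq_mul, ← mul_assoc, inv_mul_cancel₀ (by positivity), one_mul]

lemma hasFDerivAt_arg (y x : Eu n) (t : ℝ) (i : Fin n) :
    ∃ L : Eu n →L[ℝ] ℝ, HasFDerivAt (fun x => 1 - ‖y - x‖ ^ 2 / t ^ 2) L x ∧
      L (EuclideanSpace.single i 1) = 2 * (y - x) i / t ^ 2 := by
  have h1 : HasFDerivAt (fun x => y - x) (-ContinuousLinearMap.id ℝ (Eu n)) x :=
    (hasFDerivAt_id x).const_sub y
  have h2 := ((h1.norm_sq).mul_const ((t ^ 2)⁻¹)).const_sub 1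
  refine ⟨_, h2, ?_⟩
  simp [EuclideanSpace.inner_single_right, div_eq_mul_inv]
  ring

lemma pd_comp_arg {g g' : ℝ → ℝ} (hg : ∀ x, HasDerivAt g (g' x) x) (c : ℝ) (y x : Eu n) (t : ℝ)
    (i : Fin n) : pd i (fun x => c * g (1 - ‖y - x‖ ^ 2 / t ^ 2)) x =
      c * (g' (1 - ‖y - x‖ ^ 2 / t ^ 2) * (2 * (y - x) i / t ^ 2)) := by
  obtain ⟨L, hL, hLi⟩ := hasFDerivAt_arg y x t i
  have h1 := ((hg (1 - ‖y - x‖ ^ 2 / t ^ 2)).comp_hasFDerivAt x hL).const_mul c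
  unfold pd
  have h2 := h1.fderiv
  simp only [Function.comp_def] at h2
  rw [h2]
  simp [hLi]

end ker

/-- The profile of the averaging kernel. Being twice the derivative of the profile of `etaK`, it makes
`∂_t ρ_t = t Δη_t` hold. -/
noncomputable def r1 (x : ℝ) : ℝ := 2 * e1 x

lemma contDiff_r1 : ContDiff ℝ (⊤ : ℕ∞) r1 := contDiff_const.mul contDiff_e1
lemma r1_of_nonpos : ∀ x ≤ 0, r1 x = 0 := fun x hx => by simp [r1, e1_of_nonpos hx]
lemma e_of_nonpos : ∀ x ≤ 0, expNegInvGlue x = 0 := fun _ hx => expNegInvGlue.zero_of_nonpos hx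
lemma r1_nonneg (x : ℝ) : 0 ≤ r1 x := mul_nonneg (by norm_num) (e1_nonneg x)

/-- The averaging kernel `ρ_t`. -/
noncomputable abbrev rhoK (t : ℝ) (z : Eu n) : ℝ := ker r1 t z
/-- The kernel `η_t`, related to `ρ_t` by `∂_t ρ_t = t Δη_t`. -/
noncomputable abbrev etaK (t : ℝ) (z : Eu n) : ℝ := ker expNegInvGlue t z

lemma rhoK_nonneg {t : ℝ} (ht : 0 < t) (z : Eu n) : 0 ≤ rhoK t z :=
  mul_nonneg (by positivity) (r1_nonneg _)

lemma etaK_nonneg {t : ℝ} (ht : 0 < t) (z : Eu n) : 0 ≤ etaK t z :=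
  mul_nonneg (by positivity) (expNegInvGlue.nonneg _)

/-- Lets the means against `ρ_t` control integrals of nonnegative functions against `η_t`. -/
lemma two_etaK_le {t : ℝ} (ht : 0 < t) (z : Eu n) : 2 * etaK t z ≤ rhoK t z := by
  have h : expNegInvGlue (1 - ‖z‖ ^ 2 / t ^ 2) ≤ e1 (1 - ‖z‖ ^ 2 / t ^ 2) :=
    e_le_e1 (by have : 0 ≤ ‖z‖ ^ 2 / t ^ 2 := by positivity
                linarith)
  have h2 : 0 < (t ^ n)⁻¹ := by positivity
  simp only [etaK, rhoK, ker, r1]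
  nlinarith

lemma rhoK_pos {t : ℝ} (ht : 0 < t) {z : Eu n} (hz : ‖z‖ < t) : 0 < rhoK t z := by
  refine mul_pos (by positivity) (mul_pos (by norm_num) (e1_pos ?_))
  have : ‖z‖ ^ 2 / t ^ 2 < 1 := by
    rw [div_lt_one (by positivity)]
    exact pow_lt_pow_left₀ hz (norm_nonneg _) (by norm_num)
  linarith

/-- The common value of `∂_t ρ_t` and `t Δη_t`. -/
noncomputable def dK (t : ℝ) (z : Eu n) : ℝ :=
  (t ^ n)⁻¹ * (4 * ‖z‖ ^ 2 / t ^ 3 * e2 (1 - ‖z‖ ^ 2 / t ^ 2) -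
    2 * n / t * e1 (1 - ‖z‖ ^ 2 / t ^ 2))

lemma dK_eq_zero {t : ℝ} (ht : 0 < t) {z : Eu n} (hz : t ≤ ‖z‖) : dK t z = 0 := by
  have : 1 ≤ ‖z‖ ^ 2 / t ^ 2 := by
    rw [one_le_div (by positivity)]
    exact pow_le_pow_left₀ ht.le hz 2
  unfold dK
  rw [e1_of_nonpos (by linarith), e2_of_nonpos (by linarith)]
  simp

/-- One half of the identity `∂_t ρ_t = t Δη_t`; the other is `hasDerivAt_rhoK`. -/
lemma lap_etaK {t : ℝ} (ht : 0 < t) (y x : Eu n) :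
    t * euclideanLaplacian (fun x => etaK t (y - x)) x = dK t (y - x) := by
  have h1 : ∀ i : Fin n, pd i (fun x : Eu n => etaK t (y - x)) =
      fun x => (t ^ n)⁻¹ * (e1 (1 - ‖y - x‖ ^ 2 / t ^ 2) * (2 * (y - x) i / t ^ 2)) := fun i =>
    funext fun x => pd_comp_arg hasDerivAt_e _ y x t i
  have h2 : ∀ i : Fin n, pd i (pd i (fun x : Eu n => etaK t (y - x))) x =
      (t ^ n)⁻¹ * (e2 (1 - ‖y - x‖ ^ 2 / t ^ 2) * (4 / t ^ 4 * ((y - x) i) ^ 2)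
        - 2 / t ^ 2 * e1 (1 - ‖y - x‖ ^ 2 / t ^ 2)) := by
    intro i
    rw [h1]
    obtain ⟨L, hL, hLi⟩ := hasFDerivAt_arg y x t i
    have h3 := (hasDerivAt_e1 (1 - ‖y - x‖ ^ 2 / t ^ 2)).comp_hasFDerivAt x hL
    have h4 : HasFDerivAt (fun x : Eu n => 2 * (y - x) i / t ^ 2)
        ((2 / t ^ 2) • -(EuclideanSpace.proj i : Eu n →L[ℝ] ℝ)) x := by
      have h5 : HasFDerivAt (fun x : Eu n => (y - x) i) (-(EuclideanSpace.proj i : Eu n →L[ℝ] ℝ)) x :=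
        ((EuclideanSpace.proj i : Eu n →L[ℝ] ℝ).hasFDerivAt (x := x)).const_sub (y i)
      have h6 := h5.const_mul (2 / t ^ 2)
      refine h6.congr_of_eventuallyEq (Eventually.of_forall fun z => ?_)
      ring
    have h7 := ((h3.mul h4).const_mul ((t ^ n)⁻¹)).fderiv
    simp only [Function.comp_def] at h7
    unfold pd
    have h8 := congrArg (fun T : Eu n →L[ℝ] ℝ => T (EuclideanSpace.single i 1)) h7
    refine h8.trans ?_
    simp [hLi]
    ring
  rw [lap_eq]
  simp only [h2]
  rw [← Finset.mul_sum, Finset.sum_sub_distrib, ← Finset.mul_sum, ← Finset.mul_sum, Finset.sum_const,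
    Finset.card_univ, Fintype.card_fin]
  have h9 : ∑ i, ((y - x) i) ^ 2 = ‖y - x‖ ^ 2 := by
    rw [EuclideanSpace.norm_sq_eq]; simp
  rw [h9, dK, nsmul_eq_mul]
  field_simp

/-- The other half of the identity `∂_t ρ_t = t Δη_t`. -/
lemma hasDerivAt_rhoK {t : ℝ} (ht : 0 < t) (z : Eu n) :
    HasDerivAt (fun t => rhoK t z) (dK t z) t := by
  have h1 : HasDerivAt (fun t : ℝ => 1 - ‖z‖ ^ 2 / t ^ 2) (2 * ‖z‖ ^ 2 / t ^ 3) t := by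
    have h2 := ((hasDerivAt_pow 2 t).inv (by positivity)).const_mul (‖z‖ ^ 2)
    have h3 := h2.const_sub 1
    refine HasDerivAt.congr_deriv (h3.congr_of_eventuallyEq (Eventually.of_forall fun s => ?_)) ?_
    · simp [div_eq_mul_inv]
    · field_simp; push_cast; ring
  have h4 := ((hasDerivAt_e1 (1 - ‖z‖ ^ 2 / t ^ 2)).comp t h1).const_mul 2
  have h5 := (hasDerivAt_pow n t).inv (by positivity)
  have h6 := h5.mul h4
  refine HasDerivAt.congr_deriv (h6.congr_of_eventuallyEq (Eventually.of_forall fun s => ?_)) ?_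
  · rfl
  · have h7 : (n : ℝ) * t ^ (n - 1) = n * t ^ n / t := by
      rcases Nat.eq_zero_or_pos n with h | h
      · simp [h]
      · obtain ⟨m, rfl⟩ := Nat.exists_eq_add_of_lt h
        simp [pow_succ]; field_simp
    simp only [Function.comp_def, dK, Pi.inv_apply]
    rw [h7]
    field_simp
    ring

lemma continuousOn_dK : ContinuousOn (fun p : ℝ × Eu n => dK p.1 p.2) {p | 0 < p.1} := by
  have hne : ∀ p ∈ {p : ℝ × Eu n | 0 < p.1}, p.1 ≠ 0 := fun p hp => ne_of_gt hp
  have hA : ContinuousOn (fun p : ℝ × Eu n => 1 - ‖p.2‖ ^ 2 / p.1 ^ 2) {p | 0 < p.1} := by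
    refine continuousOn_const.sub (ContinuousOn.div (by fun_prop) (by fun_prop) ?_)
    exact fun p hp => pow_ne_zero _ (hne p hp)
  unfold dK
  refine ContinuousOn.mul ?_ (ContinuousOn.sub (ContinuousOn.mul ?_ ?_) (ContinuousOn.mul ?_ ?_))
  · exact ContinuousOn.inv₀ (by fun_prop) fun p hp => pow_ne_zero _ (hne p hp)
  · exact ContinuousOn.div (by fun_prop) (by fun_prop) fun p hp => pow_ne_zero _ (hne p hp)
  · exact contDiff_e2.continuous.comp_continuousOn hA
  · exact ContinuousOn.div (by fun_prop) (by fun_prop) hne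
  · exact contDiff_e1.continuous.comp_continuousOn hA

/-- Kernels at nearby centres are comparable after doubling the radius. -/
lemma exists_rhoK_le : ∃ C : ℝ, 0 < C ∧ ∀ t : ℝ, 0 < t → ∀ z z' : Eu n, ‖z - z'‖ ≤ t / 2 →
    rhoK t z ≤ C * rhoK (2 * t) z' := by
  obtain ⟨A, hA⟩ := (isCompact_Icc (a := (0 : ℝ)) (b := 1)).exists_bound_of_continuousOn
    contDiff_e1.continuous.continuousOn
  have hA0 : 0 ≤ A := (norm_nonneg _).trans (hA 0 (by simp))
  set m := expNegInvGlue (7 / 16) with hm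
  have hm0 : 0 < m := expNegInvGlue.pos_of_pos (by norm_num)
  refine ⟨2 ^ n * ((A + 1) / m), by positivity, fun t ht z z' hzz => ?_⟩
  have hC : 0 < 2 ^ n * ((A + 1) / m) := by positivity
  rcases le_or_gt t ‖z‖ with h | h
  · rw [rhoK, ker_eq_zero r1_of_nonpos ht h]
    exact mul_nonneg hC.le (rhoK_nonneg (by positivity) _)
  · have hz' : ‖z'‖ ≤ 3 / 2 * t := by
      have : ‖z'‖ ≤ ‖z‖ + ‖z - z'‖ := by
        have := norm_sub_le z (z - z'); simpa using this
      linarith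
    have h1 : ‖z'‖ ^ 2 / (2 * t) ^ 2 ≤ 9 / 16 := by
      rw [div_le_iff₀ (by positivity)]
      have := pow_le_pow_left₀ (norm_nonneg z') hz' 2
      nlinarith
    have h2 : m ≤ e1 (1 - ‖z'‖ ^ 2 / (2 * t) ^ 2) := by
      refine le_trans (expNegInvGlue.monotone (by linarith)) (e_le_e1 ?_)
      have : 0 ≤ ‖z'‖ ^ 2 / (2 * t) ^ 2 := by positivity
      linarith
    have h3 : e1 (1 - ‖z‖ ^ 2 / t ^ 2) ≤ A := by
      refine (le_abs_self _).trans (hA _ ⟨?_, ?_⟩)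
      · have : ‖z‖ ^ 2 / t ^ 2 ≤ 1 := by
          rw [div_le_one (by positivity)]
          exact pow_le_pow_left₀ (norm_nonneg _) h.le 2
        linarith
      · have : 0 ≤ ‖z‖ ^ 2 / t ^ 2 := by positivity
        linarith
    simp only [rhoK, ker, r1]
    rw [mul_pow]
    have : 2 ^ n * ((A + 1) / m) * ((2 ^ n * t ^ n)⁻¹ * (2 * e1 (1 - ‖z'‖ ^ 2 / (2 * t) ^ 2)))
      = (t ^ n)⁻¹ * (2 * ((A + 1) * (e1 (1 - ‖z'‖ ^ 2 / (2 * t) ^ 2) / m))) := by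
      field_simp
    rw [this]
    have h4 : 1 ≤ e1 (1 - ‖z'‖ ^ 2 / (2 * t) ^ 2) / m := by rwa [one_le_div hm0]
    gcongr
    nlinarith

/-! ### Means of weak solutions -/

/-- The weighted mean of `u` over the ball of radius `t` about `y`. The weights have total mass `kap n`,
not `1`. -/
noncomputable def mean (u : Eu n → ℝ) (t : ℝ) (y : Eu n) : ℝ := ∫ x, rhoK t (y - x) * u x

/-- The total mass of the kernels `ρ_t`. -/
noncomputable def kap (n : ℕ) : ℝ := ∫ z : Eu n, rhoK 1 z

lemma kap_pos : 0 < kap n := by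
  unfold kap
  have hc : Continuous (fun z : Eu n => rhoK 1 z) := (contDiff_ker contDiff_r1 1).continuous
  refine hc.integral_pos_of_hasCompactSupport_nonneg_nonzero
    (hasCompactSupport_ker r1_of_nonpos one_pos) (fun z => rhoK_nonneg one_pos z) (x := 0) ?_
  exact (rhoK_pos one_pos (by simp)).ne'

lemma mean_nonneg {u : Eu n → ℝ} (hu : ∀ x, 0 ≤ u x) {t : ℝ} (ht : 0 < t) (y : Eu n) :
    0 ≤ mean u t y :=
  integral_nonneg fun x => mul_nonneg (rhoK_nonneg ht _) (hu x)

lemma mean_congr {u v : Eu n → ℝ} (h : u =ᵐ[volume] v) (t : ℝ) (y : Eu n) :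
    mean u t y = mean v t y := by
  unfold mean
  refine integral_congr_ae ?_
  filter_upwards [h] with x hx
  rw [hx]

lemma hasDerivAt_mean {u : Eu n → ℝ} (hu : LocallyIntegrable u) {t : ℝ} (ht : 0 < t) (y : Eu n) :
    Integrable (fun x => dK t (y - x) * u x) ∧
    HasDerivAt (fun t => mean u t y) (∫ x, dK t (y - x) * u x) t := by
  have hK : IsCompact ((Icc (t/2) (2*t)) ×ˢ (Metric.closedBall (0 : Eu n) (2 * t))) :=
    isCompact_Icc.prod (isCompact_closedBall _ _)
  obtain ⟨C, hC⟩ := hK.exists_bound_of_continuousOn (f := fun p : ℝ × Eu n => dK p.1 p.2)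
    (continuousOn_dK.mono fun p hp => lt_of_lt_of_le (by positivity) hp.1.1)
  have hC0 : 0 ≤ C := (norm_nonneg _).trans (hC (t, 0) ⟨⟨by linarith, by linarith⟩, by
    simp; positivity⟩)
  have hs : Ioo (t/2) (2*t) ∈ 𝓝 t := Ioo_mem_nhds (by linarith) (by linarith)
  have huB : IntegrableOn u (Metric.closedBall y (2 * t)) :=
    hu.integrableOn_isCompact (isCompact_closedBall _ _)
  have hcont : Continuous (fun x => dK t (y - x)) := by
    have : Continuous fun z : Eu n => dK t z := by
      rw [← continuousOn_univ]
      exact continuousOn_dK.comp (f := fun z : Eu n => (t, z)) (by fun_prop) (fun z _ => ht)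
    exact this.comp (by fun_prop)
  refine hasDerivAt_integral_of_dominated_loc_of_deriv_le
    (F := fun t x => rhoK t (y - x) * u x) (F' := fun t x => dK t (y - x) * u x)
    (bound := (Metric.closedBall y (2*t)).indicator fun x => C * ‖u x‖) hs ?_ ?_ ?_ ?_ ?_ ?_
  · filter_upwards [hs] with s hs
    exact (integrable_ker_mul contDiff_r1 r1_of_nonpos (by linarith [hs.1]) y hu).1
  · exact integrable_ker_mul contDiff_r1 r1_of_nonpos ht y hu
  · exact hcont.aestronglyMeasurable.mul hu.aestronglyMeasurable
  · refine Eventually.of_forall fun x s hs => ?_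
    have hs0 : 0 < s := by linarith [hs.1]
    by_cases hx : x ∈ Metric.closedBall y (2*t)
    · rw [indicator_of_mem hx, norm_mul]
      refine mul_le_mul_of_nonneg_right (hC (s, y - x) ⟨⟨hs.1.le, hs.2.le⟩, ?_⟩) (norm_nonneg _)
      rw [mem_closedBall_zero_iff, ← dist_eq_norm, dist_comm]
      exact hx
    · rw [indicator_of_notMem hx, dK_eq_zero hs0, zero_mul, norm_zero]
      rw [Metric.mem_closedBall, not_le, dist_comm, dist_eq_norm] at hx
      linarith [hs.2]
  · rw [integrable_indicator_iff measurableSet_closedBall]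
    exact huB.norm.const_mul C
  · refine Eventually.of_forall fun x s hs => ?_
    exact (hasDerivAt_rhoK (by linarith [hs.1]) (y - x)).mul_const (u x)

/-- The derivative in `t` of the means of a weak solution. -/
lemma deriv_mean_eq {W F u : Eu n → ℝ} {U : Set (Eu n)} (hW : Continuous W)
    (hu : LocallyIntegrable u) (hs : IsWeakSol W F u U) {t : ℝ} (ht : 0 < t) {y : Eu n}
    (hy : Metric.closedBall y t ⊆ U) :
    ∫ x, dK t (y - x) * u x =
      t * ((∫ x, etaK t (y - x) * (W x * u x)) - ∫ x, F x * etaK t (y - x)) := by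
  have hWu : LocallyIntegrable (fun x => W x * u x) := by
    simpa [smul_eq_mul] using hu.continuous_smul hW
  have h1 := hs _ (TestFn.mono hy (ker_sub_mem contDiff_e e_of_nonpos ht y))
  rw [← h1, ← integral_sub]
  · rw [← integral_const_mul]
    refine integral_congr_ae (Eventually.of_forall fun x => ?_)
    show dK t (y - x) * u x = _
    rw [← lap_etaK ht y x]
    show _ = t * (etaK t (y - x) * (W x * u x) - u x * (W x * etaK t (y - x) - euclideanLaplacian (fun x => etaK t (y - x)) x))
    ring
  · exact integrable_ker_mul contDiff_e e_of_nonpos ht y hWu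
  · have h2 := integrable_ker_mul contDiff_e e_of_nonpos ht y hWu
    have h3 := ((hasDerivAt_mean hu ht y).1).const_mul (t⁻¹)
    refine (h2.sub h3).congr (Eventually.of_forall fun x => ?_)
    show etaK t (y - x) * (W x * u x) - t⁻¹ * (dK t (y - x) * u x) = u x * (W x * etaK t (y - x) - euclideanLaplacian (fun x => etaK t (y - x)) x)
    rw [← lap_etaK ht y x]
    field_simp

/-- The potential term in the derivative of the mean is controlled by the mean, since `2 η_t ≤ ρ_t`. -/
lemma abs_eta_le {W u : Eu n → ℝ} (hu : LocallyIntegrable u)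
    (hu0 : ∀ x, 0 ≤ u x) {t B : ℝ} (ht : 0 < t) {y : Eu n}
    (hB : ∀ x ∈ Metric.closedBall y t, |W x| ≤ B) :
    |∫ x, etaK t (y - x) * (W x * u x)| ≤ B / 2 * mean u t y := by
  have hB0 : 0 ≤ B := (abs_nonneg _).trans (hB y (by simp [ht.le]))
  unfold mean
  rw [← integral_const_mul, ← Real.norm_eq_abs]
  refine norm_integral_le_of_norm_le
    ((integrable_ker_mul contDiff_r1 r1_of_nonpos ht y hu).const_mul _)
    (Eventually.of_forall fun x => ?_)
  rw [Real.norm_eq_abs, abs_mul, abs_mul, abs_of_nonneg (etaK_nonneg ht _), abs_of_nonneg (hu0 x)]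
  by_cases hx : x ∈ Metric.closedBall y t
  · have h1 := two_etaK_le ht (y - x)
    have h2 := hB x hx
    have h3 : etaK t (y - x) * |W x| ≤ B / 2 * rhoK t (y - x) := by
      have := mul_le_mul_of_nonneg_left h2 (etaK_nonneg ht (y - x))
      have := mul_le_mul_of_nonneg_left h1 hB0
      linarith
    have := mul_le_mul_of_nonneg_right h3 (hu0 x)
    linarith
  · rw [etaK, ker_eq_zero e_of_nonpos ht]
    · have := rhoK_nonneg ht (y - x)
      have := hu0 x
      simp; positivity
    · rw [Metric.mem_closedBall, not_le, dist_comm, dist_eq_norm] at hx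
      exact hx.le

lemma eventually_mem_Ioo_zero {T : ℝ} (hT : 0 < T) : ∀ᶠ s in 𝓝[>] (0 : ℝ), s ∈ Ioo 0 T :=
  Ioo_mem_nhdsGT hT

/-- Means of supersolutions are almost decreasing in the radius. -/
lemma antitone_mean {W F u : Eu n → ℝ} {U : Set (Eu n)} (hW : Continuous W)
    (hu : LocallyIntegrable u) (hu0 : ∀ x, 0 ≤ u x) (hs : IsWeakSol W F u U)
    (hF0 : ∀ x, 0 ≤ F x) {T B : ℝ} {y : Eu n} (hy : Metric.closedBall y T ⊆ U)
    (hB : ∀ x ∈ Metric.closedBall y T, |W x| ≤ B) :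
    AntitoneOn (fun t => mean u t y * Real.exp (-(B / 4 * t ^ 2))) (Ioc 0 T) := by
  have hd : ∀ t ∈ Ioc 0 T, HasDerivAt (fun t => mean u t y * Real.exp (-(B / 4 * t ^ 2)))
      ((∫ x, dK t (y - x) * u x) * Real.exp (-(B / 4 * t ^ 2)) +
        mean u t y * (Real.exp (-(B / 4 * t ^ 2)) * (-(B / 4 * (2 * t))))) t := by
    intro t ht
    refine ((hasDerivAt_mean hu ht.1 y).2).mul ?_
    have := ((((hasDerivAt_pow 2 t).const_mul (B / 4)).neg).exp)
    simpa using this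
  refine antitoneOn_of_deriv_nonpos (convex_Ioc 0 T)
    (fun t ht => (hd t ht).continuousAt.continuousWithinAt)
    (fun t ht => (hd t (interior_subset ht)).differentiableAt.differentiableWithinAt) ?_
  intro t ht
  replace ht := interior_subset ht
  rw [(hd t ht).deriv, deriv_mean_eq hW hu hs ht.1
    ((Metric.closedBall_subset_closedBall ht.2).trans hy)]
  have h1 := (abs_le.1 (abs_eta_le hu hu0 ht.1 (fun x hx => hB x
    (Metric.closedBall_subset_closedBall ht.2 hx)))).2
  have h2 : 0 ≤ ∫ x, F x * etaK t (y - x) :=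
    integral_nonneg fun x => mul_nonneg (hF0 x) (etaK_nonneg ht.1 _)
  have h3 := mul_le_mul_of_nonneg_left (a := t) (b := (∫ x, etaK t (y - x) * (W x * u x)) - ∫ x, F x * etaK t (y - x)) (c := B / 2 * mean u t y) (by linarith) ht.1.le
  have h4 := Real.exp_pos (-(B / 4 * t ^ 2))
  nlinarith

/-- Means of solutions of the homogeneous equation are almost increasing in the radius. -/
lemma monotone_mean {W F u : Eu n → ℝ} {U : Set (Eu n)} (hW : Continuous W)
    (hu : LocallyIntegrable u) (hu0 : ∀ x, 0 ≤ u x) (hs : IsWeakSol W F u U)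
    {T B : ℝ} {y : Eu n} (hy : Metric.closedBall y T ⊆ U)
    (hF : ∀ x ∈ Metric.closedBall y T, F x = 0)
    (hB : ∀ x ∈ Metric.closedBall y T, |W x| ≤ B) :
    MonotoneOn (fun t => mean u t y * Real.exp (B / 4 * t ^ 2)) (Ioc 0 T) := by
  have hd : ∀ t ∈ Ioc 0 T, HasDerivAt (fun t => mean u t y * Real.exp (B / 4 * t ^ 2))
      ((∫ x, dK t (y - x) * u x) * Real.exp (B / 4 * t ^ 2) +
        mean u t y * (Real.exp (B / 4 * t ^ 2) * (B / 4 * (2 * t)))) t := by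
    intro t ht
    refine ((hasDerivAt_mean hu ht.1 y).2).mul ?_
    have := ((((hasDerivAt_pow 2 t).const_mul (B / 4))).exp)
    simpa using this
  refine monotoneOn_of_deriv_nonneg (convex_Ioc 0 T)
    (fun t ht => (hd t ht).continuousAt.continuousWithinAt)
    (fun t ht => (hd t (interior_subset ht)).differentiableAt.differentiableWithinAt) ?_
  intro t ht
  replace ht := interior_subset ht
  rw [(hd t ht).deriv, deriv_mean_eq hW hu hs ht.1
    ((Metric.closedBall_subset_closedBall ht.2).trans hy)]
  have h1 := (abs_le.1 (abs_eta_le hu hu0 ht.1 (fun x hx => hB x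
    (Metric.closedBall_subset_closedBall ht.2 hx)))).1
  have h2 : ∫ x, F x * etaK t (y - x) = 0 := by
    refine integral_eq_zero_of_ae (Eventually.of_forall fun x => ?_)
    show F x * etaK t (y - x) = 0
    by_cases hx : x ∈ Metric.closedBall y t
    · rw [hF x (Metric.closedBall_subset_closedBall ht.2 hx), zero_mul]
    · rw [etaK, ker_eq_zero e_of_nonpos ht.1, mul_zero]
      rw [Metric.mem_closedBall, not_le, dist_comm, dist_eq_norm] at hx
      exact hx.le
  rw [h2, sub_zero]
  have h3 := mul_le_mul_of_nonneg_left h1 ht.1.le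
  have h4 := Real.exp_pos (B / 4 * t ^ 2)
  nlinarith

/-- Every locally integrable function is almost everywhere the limit of its small scale means. -/
lemma ae_tendsto_mean {u : Eu n → ℝ} (hu : LocallyIntegrable u) :
    ∀ᵐ y, Tendsto (fun t => mean u t y) (𝓝[>] 0) (𝓝 (kap n * u y)) := by
  obtain ⟨A, hA⟩ := (isCompact_Icc (a := (0 : ℝ)) (b := 1)).exists_bound_of_continuousOn
    contDiff_r1.continuous.continuousOn
  have hA0 : 0 ≤ A := (norm_nonneg _).trans (hA 0 (by simp))
  set m := volume.real (Metric.ball (0 : Eu n) 1) with hm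
  filter_upwards [(Besicovitch.vitaliFamily (volume : Measure (Eu n))).ae_tendsto_average_norm_sub hu]
    with y hy
  have h1 := hy.comp (Besicovitch.tendsto_filterAt volume y)
  rw [tendsto_iff_norm_sub_tendsto_zero]
  have h2 : Tendsto (fun t => A * m * ⨍ x in Metric.closedBall y t, ‖u x - u y‖) (𝓝[>] 0) (𝓝 0) := by
    simpa using h1.const_mul (A * m)
  refine squeeze_zero' (Eventually.of_forall fun t => norm_nonneg _) ?_ h2
  filter_upwards [self_mem_nhdsWithin] with t ht
  replace ht : 0 < t := ht
  have e1 : mean u t y - kap n * u y = ∫ x, rhoK t (y - x) * (u x - u y) := by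
    simp_rw [mul_sub]
    rw [integral_sub (integrable_ker_mul contDiff_r1 r1_of_nonpos ht y hu)
      ((TestFn.integrable (ker_sub_mem contDiff_r1 r1_of_nonpos ht y)).mul_const _), integral_mul_const,
      integral_ker _ ht]
    rfl
  have hvol : volume.real (Metric.closedBall y t) = t ^ n * m := by
    rw [hm, measureReal_def, Measure.addHaar_closedBall _ _ ht.le, ENNReal.toReal_mul,
      ENNReal.toReal_ofReal (by positivity), finrank_euclideanSpace_fin,
      measureReal_def]
  have hvpos : 0 < volume.real (Metric.closedBall y t) :=
    ENNReal.toReal_pos (Metric.measure_closedBall_pos _ _ ht).ne' measure_closedBall_lt_top.ne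
  have e2 : A * m * ⨍ x in Metric.closedBall y t, ‖u x - u y‖ =
      ∫ x in Metric.closedBall y t, (t ^ n)⁻¹ * A * ‖u x - u y‖ := by
    rw [setAverage_eq, integral_const_mul, hvol, smul_eq_mul]
    rw [hvol] at hvpos
    have hm0 : m ≠ 0 := by rintro h; simp [h] at hvpos
    field_simp
  rw [e1, e2, ← integral_indicator measurableSet_closedBall]
  refine norm_integral_le_of_norm_le ?_ (Eventually.of_forall fun x => ?_)
  · rw [integrable_indicator_iff measurableSet_closedBall]
    refine Integrable.const_mul (Integrable.norm ?_) _
    exact (hu.integrableOn_isCompact (isCompact_closedBall _ _)).sub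
      (integrableOn_const measure_closedBall_lt_top.ne)
  · by_cases hx : x ∈ Metric.closedBall y t
    · rw [indicator_of_mem hx, norm_mul]
      refine mul_le_mul_of_nonneg_right ?_ (norm_nonneg _)
      unfold rhoK ker
      rw [norm_mul, Real.norm_of_nonneg (by positivity)]
      refine mul_le_mul_of_nonneg_left (hA _ ⟨?_, ?_⟩) (by positivity)
      · rw [sub_nonneg, div_le_one (by positivity)]
        rw [Metric.mem_closedBall, dist_comm, dist_eq_norm] at hx
        exact pow_le_pow_left₀ (norm_nonneg _) hx 2
      · have : 0 ≤ ‖y - x‖ ^ 2 / t ^ 2 := by positivity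
        linarith
    · rw [indicator_of_notMem hx, rhoK, ker_eq_zero r1_of_nonpos ht, zero_mul, norm_zero]
      rw [Metric.mem_closedBall, not_le, dist_comm, dist_eq_norm] at hx
      exact hx.le

/-! ### Mean value inequalities and the Harnack inequality -/

/-- `u` is at `y` the limit of its small scale means. -/
def Precise (u : Eu n → ℝ) (y : Eu n) : Prop :=
  Tendsto (fun t => mean u t y) (𝓝[>] 0) (𝓝 (kap n * u y))

open scoped Classical in
/-- The precise representative of `u`: the normalised limit of its small scale means, or `0` where
this limit does not exist. -/
noncomputable def reg (u : Eu n → ℝ) (y : Eu n) : ℝ :=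
  if h : ∃ l, Tendsto (fun t => mean u t y) (𝓝[>] 0) (𝓝 l) then (kap n)⁻¹ * h.choose else 0

lemma reg_ae {u : Eu n → ℝ} (hu : LocallyIntegrable u) : reg u =ᵐ[volume] u := by
  filter_upwards [ae_tendsto_mean hu] with y hy
  have h : ∃ l, Tendsto (fun t => mean u t y) (𝓝[>] 0) (𝓝 l) := ⟨_, hy⟩
  rw [reg, dif_pos h, tendsto_nhds_unique h.choose_spec hy]
  have := (kap_pos (n := n)).ne'
  field_simp

lemma reg_nonneg {u : Eu n → ℝ} (hu : ∀ x, 0 ≤ u x) (y : Eu n) : 0 ≤ reg u y := by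
  unfold reg
  split_ifs with h
  · refine mul_nonneg (inv_nonneg.2 kap_pos.le) (ge_of_tendsto h.choose_spec ?_)
    filter_upwards [self_mem_nhdsWithin] with t ht
    exact mean_nonneg hu ht y
  · exact le_rfl

lemma reg_precise {u : Eu n → ℝ} (hu : LocallyIntegrable u) {y : Eu n}
    (h : ∃ l, Tendsto (fun t => mean u t y) (𝓝[>] 0) (𝓝 l)) : Precise (reg u) y := by
  unfold Precise
  simp only [mean_congr (reg_ae hu)]
  rw [reg, dif_pos h, mul_inv_cancel_left₀ kap_pos.ne']
  exact h.choose_spec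

lemma IsWeakSol.congr {W F u v : Eu n → ℝ} {U : Set (Eu n)} (h : IsWeakSol W F u U)
    (huv : v =ᵐ[volume] u) : IsWeakSol W F v U := by
  intro φ hφ
  rw [← h φ hφ]
  refine integral_congr_ae ?_
  filter_upwards [huv] with x hx
  rw [hx]

/-- A nonnegative weak solution on `U` of `-Δu + W u = F` with `F ≥ 0`, which is the limit of its
small scale means at the points of `U` near which `F` vanishes. -/
structure Sol (W F u : Eu n → ℝ) (U : Set (Eu n)) : Prop where
  cont : Continuous W
  loc : LocallyIntegrable u
  nonneg : ∀ x, 0 ≤ u x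
  weak : IsWeakSol W F u U
  rhs : ∀ x, 0 ≤ F x
  precise : ∀ y T, 0 < T → Metric.closedBall y T ⊆ U → (∀ x ∈ Metric.closedBall y T, F x = 0) →
    Precise u y

lemma exists_bound_closedBall {W : Eu n → ℝ} (hW : Continuous W) (y : Eu n) (T : ℝ) :
    ∃ B, 0 ≤ B ∧ ∀ x ∈ Metric.closedBall y T, |W x| ≤ B := by
  obtain ⟨B, hB⟩ := (isCompact_closedBall y T).exists_bound_of_continuousOn hW.continuousOn
  exact ⟨max B 0, le_max_right _ _, fun x hx => (hB x hx).trans (le_max_left _ _)⟩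

/-- The precise representative of a nonnegative weak solution is a `Sol`: away from the source the means
converge as the radius tends to `0`, being monotone up to an exponential factor. -/
lemma sol_reg {W F u : Eu n → ℝ} {U : Set (Eu n)} (hW : Continuous W)
    (hu : LocallyIntegrable u) (hu0 : ∀ x, 0 ≤ u x) (hs : IsWeakSol W F u U)
    (hF0 : ∀ x, 0 ≤ F x) : Sol W F (reg u) U := by
  refine ⟨hW, hu.congr (reg_ae hu).symm, reg_nonneg hu0, hs.congr (reg_ae hu), hF0, ?_⟩
  intro y T hT hy hF
  refine reg_precise hu ?_
  obtain ⟨B, -, hB⟩ := exists_bound_closedBall hW y T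
  have hm := monotone_mean hW hu hu0 hs hy hF hB
  have h1 := (hm.mono Ioo_subset_Ioc_self).tendsto_nhdsWithin_Ioo_right (nonempty_Ioo.2 hT)
    ⟨0, by
      rintro _ ⟨t, ht, rfl⟩
      exact mul_nonneg (mean_nonneg hu0 ht.1 y) (Real.exp_pos _).le⟩
  have h2 : Tendsto (fun t : ℝ => Real.exp (-(B / 4 * t ^ 2))) (𝓝[>] 0) (𝓝 1) := by
    have : Continuous (fun t : ℝ => Real.exp (-(B / 4 * t ^ 2))) := by fun_prop
    have := this.tendsto 0
    simp only [ne_eq, OfNat.ofNat_ne_zero, not_false_eq_true, zero_pow, mul_zero, neg_zero,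
      Real.exp_zero] at this
    exact this.mono_left nhdsWithin_le_nhds
  refine ⟨_, (h1.mul h2).congr fun t => ?_⟩
  rw [mul_assoc, ← Real.exp_add]
  simp

namespace Sol
variable {W F u : Eu n → ℝ} {U : Set (Eu n)}

/-- The mean at a large scale is bounded by the mean at a smaller one, even on the support of the source. -/
lemma mean_le_of_le (h : Sol W F u U) {T B : ℝ} {y : Eu n} (hy : Metric.closedBall y T ⊆ U)
    (hB : ∀ x ∈ Metric.closedBall y T, |W x| ≤ B) {s : ℝ} (hs : 0 < s) (hsT : s ≤ T) :
    mean u T y ≤ Real.exp (B / 4 * T ^ 2) * mean u s y := by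
  have hB0 : 0 ≤ B := (abs_nonneg _).trans (hB y (by simp; linarith))
  have h1 := antitone_mean h.cont h.loc h.nonneg h.weak h.rhs hy hB ⟨hs, hsT⟩
    ⟨hs.trans_le hsT, le_rfl⟩ hsT
  have h2 : Real.exp (-(B / 4 * s ^ 2)) ≤ 1 := Real.exp_le_one_iff.2 (by
    have : 0 ≤ B / 4 * s ^ 2 := by positivity
    linarith)
  have h3 := mean_nonneg h.nonneg hs y
  simp only [Real.exp_neg (B / 4 * T ^ 2)] at h1
  have h4 := Real.exp_pos (B / 4 * T ^ 2)
  rw [← div_eq_mul_inv, div_le_iff₀ h4] at h1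
  have := mul_le_mul_of_nonneg_left h2 h3
  nlinarith

/-- The mean value inequality for supersolutions. -/
lemma mean_le (h : Sol W F u U) {T B : ℝ} {y : Eu n} (hT : 0 < T) (hy : Metric.closedBall y T ⊆ U)
    (hF : ∀ x ∈ Metric.closedBall y T, F x = 0)
    (hB : ∀ x ∈ Metric.closedBall y T, |W x| ≤ B) :
    mean u T y ≤ Real.exp (B / 4 * T ^ 2) * (kap n * u y) := by
  refine ge_of_tendsto ((h.precise y T hT hy hF).const_mul _) ?_
  filter_upwards [Ioo_mem_nhdsGT hT] with s hs
  exact h.mean_le_of_le hy hB hs.1 hs.2.le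

/-- The mean value inequality for subsolutions, valid away from the source. -/
lemma le_mean (h : Sol W F u U) {T B : ℝ} {y : Eu n} (hT : 0 < T) (hy : Metric.closedBall y T ⊆ U)
    (hF : ∀ x ∈ Metric.closedBall y T, F x = 0)
    (hB : ∀ x ∈ Metric.closedBall y T, |W x| ≤ B) :
    kap n * u y ≤ Real.exp (B / 4 * T ^ 2) * mean u T y := by
  have hB0 : 0 ≤ B := (abs_nonneg _).trans (hB y (by simp [hT.le]))
  refine le_of_tendsto (h.precise y T hT hy hF) ?_
  filter_upwards [Ioo_mem_nhdsGT hT] with s hs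
  have h1 := monotone_mean h.cont h.loc h.nonneg h.weak hy hF hB ⟨hs.1, hs.2.le⟩
    ⟨hT, le_rfl⟩ hs.2.le
  have h2 : 1 ≤ Real.exp (B / 4 * s ^ 2) := Real.one_le_exp (by positivity)
  have h3 := mean_nonneg h.nonneg hs.1 y
  simp only at h1
  nlinarith

/-- The local Harnack inequality, with a constant independent of the solution. -/
lemma harnack : ∃ C : ℝ, 0 < C ∧ ∀ {W F u : Eu n → ℝ} {U : Set (Eu n)} (_ : Sol W F u U) {T B : ℝ}
    {y y' : Eu n} (_ : 0 < T) (_ : dist y y' ≤ T / 2) (_ : Metric.closedBall y (3 * T) ⊆ U)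
    (_ : ∀ x ∈ Metric.closedBall y (3 * T), F x = 0)
    (_ : ∀ x ∈ Metric.closedBall y (3 * T), |W x| ≤ B), u y ≤ C * Real.exp (2 * B * T ^ 2) * u y' := by
  obtain ⟨C, hC, hK⟩ := exists_rhoK_le (n := n)
  refine ⟨C, hC, ?_⟩
  intro W F u U h T B y y' hT hd hU hF hB
  have hB0 : 0 ≤ B := (abs_nonneg _).trans (hB y (by simp [hT.le]))
  have hb1 : Metric.closedBall y T ⊆ Metric.closedBall y (3 * T) :=
    Metric.closedBall_subset_closedBall (by linarith)
  have hb2 : Metric.closedBall y' (2 * T) ⊆ Metric.closedBall y (3 * T) :=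
    Metric.closedBall_subset_closedBall' (by rw [dist_comm]; linarith)
  have h1 := h.le_mean hT (hb1.trans hU) (fun x hx => hF x (hb1 hx)) (fun x hx => hB x (hb1 hx))
  have h2 := h.mean_le (T := 2 * T) (by positivity) (hb2.trans hU) (fun x hx => hF x (hb2 hx))
    (fun x hx => hB x (hb2 hx))
  -- The two mean value inequalities are linked by comparing the kernels at the two centres.
  have h3 : mean u T y ≤ C * mean u (2 * T) y' := by
    unfold mean
    rw [← integral_const_mul]
    refine integral_mono (integrable_ker_mul contDiff_r1 r1_of_nonpos hT y h.loc)
      ((integrable_ker_mul contDiff_r1 r1_of_nonpos (by positivity) y' h.loc).const_mul C) ?_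
    intro x
    have := mul_le_mul_of_nonneg_right (hK T hT (y - x) (y' - x) (by
      rw [sub_sub_sub_cancel_right, ← dist_eq_norm]; exact hd)) (h.nonneg x)
    show rhoK T (y - x) * u x ≤ C * (rhoK (2 * T) (y' - x) * u x)
    linarith
  have h4 : Real.exp (B / 4 * T ^ 2) * Real.exp (B / 4 * (2 * T) ^ 2) ≤ Real.exp (2 * B * T ^ 2) := by
    rw [← Real.exp_add]
    refine Real.exp_le_exp.2 ?_
    have : 0 ≤ B * T ^ 2 := by positivity
    nlinarith
  have hk := kap_pos (n := n)
  have hu' := h.nonneg y'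
  have : kap n * u y ≤ kap n * (C * Real.exp (2 * B * T ^ 2) * u y') :=
    calc kap n * u y ≤ Real.exp (B / 4 * T ^ 2) * (C * (Real.exp (B / 4 * (2 * T) ^ 2) * (kap n * u y'))) :=
          h1.trans (mul_le_mul_of_nonneg_left (h3.trans (mul_le_mul_of_nonneg_left h2 hC.le))
            (Real.exp_pos _).le)
      _ = (Real.exp (B / 4 * T ^ 2) * Real.exp (B / 4 * (2 * T) ^ 2)) * (C * (kap n * u y')) := by ring
      _ ≤ Real.exp (2 * B * T ^ 2) * (C * (kap n * u y')) :=
          mul_le_mul_of_nonneg_right h4 (by positivity)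
      _ = _ := by ring
  exact le_of_mul_le_mul_left this hk

end Sol

/-! ### Equicontinuity -/

namespace Sol
variable {W F u : Eu n → ℝ} {U : Set (Eu n)}

/-- The two mean value inequalities combined: at small scales a solution is close to its mean, uniformly
in terms of its size. -/
lemma abs_sub_mean_le (h : Sol W F u U) {T B : ℝ} {y : Eu n} (hT : 0 < T)
    (hy : Metric.closedBall y T ⊆ U)
    (hF : ∀ x ∈ Metric.closedBall y T, F x = 0)
    (hB : ∀ x ∈ Metric.closedBall y T, |W x| ≤ B) :
    |kap n * u y - mean u T y| ≤ (Real.exp (B / 4 * T ^ 2) - 1) * (kap n * u y) := by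
  have hB0 : 0 ≤ B := (abs_nonneg _).trans (hB y (by simp [hT.le]))
  have h1 := h.mean_le hT hy hF hB
  have h2 := h.le_mean hT hy hF hB
  have h3 : 1 ≤ Real.exp (B / 4 * T ^ 2) := Real.one_le_exp (by positivity)
  have h4 : 0 ≤ kap n * u y := mul_nonneg kap_pos.le (h.nonneg y)
  rw [abs_le]
  constructor
  · linarith
  · by_contra hc
    push Not at hc
    have h5 : Real.exp (B / 4 * T ^ 2) * mean u T y ≤
      Real.exp (B / 4 * T ^ 2) * ((2 - Real.exp (B / 4 * T ^ 2)) * (kap n * u y)) :=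
      mul_le_mul_of_nonneg_left (by linarith) (by positivity)
    nlinarith [mul_nonneg (mul_nonneg (sub_nonneg.2 h3) (sub_nonneg.2 h3)) h4,
      mul_pos (lt_of_lt_of_le one_pos h3) (sub_pos.2 hc)]

/-- Bounded families of solutions are equicontinuous. -/
lemma equicontinuous (y₀ : Eu n) {T : ℝ} (hT : 0 < T) (A B : ℝ) {ε : ℝ} (hε : 0 < ε) :
    ∃ δ > 0, ∀ {W F u : Eu n → ℝ} {U : Set (Eu n)} (_ : Sol W F u U)
      (_ : Metric.closedBall y₀ T ⊆ U) (_ : ∀ x ∈ Metric.closedBall y₀ T, F x = 0)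
      (_ : ∀ x ∈ Metric.closedBall y₀ T, |W x| ≤ B)
      (_ : ∀ x ∈ Metric.closedBall y₀ T, u x ≤ A), ∀ y, dist y y₀ < δ → |u y - u y₀| ≤ ε := by
  have hk := kap_pos (n := n)
  obtain ⟨t, ht, htT, hexp⟩ : ∃ t : ℝ, 0 < t ∧ t < T / 2 ∧
      (Real.exp (B / 4 * t ^ 2) - 1) * (kap n * A) < ε * kap n / 3 := by
    have h1 : Continuous (fun t : ℝ => (Real.exp (B / 4 * t ^ 2) - 1) * (kap n * A)) := by
      fun_prop
    have h2 := (h1.tendsto 0).mono_left (nhdsWithin_le_nhds (s := Ioi 0))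
    simp only [ne_eq, OfNat.ofNat_ne_zero, not_false_eq_true, zero_pow, mul_zero,
      Real.exp_zero, sub_self, zero_mul] at h2
    have h3 := (h2.eventually_lt_const (show 0 < ε * kap n / 3 by positivity)).and
      (Ioo_mem_nhdsGT (show 0 < T / 2 by positivity))
    obtain ⟨t, h4, h5⟩ := h3.exists
    exact ⟨t, h5.1, h5.2, h4⟩
  obtain ⟨L, hL⟩ := ContDiff.lipschitzWith_of_hasCompactSupport
    (hasCompactSupport_ker (n := n) r1_of_nonpos ht) (contDiff_ker contDiff_r1 t) (by simp)
  set m := volume.real (Metric.closedBall y₀ T) with hm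
  obtain ⟨δ, hδ, hδ'⟩ : ∃ δ > 0, L * δ * |A| * m < ε * kap n / 3 := by
    have h1 : Continuous (fun δ : ℝ => L * δ * |A| * m) := by fun_prop
    have h2 := (h1.tendsto 0).mono_left (nhdsWithin_le_nhds (s := Ioi 0))
    simp only [mul_zero, zero_mul] at h2
    obtain ⟨t, h4, h5⟩ := ((h2.eventually_lt_const (show 0 < ε * kap n / 3 by positivity)).and
      self_mem_nhdsWithin).exists
    exact ⟨t, h5, h4⟩
  refine ⟨min δ (T / 2), lt_min hδ (by positivity), ?_⟩
  intro W F u U h hU hF hB hA y hy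
  have hyδ := (lt_min_iff.1 hy).1
  have hyT := (lt_min_iff.1 hy).2
  -- Solutions are compared with their means at scale `t`, which are Lipschitz with a uniform constant.
  have key : ∀ z, dist z y₀ < T / 2 → |kap n * u z - mean u t z| ≤ ε * kap n / 3 := by
    intro z hz
    have hb : Metric.closedBall z t ⊆ Metric.closedBall y₀ T :=
      Metric.closedBall_subset_closedBall' (by linarith)
    refine (h.abs_sub_mean_le ht (hb.trans hU) (fun x hx => hF x (hb hx))
      (fun x hx => hB x (hb hx))).trans (le_trans ?_ hexp.le)
    have hB0 : 0 ≤ B := (abs_nonneg _).trans (hB y₀ (by simp [hT.le]))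
    have h3 : 1 ≤ Real.exp (B / 4 * t ^ 2) := Real.one_le_exp (by positivity)
    have h4 : u z ≤ A := hA z (by rw [Metric.mem_closedBall]; linarith)
    exact mul_le_mul_of_nonneg_left (mul_le_mul_of_nonneg_left h4 hk.le) (by linarith)
  have k1 := abs_le.1 (key y hyT)
  have k2 := abs_le.1 (key y₀ (by simp [hT]))
  have k3 : |mean u t y - mean u t y₀| ≤ ε * kap n / 3 := by
    refine le_trans ?_ hδ'.le
    unfold mean
    rw [← integral_sub (integrable_ker_mul contDiff_r1 r1_of_nonpos ht y h.loc)
      (integrable_ker_mul contDiff_r1 r1_of_nonpos ht y₀ h.loc)]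
    have e : L * δ * |A| * m = ∫ x in Metric.closedBall y₀ T, (L * δ * |A|) := by
      rw [setIntegral_const, hm, smul_eq_mul, mul_comm]
    rw [e, ← integral_indicator measurableSet_closedBall, ← Real.norm_eq_abs]
    refine norm_integral_le_of_norm_le ?_ (Eventually.of_forall fun x => ?_)
    · rw [integrable_indicator_iff measurableSet_closedBall]
      exact integrableOn_const measure_closedBall_lt_top.ne
    · by_cases hx : x ∈ Metric.closedBall y₀ T
      · rw [indicator_of_mem hx, ← sub_mul, norm_mul]
        have h1 : ‖rhoK t (y - x) - rhoK t (y₀ - x)‖ ≤ L * δ := by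
          refine (hL.norm_sub_le (y - x) (y₀ - x)).trans ?_
          rw [sub_sub_sub_cancel_right, ← dist_eq_norm]
          exact mul_le_mul_of_nonneg_left hyδ.le L.2
        have h2 : ‖u x‖ ≤ |A| := by
          rw [Real.norm_of_nonneg (h.nonneg x)]
          exact (hA x hx).trans (le_abs_self A)
        exact mul_le_mul h1 h2 (norm_nonneg _) (mul_nonneg L.2 hδ.le)
      · rw [indicator_of_notMem hx]
        rw [Metric.mem_closedBall, not_le] at hx
        show ‖ker r1 t (y - x) * u x - ker r1 t (y₀ - x) * u x‖ ≤ 0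
        rw [ker_eq_zero r1_of_nonpos ht, ker_eq_zero r1_of_nonpos ht]
        · simp
        · rw [← dist_eq_norm, dist_comm]; linarith
        · rw [← dist_eq_norm, dist_comm]
          have := dist_triangle x y y₀
          linarith
  have k4 := abs_le.1 k3
  have : |kap n * (u y - u y₀)| ≤ kap n * ε := by
    rw [abs_le]
    constructor <;> linarith
  rw [abs_mul, abs_of_pos hk] at this
  exact le_of_mul_le_mul_left this hk
end Sol

/-! ### The strong maximum principle and passage to the limit -/

/-- A nonnegative function whose mean vanishes is zero almost everywhere in the ball, as `ρ_T > 0` there. -/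
lemma ae_zero_of_mean_eq_zero {u : Eu n → ℝ} (hu : LocallyIntegrable u) (hu0 : ∀ x, 0 ≤ u x)
    {T : ℝ} (hT : 0 < T) {y : Eu n} (h : mean u T y ≤ 0) :
    ∀ᵐ z, z ∈ Metric.ball y T → u z = 0 := by
  have h0 : mean u T y = 0 := le_antisymm h (mean_nonneg hu0 hT y)
  unfold mean at h0
  rw [integral_eq_zero_iff_of_nonneg (fun x => mul_nonneg (rhoK_nonneg hT _) (hu0 x))
    (integrable_ker_mul contDiff_r1 r1_of_nonpos hT y hu)] at h0
  filter_upwards [h0] with z hz hzb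
  have : 0 < rhoK T (y - z) := rhoK_pos hT (by
    rw [← dist_eq_norm, dist_comm]; exact hzb)
  exact (mul_eq_zero.1 hz).resolve_left this.ne'

namespace Sol

/-- The strong maximum principle: on a connected set, a nonnegative solution with a nonzero source is
positive at all points away from the source. -/
lemma pos {W F u : Eu n → ℝ} {U : Set (Eu n)} (h : Sol W F u U) (hU : IsOpen U)
    (hUc : IsPreconnected U) (hFU : F ∈ TestFn U) (hF1 : ∃ x, F x ≠ 0) {x₀ : Eu n} {T : ℝ}
    (hT : 0 < T) (hx₀ : Metric.closedBall x₀ T ⊆ U)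
    (hF : ∀ x ∈ Metric.closedBall x₀ T, F x = 0) : 0 < u x₀ := by
  refine (h.nonneg x₀).lt_of_ne fun hux => ?_
  obtain ⟨B, -, hB⟩ := exists_bound_closedBall h.cont x₀ T
  have hx₀U : x₀ ∈ U := hx₀ (by simp [hT.le])
  have hm : mean u T x₀ ≤ 0 := by
    have := h.mean_le hT hx₀ hF hB
    rwa [← hux, mul_zero, mul_zero] at this
  -- The set of points near which `u` vanishes almost everywhere is open and closed in `U`.
  have hprop : ∀ {x}, x ∈ U → (∃ r > 0, ∀ᵐ z, z ∈ Metric.ball x₀ r → u z = 0) →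
      ∃ r > 0, ∀ᵐ z, z ∈ Metric.ball x r → u z = 0 := by
    intro x hx
    refine hUc.induction₂' (fun x y => (∃ r > 0, ∀ᵐ z, z ∈ Metric.ball x r → u z = 0) →
      ∃ r > 0, ∀ᵐ z, z ∈ Metric.ball y r → u z = 0) ?_ (fun x y z _ _ _ h1 h2 h3 => h2 (h1 h3))
      hx₀U hx
    intro x hx
    obtain ⟨δ, hδ, hδU⟩ := Metric.isOpen_iff.1 hU x hx
    set S := δ / 4
    have hS : 0 < S := by positivity
    refine mem_nhdsWithin_of_mem_nhds (Filter.mem_of_superset (Metric.ball_mem_nhds x hS) ?_)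
    have aux : ∀ a b : Eu n, dist a b < S → Metric.closedBall a S ⊆ U →
        (∃ r > 0, ∀ᵐ z, z ∈ Metric.ball a r → u z = 0) →
        ∃ r > 0, ∀ᵐ z, z ∈ Metric.ball b r → u z = 0 := by
      rintro a b hab haU ⟨r, hr, har⟩
      obtain ⟨B, -, hB⟩ := exists_bound_closedBall h.cont a S
      set s := min r S
      have hs : 0 < s := lt_min hr hS
      have h1 : mean u s a = 0 := by
        unfold mean
        refine integral_eq_zero_of_ae ?_
        filter_upwards [har] with z hz
        show rhoK s (a - z) * u z = 0
        by_cases hzb : z ∈ Metric.ball a r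
        · rw [hz hzb, mul_zero]
        · rw [rhoK, ker_eq_zero r1_of_nonpos hs, zero_mul]
          rw [← dist_eq_norm, dist_comm]
          rw [Metric.mem_ball, not_lt] at hzb
          exact (min_le_left _ _).trans hzb
      have h2 := h.mean_le_of_le haU hB hs (min_le_right _ _)
      rw [h1, mul_zero] at h2
      refine ⟨S - dist a b, sub_pos.2 hab, ?_⟩
      filter_upwards [ae_zero_of_mean_eq_zero h.loc h.nonneg hS h2] with z hz hzb
      refine hz ?_
      rw [Metric.mem_ball] at hzb ⊢
      have := dist_triangle z b a
      rw [dist_comm b a] at this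
      linarith
    intro y hy
    rw [Metric.mem_ball] at hy
    refine ⟨aux x y (by rwa [dist_comm]) ?_, aux y x hy ?_⟩
    · refine subset_trans ?_ hδU
      exact Metric.closedBall_subset_ball (by show δ / 4 < δ; linarith)
    · refine subset_trans ?_ hδU
      intro z hz
      rw [Metric.mem_closedBall] at hz
      rw [Metric.mem_ball]
      have := dist_triangle z y x
      have : S = δ / 4 := rfl
      linarith
  have hzero : ∀ᵐ z, z ∈ U → u z = 0 := by
    rw [ae_iff]
    refine measure_null_of_locally_null _ ?_
    intro x hx
    simp only [mem_ofPred_eq, Classical.not_imp] at hx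
    obtain ⟨r, hr, hz⟩ := hprop hx.1 ⟨T, hT, ae_zero_of_mean_eq_zero h.loc h.nonneg hT hm⟩
    refine ⟨Metric.ball x r ∩ {a | ¬(a ∈ U → u a = 0)}, ?_, ?_⟩
    · exact inter_mem (mem_nhdsWithin_of_mem_nhds (Metric.ball_mem_nhds x hr)) self_mem_nhdsWithin
    · rw [ae_iff] at hz
      refine measure_mono_null ?_ hz
      rintro z ⟨hz1, hz2⟩
      simp only [mem_ofPred_eq, Classical.not_imp] at hz2 ⊢
      exact ⟨hz1, hz2.2⟩
  -- If `u = 0` almost everywhere on `U`, the weak equation tested with `F` gives `∫ F² = 0`.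
  have h1 := h.weak F hFU
  have h2 : ∫ x, u x * (W x * F x - euclideanLaplacian F x) = 0 := by
    refine integral_eq_zero_of_ae ?_
    filter_upwards [hzero] with z hz
    show u z * (W z * F z - euclideanLaplacian F z) = 0
    by_cases hzU : z ∈ U
    · rw [hz hzU, zero_mul]
    · rw [image_eq_zero_of_notMem_tsupport fun h' => hzU (hFU.2.2 h'),
        image_eq_zero_of_notMem_tsupport (f := euclideanLaplacian F)
          fun h' => hzU ((lap_mem hFU).2.2 h')]
      simp
  rw [h2] at h1
  obtain ⟨x, hx⟩ := hF1
  have h3 : 0 < ∫ x, F x * F x :=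
    (hFU.1.continuous.mul hFU.1.continuous).integral_pos_of_hasCompactSupport_nonneg_nonzero
      hFU.2.1.mul_left (fun x => mul_self_nonneg _) (x := x) (mul_self_ne_zero.2 hx)
  exact h3.ne h1

lemma smul {W F u : Eu n → ℝ} {U : Set (Eu n)} (h : Sol W F u U) {c : ℝ} (hc : 0 ≤ c) :
    Sol W (fun x => c * F x) (fun x => c * u x) U := by
  rcases hc.eq_or_lt with rfl | hc'
  · refine ⟨h.cont, ?_, by simp, ?_, by simp, ?_⟩
    · simpa using locallyIntegrable_zero
    · intro φ _; simp
    · intro y T _ _ _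
      simp [Precise, mean]
  refine ⟨h.cont, ?_, fun x => mul_nonneg hc (h.nonneg x), ?_, fun x => mul_nonneg hc (h.rhs x), ?_⟩
  · exact h.loc.smul c
  · intro φ hφ
    have := h.weak φ hφ
    simp_rw [mul_assoc]
    rw [integral_const_mul, integral_const_mul, this]
  · intro y T hT hy hF
    have h1 := (h.precise y T hT hy (fun x hx => (mul_eq_zero.1 (hF x hx)).resolve_left hc'.ne')).const_mul c
    unfold Precise
    have e : ∀ t, mean (fun x => c * u x) t y = c * mean u t y := by
      intro t
      unfold mean
      rw [← integral_const_mul]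
      congr 1; ext x; ring
    simp_rw [e]
    rw [mul_left_comm]
    exact h1

end Sol

/-- Uniform convergence on the support of a test function allows passage to the limit. -/
lemma tendsto_integral_mul {ι : Type*} {l : Filter ι} {w : ι → Eu n → ℝ} {v ψ : Eu n → ℝ}
    {U : Set (Eu n)} (hψ : Continuous ψ) (hψc : HasCompactSupport ψ)
    (hw : ∀ j, LocallyIntegrable (w j)) (hU : tsupport ψ ⊆ U) (hv : ContinuousOn v U)
    (hlim : TendstoUniformlyOn w v l (tsupport ψ)) :
    Tendsto (fun j => ∫ x, w j x * ψ x) l (𝓝 (∫ x, v x * ψ x)) := by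
  have hvi : Integrable (fun x => v x * ψ x) := by
    rw [← integrableOn_iff_integrable_of_support_subset (s := tsupport ψ)]
    · exact ((hv.mono hU).mul hψ.continuousOn).integrableOn_compact hψc
    · exact (Function.support_mul_subset_right _ _).trans (subset_tsupport _)
  have hwi : ∀ j, Integrable (fun x => w j x * ψ x) := fun j => by
    have := (hw j).integrable_smul_left_of_hasCompactSupport hψ hψc
    simpa [mul_comm] using this
  have hψi : Integrable ψ := hψ.integrable_of_hasCompactSupport hψc
  rw [Metric.tendsto_nhds]
  intro ε hε
  have hI : 0 ≤ ∫ x, ‖ψ x‖ := integral_nonneg fun x => norm_nonneg _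
  have hη : 0 < ε / ((∫ x, ‖ψ x‖) + 1) := by positivity
  filter_upwards [Metric.tendstoUniformlyOn_iff.1 hlim _ hη] with j hj
  rw [dist_eq_norm, ← integral_sub (hwi j) hvi]
  calc ‖∫ x, w j x * ψ x - v x * ψ x‖ ≤ ∫ x, ε / ((∫ x, ‖ψ x‖) + 1) * ‖ψ x‖ := by
        refine norm_integral_le_of_norm_le (hψi.norm.const_mul _) (Eventually.of_forall fun x => ?_)
        rw [← sub_mul, norm_mul]
        by_cases hx : x ∈ tsupport ψ
        · refine mul_le_mul_of_nonneg_right ?_ (norm_nonneg _)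
          rw [← dist_eq_norm, dist_comm]
          exact (hj x hx).le
        · rw [image_eq_zero_of_notMem_tsupport hx]; simp
    _ = ε * ((∫ x, ‖ψ x‖) / ((∫ x, ‖ψ x‖) + 1)) := by rw [integral_const_mul]; ring
    _ < ε * 1 := by
        refine mul_lt_mul_of_pos_left ?_ hε
        rw [div_lt_one (by positivity)]; linarith
    _ = ε := mul_one _

/-! ### A continuous positive weak solution on a connected open set -/

/-- An exhaustion of an open set by closed subsets, in the sense that every point of the set has a
neighbourhood contained in all but finitely many of them. -/
lemma exists_exhaustion {U : Set (Eu n)} (hU : IsOpen U) (hne : U.Nonempty) (hUc : Uᶜ.Nonempty) :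
    ∃ K : ℕ → Set (Eu n), (∀ j, IsClosed (K j)) ∧ (∀ j, (U \ K j).Nonempty) ∧
      ∀ x ∈ U, ∃ T > 0, Metric.closedBall x T ⊆ U ∧ ∀ᶠ j in atTop, Metric.closedBall x T ⊆ K j := by
  let K : ℕ → Set (Eu n) := fun j => Metric.closedBall 0 j ∩ {x | 1 / ((j : ℝ) + 1) ≤ Metric.infDist x Uᶜ}
  have hKc : ∀ j, IsClosed (K j) := fun j => Metric.isClosed_closedBall.inter
    (isClosed_le continuous_const (Metric.continuous_infDist_pt _))
  have hKU : ∀ j, K j ⊆ U := by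
    intro j x hx
    by_contra hxU
    have h1 := hx.2
    rw [mem_ofPred_eq, Metric.infDist_zero_of_mem hxU] at h1
    have : (0 : ℝ) < 1 / ((j : ℝ) + 1) := by positivity
    linarith
  refine ⟨K, hKc, fun j => ?_, fun x hx => ?_⟩
  · rw [sdiff_nonempty]
    intro hsub
    have he : K j = U := (hKU j).antisymm hsub
    have hcl : IsClopen U := ⟨he ▸ hKc j, hU⟩
    have := hcl.eq_univ hne
    rw [this] at hUc
    simp at hUc
  · obtain ⟨δ, hδ, hδU⟩ := Metric.isOpen_iff.1 hU x hx
    refine ⟨δ / 2, by positivity, (Metric.closedBall_subset_ball (by linarith)).trans hδU, ?_⟩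
    have h1 : ∀ᶠ j : ℕ in atTop, 1 / ((j : ℝ) + 1) < δ / 2 :=
      tendsto_one_div_add_atTop_nhds_zero_nat.eventually_lt_const (by positivity)
    have h2 : ∀ᶠ j : ℕ in atTop, ‖x‖ + δ / 2 ≤ j := tendsto_natCast_atTop_atTop.eventually_ge_atTop _
    filter_upwards [h1, h2] with j hj1 hj2 z hz
    rw [Metric.mem_closedBall] at hz
    refine ⟨?_, ?_⟩
    · rw [mem_closedBall_zero_iff]
      have := norm_le_norm_add_norm_sub' z x
      rw [← dist_eq_norm] at this
      linarith
    · rw [mem_ofPred_eq]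
      refine hj1.le.trans ((Metric.le_infDist hUc).2 fun y hy => ?_)
      by_contra hlt
      push Not at hlt
      refine hy (hδU ?_)
      rw [Metric.mem_ball]
      have := dist_triangle y z x
      rw [dist_comm y z] at this
      linarith

/-- A nonnegative quadratic form on a connected open set `U ≠ ℝⁿ` admits a continuous positive weak
solution on `U`: a limit of normalised solutions whose sources escape to the boundary. -/
lemma exists_pos_weakSol {U : Set (Eu n)} {V : Eu n → ℝ} (hV : Continuous V) (hU : IsOpen U)
    (hUp : IsPreconnected U) (hne : U.Nonempty) (hUc : Uᶜ.Nonempty)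
    (hpos : ∀ f ∈ TestFn U, 0 ≤ qf V f f) :
    ∃ v : Eu n → ℝ, (∀ x ∈ U, 0 < v x) ∧ ContinuousOn v U ∧ IsWeakSol V (fun _ => 0) v U := by
  obtain ⟨K, hKc, hKU, hK⟩ := exists_exhaustion hU hne hUc
  have hex : ∀ j : ℕ, ∃ F w : Eu n → ℝ, F ∈ TestFn (U \ K j) ∧ (∃ x, F x ≠ 0) ∧
      Sol (fun x => V x + 1 / ((j : ℝ) + 1)) F w U := by
    intro j
    obtain ⟨p, hp⟩ := hKU j
    obtain ⟨F, hF1, hF2, hF3, hF4, hF5⟩ := exists_contDiff_tsupport_subset (n := ⊤)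
      ((hU.sdiff (hKc j)).mem_nhds hp)
    have hF0 : ∀ x, 0 ≤ F x := fun x => (hF4 (mem_range_self x)).1
    have hFT : F ∈ TestFn (U \ K j) := ⟨hF3, hF2, hF1⟩
    obtain ⟨u, hu1, hu2, hu3⟩ := exists_weakSol hV hpos (ε := 1 / ((j : ℝ) + 1)) (by positivity)
      (TestFn.mono sdiff_subset hFT) hF0
    refine ⟨F, reg u, hFT, ⟨p, by rw [hF5]; exact one_ne_zero⟩, sol_reg (hV.add continuous_const)
      (hu1.locallyIntegrable (by norm_num)) hu2 hu3 hF0⟩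
  choose F w hF hF1 hw using hex
  have hFK : ∀ j, ∀ x ∈ K j, F j x = 0 := fun j x hx =>
    image_eq_zero_of_notMem_tsupport fun h => ((hF j).2.2 h).2 hx
  obtain ⟨x₀, hx₀⟩ := hne
  -- Uniform local bounds for the potentials.
  have hWB : ∀ (y : Eu n) (T : ℝ), ∃ B, ∀ j : ℕ, ∀ x ∈ Metric.closedBall y T,
      |V x + 1 / ((j : ℝ) + 1)| ≤ B := by
    intro y T
    obtain ⟨B, -, hB⟩ := exists_bound_closedBall hV y T
    refine ⟨B + 1, fun j x hx => (abs_add_le _ _).trans (add_le_add (hB x hx) ?_)⟩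
    rw [abs_of_nonneg (by positivity), div_le_one (by positivity)]
    have : (0 : ℝ) ≤ j := by positivity
    linarith
  obtain ⟨CH, hCH, harn⟩ := Sol.harnack (n := n)
  -- Harnack inequality on small balls.
  have hloc : ∀ x ∈ U, ∃ T > 0, ∃ C > 0, ∀ᶠ j in atTop, ∀ a ∈ Metric.closedBall x T,
      ∀ b ∈ Metric.closedBall x T, w j a ≤ C * w j b := by
    intro x hx
    obtain ⟨T, hT, hTU, hTK⟩ := hK x hx
    obtain ⟨B, hB⟩ := hWB x T
    set S := T / 4
    have hS : 0 < S := by positivity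
    refine ⟨S / 4, by positivity, CH * Real.exp (2 * B * S ^ 2), by positivity, ?_⟩
    filter_upwards [hTK] with j hj a ha b hb
    rw [Metric.mem_closedBall] at ha hb
    have hsub : Metric.closedBall a (3 * S) ⊆ Metric.closedBall x T :=
      Metric.closedBall_subset_closedBall' (by
        have : S = T / 4 := rfl
        linarith)
    refine harn (hw j) hS ?_ (hsub.trans hTU) (fun z hz => hFK j z (hj (hsub hz)))
      (fun z hz => hB j z (hsub hz))
    have := dist_triangle a x b
    rw [dist_comm x b] at this
    linarith
  -- Chaining over the connected set `U` gives the Harnack inequality between arbitrary points.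
  have hchain : ∀ {x y}, x ∈ U → y ∈ U → ∃ C > 0, ∀ᶠ j in atTop, w j x ≤ C * w j y := by
    intro x y hx hy
    refine hUp.induction₂' (fun x y => ∃ C > 0, ∀ᶠ j in atTop, w j x ≤ C * w j y) ?_ ?_ hx hy
    · intro x hx
      obtain ⟨T, hT, C, hC, h⟩ := hloc x hx
      refine mem_nhdsWithin_of_mem_nhds (Filter.mem_of_superset (Metric.closedBall_mem_nhds x hT) ?_)
      intro y hy
      have hxx : x ∈ Metric.closedBall x T := by simp [hT.le]
      exact ⟨⟨C, hC, h.mono fun j hj => hj x hxx y hy⟩, ⟨C, hC, h.mono fun j hj => hj y hy x hxx⟩⟩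
    · rintro x y z _ _ _ ⟨C, hC, h⟩ ⟨C', hC', h'⟩
      refine ⟨C * C', by positivity, ?_⟩
      filter_upwards [h, h'] with j h1 h2
      rw [mul_assoc]
      exact h1.trans (mul_le_mul_of_nonneg_left h2 hC.le)
  -- The sources eventually avoid `x₀`, so that the strong maximum principle applies there.
  have hw0 : ∀ᶠ j in atTop, 0 < w j x₀ := by
    obtain ⟨T, hT, hTU, hTK⟩ := hK x₀ hx₀
    filter_upwards [hTK] with j hj
    exact (hw j).pos hU hUp (TestFn.mono sdiff_subset (hF j)) (hF1 j) hT hTU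
      (fun z hz => hFK j z (hj hz))
  set v : ℕ → Eu n → ℝ := fun j x => (w j x₀)⁻¹ * w j x with hv
  have hvS : ∀ j : ℕ, Sol (fun x => V x + 1 / ((j : ℝ) + 1)) (fun x => (w j x₀)⁻¹ * F j x) (v j) U :=
    fun j => (hw j).smul (inv_nonneg.2 ((hw j).nonneg x₀))
  have hvbd : ∀ x ∈ U, ∃ C > 0, ∀ᶠ j in atTop, C⁻¹ ≤ v j x ∧ v j x ≤ C := by
    intro x hx
    obtain ⟨C, hC, h⟩ := hchain hx hx₀
    obtain ⟨C', hC', h'⟩ := hchain hx₀ hx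
    refine ⟨max C C', by positivity, ?_⟩
    filter_upwards [h, h', hw0] with j h1 h2 h3
    constructor
    · refine (inv_anti₀ hC' (le_max_right C C')).trans ?_
      rw [hv]
      simp only
      rw [inv_mul_eq_div, le_div_iff₀ h3, inv_mul_le_iff₀ hC']
      exact h2
    · refine le_trans ?_ (le_max_left C C')
      rw [hv]
      simp only
      rw [inv_mul_eq_div, div_le_iff₀ h3]
      exact h1
  -- Pointwise limits along an ultrafilter.
  let l : Ultrafilter ℕ := hyperfilter ℕ
  have hl : (l : Filter ℕ) ≤ atTop := Nat.hyperfilter_le_atTop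
  have hlim : ∀ x ∈ U, ∃ y, 0 < y ∧ Tendsto (fun j => v j x) l (𝓝 y) := by
    intro x hx
    obtain ⟨C, hC, h⟩ := hvbd x hx
    have h1 : ((l.map fun j => v j x : Ultrafilter ℝ) : Filter ℝ) ≤ 𝓟 (Icc C⁻¹ C) := by
      rw [le_principal_iff]
      exact hl h
    obtain ⟨y, hy, hy'⟩ := isCompact_Icc.ultrafilter_le_nhds _ h1
    exact ⟨y, (inv_pos.2 hC).trans_le hy.1, hy'⟩
  choose! v' hv'pos hv' using hlim
  -- Equicontinuity of the normalised solutions, first for `v j` and then for the limit as well.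
  have hequi : ∀ y ∈ U, ∀ ε > 0, ∃ δ > 0, Metric.ball y δ ⊆ U ∧
      ∀ᶠ j in atTop, ∀ z ∈ Metric.ball y δ, |v j z - v j y| ≤ ε := by
    intro y hy ε hε
    obtain ⟨T₁, hT₁, C, hC, h⟩ := hloc y hy
    obtain ⟨T₂, hT₂, hTU, hTK⟩ := hK y hy
    obtain ⟨A, hA, hA'⟩ := hvbd y hy
    set T := min T₁ T₂
    have hT : 0 < T := lt_min hT₁ hT₂
    obtain ⟨B, hB⟩ := hWB y T
    obtain ⟨δ, hδ, he⟩ := Sol.equicontinuous y hT (C * A) B hε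
    have hb1 : Metric.closedBall y T ⊆ Metric.closedBall y T₁ :=
      Metric.closedBall_subset_closedBall (min_le_left _ _)
    have hb2 : Metric.closedBall y T ⊆ Metric.closedBall y T₂ :=
      Metric.closedBall_subset_closedBall (min_le_right _ _)
    refine ⟨min δ T, lt_min hδ hT, ?_, ?_⟩
    · exact (Metric.ball_subset_ball (min_le_right _ _)).trans
        (Metric.ball_subset_closedBall.trans (hb2.trans hTU))
    filter_upwards [h, hTK, hA'] with j h1 h2 h3 z hz
    refine he (hvS j) (hb2.trans hTU) (fun x hx => by rw [hFK j x (h2 (hb2 hx)), mul_zero])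
      (hB j) ?_ z ((Metric.mem_ball.1 hz).trans_le (min_le_left _ _))
    intro x hx
    have h4 := h1 x (hb1 hx) y (by simp [hT₁.le])
    have h5 : v j x ≤ C * v j y := by
      rw [hv]
      simp only
      rw [mul_left_comm]
      exact mul_le_mul_of_nonneg_left h4 (inv_nonneg.2 ((hw j).nonneg x₀))
    exact h5.trans (mul_le_mul_of_nonneg_left h3.2 hC.le)
  have hequi' : ∀ y ∈ U, ∀ ε > 0, ∃ δ > 0, Metric.ball y δ ⊆ U ∧
      (∀ᶠ j in l, ∀ z ∈ Metric.ball y δ, |v j z - v j y| ≤ ε) ∧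
      ∀ z ∈ Metric.ball y δ, |v' z - v' y| ≤ ε := by
    intro y hy ε hε
    obtain ⟨δ, hδ, hδU, h⟩ := hequi y hy ε hε
    refine ⟨δ, hδ, hδU, hl h, fun z hz => ?_⟩
    refine le_of_tendsto ((hv' z (hδU hz)).sub (hv' y hy)).abs ?_
    filter_upwards [hl h] with j hj
    exact hj z hz
  have hcont : ContinuousOn v' U := by
    intro y hy
    refine ContinuousAt.continuousWithinAt ?_
    rw [Metric.continuousAt_iff]
    intro ε hε
    obtain ⟨δ, hδ, -, -, h⟩ := hequi' y hy (ε / 2) (by positivity)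
    refine ⟨δ, hδ, fun z hz => ?_⟩
    rw [Real.dist_eq]
    linarith [h z hz]
  have hlu : TendstoLocallyUniformlyOn v v' l U := by
    rw [Metric.tendstoLocallyUniformlyOn_iff]
    intro ε hε y hy
    obtain ⟨δ, hδ, hδU, h1, h2⟩ := hequi' y hy (ε / 4) (by positivity)
    refine ⟨Metric.ball y δ, mem_nhdsWithin_of_mem_nhds (Metric.ball_mem_nhds y hδ), ?_⟩
    filter_upwards [h1, (Metric.tendsto_nhds.1 (hv' y hy)) (ε / 4) (by positivity)] with j hj1 hj2 z hz
    rw [Real.dist_eq] at hj2 ⊢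
    have a1 := abs_le.1 (hj1 z hz)
    have a2 := abs_le.1 (h2 z hz)
    have a3 := abs_lt.1 hj2
    rw [abs_lt]
    constructor <;> linarith
  refine ⟨v', hv'pos, hcont, ?_⟩
  have huc : ∀ S ⊆ U, IsCompact S → TendstoUniformlyOn v v' l S := fun S hSU hS =>
    (tendstoLocallyUniformlyOn_iff_forall_isCompact hU).1 hlu S hSU hS
  intro φ hφ
  have hKφ : ∀ᶠ j in atTop, tsupport φ ⊆ K j := by
    refine IsCompact.induction_on (p := fun s => ∀ᶠ j in atTop, s ⊆ K j) hφ.2.1 (by simp)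
      (fun s t hst ht => ht.mono fun j hj => hst.trans hj)
      (fun s t hs ht => (hs.and ht).mono fun j hj => union_subset hj.1 hj.2) ?_
    intro x hx
    obtain ⟨T, hT, -, h⟩ := hK x (hφ.2.2 hx)
    exact ⟨_, mem_nhdsWithin_of_mem_nhds (Metric.closedBall_mem_nhds x hT), h⟩
  set ψ : Eu n → ℝ := fun x => V x * φ x - euclideanLaplacian φ x with hψ
  have hψc : Continuous ψ := (hV.mul hφ.1.continuous).sub (lap_mem hφ).1.continuous
  have hψs : HasCompactSupport ψ := (hφ.2.1.mul_left).sub (lap_mem hφ).2.1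
  have hlapS : ∀ x, x ∉ tsupport φ → euclideanLaplacian φ x = 0 := fun x hx =>
    image_eq_zero_of_notMem_tsupport fun h => hx
      ((lap_mem (U := tsupport φ) ⟨hφ.1, hφ.2.1, subset_rfl⟩).2.2 h)
  have hψU : tsupport ψ ⊆ U := by
    refine subset_trans (closure_minimal ?_ (isClosed_tsupport φ)) hφ.2.2
    intro x hx
    by_contra hx'
    exact hx (by simp only [hψ]; rw [image_eq_zero_of_notMem_tsupport hx', hlapS x hx']; simp)
  have hvl : ∀ j, LocallyIntegrable (v j) := fun j => (hvS j).loc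
  have t1 := tendsto_integral_mul hψc hψs hvl hψU hcont (huc _ hψU hψs)
  have t2 := tendsto_integral_mul hφ.1.continuous hφ.2.1 hvl hφ.2.2 hcont (huc _ hφ.2.2 hφ.2.1)
  have t3 := (tendsto_one_div_add_atTop_nhds_zero_nat (𝕜 := ℝ)).mono_left hl
  have t4 := t1.add (t3.mul t2)
  rw [zero_mul, add_zero] at t4
  -- Once the source has left the support of `φ`, the weak equation for `v j` is homogeneous.
  have t5 : ∀ᶠ j in (l : Filter ℕ), (0 : ℝ) = (∫ x, v j x * ψ x) + 1 / ((j : ℝ) + 1) * ∫ x, v j x * φ x := by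
    filter_upwards [hl hKφ] with j hj
    have h1 := (hvS j).weak φ hφ
    have h2 : ∫ x, (w j x₀)⁻¹ * F j x * φ x = 0 := by
      refine integral_eq_zero_of_ae (Eventually.of_forall fun x => ?_)
      show (w j x₀)⁻¹ * F j x * φ x = 0
      by_cases hx : x ∈ tsupport φ
      · rw [hFK j x (hj hx)]; simp
      · rw [image_eq_zero_of_notMem_tsupport hx, mul_zero]
    rw [h2] at h1
    rw [← h1, ← integral_const_mul, ← integral_add]
    · congr 1; ext x; simp only [hψ]; ring
    · have := (hvl j).integrable_smul_left_of_hasCompactSupport hψc hψs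
      simpa [mul_comm] using this
    · have := (hvl j).integrable_smul_left_of_hasCompactSupport hφ.1.continuous hφ.2.1
      simpa [mul_comm] using this.const_mul (1 / ((j : ℝ) + 1))
  have t6 := tendsto_nhds_unique (t4.congr' (t5.mono fun j hj => hj.symm)) tendsto_const_nhds
  simpa using t6

/-! ### Integral operators gaining one derivative -/

/-- Parametric integrals of `C^k` integrands against a fixed compactly supported, locally integrable
density are `C^k`: such an integral is the value at `0` of a convolution with parameters. -/
lemma contDiff_param {X P E1 E2 E3 : Type*} [NormedAddCommGroup X] [NormedSpace ℝ X]
    [FiniteDimensional ℝ X] [MeasurableSpace X] [BorelSpace X]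
    [NormedAddCommGroup P] [NormedSpace ℝ P] [NormedAddCommGroup E1] [NormedSpace ℝ E1]
    [NormedAddCommGroup E2] [NormedSpace ℝ E2] [NormedAddCommGroup E3] [NormedSpace ℝ E3]
    {μ : Measure X} (L : E1 →L[ℝ] E2 →L[ℝ] E3) {f : X → E1} (hf : LocallyIntegrable f μ)
    {S : Set X} (hS : IsCompact S) (hfS : ∀ x, x ∉ S → f x = 0) {k : ℕ∞} {h : P × X → E2}
    (hh : ContDiff ℝ k h) : ContDiff ℝ k (fun p => ∫ x, L (f x) (h (p, x)) ∂μ) := by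
  obtain ⟨χ, hχ, hχs, hχ1⟩ : ∃ χ : X → ℝ, ContDiff ℝ (⊤ : ℕ∞) χ ∧ HasCompactSupport χ ∧
      ∀ x ∈ S, χ x = 1 := by
    obtain ⟨R, hR⟩ := hS.isBounded.subset_closedBall (0 : X)
    let b : ContDiffBump (0 : X) := ⟨|R| + 1, |R| + 2, by positivity, by linarith⟩
    refine ⟨b, b.contDiff, b.hasCompactSupport, fun x hx => b.one_of_mem_closedBall ?_⟩
    exact Metric.closedBall_subset_closedBall (by linarith [le_abs_self R]) (hR hx)
  have key := contDiffOn_convolution_right_with_param (μ := μ) (f := f) (n := k) L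
    (g := fun p x => χ (-x) • h (p, -x)) (s := (univ : Set P)) (k := -(tsupport χ)) isOpen_univ
    (hχs.isCompact.neg) (fun p x _ hx => by
      have : χ (-x) = 0 := image_eq_zero_of_notMem_tsupport (by simpa using hx)
      simp [this]) hf (by
      apply ContDiff.contDiffOn
      have h1 : ContDiff ℝ k (fun q : P × X => χ (-q.2)) :=
        (hχ.of_le (by exact_mod_cast le_top)).comp (contDiff_snd.neg)
      have h2 : ContDiff ℝ k (fun q : P × X => h (q.1, -q.2)) :=
        hh.comp (contDiff_fst.prodMk contDiff_snd.neg)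
      exact h1.smul h2)
  rw [univ_prod_univ, contDiffOn_univ] at key
  have h2 : ContDiff ℝ k (fun p : P => (f ⋆[L, μ] (fun x => χ (-x) • h (p, -x))) 0) :=
    key.comp (contDiff_id.prodMk contDiff_const)
  refine (congrArg (ContDiff ℝ k) (funext fun p => ?_)).mp h2
  simp only [convolution_def]
  refine integral_congr_ae (Eventually.of_forall fun x => ?_)
  by_cases hx : x ∈ S
  · simp [hχ1 x hx]
  · simp [hfS x hx]

/-- The average of `g` over translates of `y` at scale `τ`, weighted by `θ`. -/
noncomputable def scaledConv (θ g : Eu n → ℝ) (τ : ℝ) (y : Eu n) : ℝ := ∫ z, θ z * g (y - τ • z)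

lemma contDiff_scaledConv {θ g : Eu n → ℝ} (hθ : Continuous θ) (hθs : HasCompactSupport θ) {k : ℕ∞}
    (hg : ContDiff ℝ k g) : ContDiff ℝ k (fun p : ℝ × Eu n => scaledConv θ g p.1 p.2) := by
  have := contDiff_param (ContinuousLinearMap.mul ℝ ℝ) (μ := volume) hθ.locallyIntegrable
    hθs.isCompact (fun x hx => image_eq_zero_of_notMem_tsupport hx) (k := k)
    (h := fun q : (ℝ × Eu n) × Eu n => g (q.1.2 - q.1.1 • q.2)) (hg.comp (by fun_prop))
  simpa [scaledConv] using this

/-- Convolution with a rescaled kernel, in a form which also makes sense at scale `0`. -/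
lemma integral_ker_mul (θ : ℝ → ℝ) (g : Eu n → ℝ) {t : ℝ} (ht : 0 < t) (y : Eu n) :
    ∫ x, ker θ t (y - x) * g x = scaledConv (fun z => ker θ 1 z) g t y := by
  have h1 := Measure.integral_comp_smul (volume : Measure (Eu n))
    (fun w => ker θ 1 (t⁻¹ • w) * g (y - w)) t
  have h2 := integral_sub_left_eq_self (fun w => ker θ 1 (t⁻¹ • w) * g (y - w))
    (volume : Measure (Eu n)) y
  have h3 : scaledConv (fun z => ker θ 1 z) g t y =
      ∫ x, (fun w => ker θ 1 (t⁻¹ • w) * g (y - w)) (t • x) := by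
    unfold scaledConv
    simp only [smul_smul, inv_mul_cancel₀ ht.ne', one_smul]
  rw [h3, h1, ← h2, ← integral_smul]
  refine integral_congr_ae (Eventually.of_forall fun x => ?_)
  simp only [smul_eq_mul, finrank_euclideanSpace, Fintype.card_fin, sub_sub_cancel]
  rw [ker_scale t, abs_of_pos (by positivity)]
  ring

/-- The average is written as a convolution in `τ⁻¹ y`, so that the derivative falls on `θ`. The price is
a factor `τ⁻¹`, which the weight `τ` in `gain` cancels. -/
lemma hasFDerivAt_scaledConv {θ g : Eu n → ℝ} (hθ : ContDiff ℝ (⊤ : ℕ∞) θ)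
    (hθs : HasCompactSupport θ) (hg : Continuous g) {τ : ℝ} (hτ : τ ≠ 0) (y : Eu n) :
    HasFDerivAt (scaledConv θ g τ) (τ⁻¹ • ∫ z, g (y - τ • z) • fderiv ℝ θ z) y := by
  have hgt : Continuous (fun w : Eu n => g (τ • w)) := hg.comp (by fun_prop)
  have h1 := hθs.hasFDerivAt_convolution_left (ContinuousLinearMap.mul ℝ ℝ) (μ := volume)
    (hθ.of_le (by exact_mod_cast le_top)) hgt.locallyIntegrable (τ⁻¹ • y)
  have h2 : HasFDerivAt (fun y : Eu n => τ⁻¹ • y) (τ⁻¹ • ContinuousLinearMap.id ℝ (Eu n)) y :=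
    (hasFDerivAt_id y).const_smul τ⁻¹
  have h3 := h1.comp y h2
  have e1 : scaledConv θ g τ = (θ ⋆[ContinuousLinearMap.mul ℝ ℝ, volume]
      (fun w : Eu n => g (τ • w))) ∘ (fun y : Eu n => τ⁻¹ • y) := by
    funext y
    simp only [scaledConv, Function.comp, convolution_def, ContinuousLinearMap.mul_apply', smul_sub,
      smul_smul, mul_inv_cancel₀ hτ, one_smul]
  rw [e1]
  refine (congrArg (fun A => HasFDerivAt _ A y) ?_).mp h3
  rw [ContinuousLinearMap.comp_smul, ContinuousLinearMap.comp_id, convolution_def]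
  congr 1
  refine integral_congr_ae (Eventually.of_forall fun z => ?_)
  ext v
  simp [ContinuousLinearMap.precompL_apply, smul_sub, smul_smul, mul_inv_cancel₀ hτ, mul_comm]

/-- The operator which gains one derivative: integrating the scaled averages against `τ dτ`. -/
noncomputable def gain (θ g : Eu n → ℝ) (r : ℝ) (y : Eu n) : ℝ :=
  ∫ τ in Ioc 0 r, τ * scaledConv θ g τ y

/-- The gain of one derivative: the first derivative is again an integral of averages of `g`, with `θ`
replaced by its derivative. -/
lemma contDiff_gain {θ g : Eu n → ℝ} (hθ : ContDiff ℝ (⊤ : ℕ∞) θ)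
    (hθs : HasCompactSupport θ) {k : ℕ} (hg : ContDiff ℝ k g) (r : ℝ) :
    ContDiff ℝ (k + 1 : ℕ) (gain θ g r) := by
  set D : ℝ × Eu n → (Eu n →L[ℝ] ℝ) := fun p => ∫ z, g (p.2 - p.1 • z) • fderiv ℝ θ z with hD
  have hDk : ContDiff ℝ k D := by
    have hθ' : Continuous (fderiv ℝ θ) := hθ.continuous_fderiv (by simp)
    have := contDiff_param (ContinuousLinearMap.lsmul ℝ ℝ).flip (μ := volume)
      hθ'.locallyIntegrable
      (hθs.fderiv ℝ).isCompact (fun x hx => image_eq_zero_of_notMem_tsupport hx) (k := k)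
      (h := fun q : (ℝ × Eu n) × Eu n => g (q.1.2 - q.1.1 • q.2))
      (ContDiff.comp (g := g) (by exact_mod_cast hg) (by fun_prop))
    simpa [hD] using this
  have hcB : Continuous (fun p : ℝ × Eu n => scaledConv θ g p.1 p.2) :=
    (contDiff_scaledConv hθ.continuous hθs (k := 0)
      (contDiff_zero.2 hg.continuous)).continuous
  -- Differentiation under the integral; the factors `τ` and `τ⁻¹` cancel.
  have hder : ∀ y, HasFDerivAt (gain θ g r) (∫ τ in Ioc 0 r, D (τ, y)) y := by
    intro y0
    have hK : IsCompact ((Icc 0 r) ×ˢ (Metric.closedBall y0 1)) :=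
      isCompact_Icc.prod (isCompact_closedBall _ _)
    obtain ⟨C, hC⟩ := hK.exists_bound_of_continuousOn hDk.continuous.continuousOn
    refine hasFDerivAt_integral_of_dominated_of_fderiv_le (bound := fun _ => C)
      (F' := fun y τ => D (τ, y)) (Metric.closedBall_mem_nhds y0 one_pos) ?_ ?_ ?_ ?_ ?_ ?_
    · refine Eventually.of_forall fun y => Continuous.aestronglyMeasurable ?_
      exact continuous_id.mul (hcB.comp (by fun_prop : Continuous fun τ : ℝ => (τ, y)))
    · have : Continuous fun τ : ℝ => τ * scaledConv θ g τ y0 :=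
        continuous_id.mul (hcB.comp (by fun_prop : Continuous fun τ : ℝ => (τ, y0)))
      exact (this.integrableOn_Icc (a := 0) (b := r)).mono_set Ioc_subset_Icc_self
    · exact (hDk.continuous.comp (by fun_prop : Continuous fun τ : ℝ => (τ, y0))).aestronglyMeasurable
    · refine (ae_restrict_iff' measurableSet_Ioc).2 (Eventually.of_forall fun τ hτ y hy => ?_)
      exact hC (τ, y) ⟨Ioc_subset_Icc_self hτ, hy⟩
    · exact integrableOn_const (by simp)
    · refine (ae_restrict_iff' measurableSet_Ioc).2 (Eventually.of_forall fun τ hτ y hy => ?_)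
      have := (hasFDerivAt_scaledConv hθ hθs hg.continuous hτ.1.ne' y).const_mul τ
      rwa [smul_smul, mul_inv_cancel₀ hτ.1.ne', one_smul] at this
  have hk : ContDiff ℝ k (fun y => ∫ τ in Ioc 0 r, D (τ, y)) := by
    have hi : LocallyIntegrable ((Ioc 0 r).indicator (fun _ : ℝ => (1 : ℝ))) :=
      (continuous_const.locallyIntegrable).indicator measurableSet_Ioc
    have := contDiff_param (ContinuousLinearMap.lsmul ℝ ℝ) (μ := volume) hi
      (isCompact_Icc (a := (0 : ℝ)) (b := r))
      (fun x hx => indicator_of_notMem (fun h => hx (Ioc_subset_Icc_self h)) _) (k := k)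
      (h := fun q : Eu n × ℝ => D (q.2, q.1))
      (ContDiff.comp (g := D) (by exact_mod_cast hDk) (contDiff_snd.prodMk contDiff_fst))
    refine (congrArg (ContDiff ℝ k) (funext fun y => ?_)).mp (by exact_mod_cast this)
    rw [← integral_indicator measurableSet_Ioc]
    refine integral_congr_ae (Eventually.of_forall fun τ => ?_)
    by_cases h : τ ∈ Ioc 0 r <;> simp [h]
  have : (((k + 1 : ℕ) : ℕ∞) : WithTop ℕ∞) = (k : WithTop ℕ∞) + 1 := by norm_cast
  push_cast
  refine (contDiff_succ_iff_hasFDerivAt (n := k)).2 ⟨_, ?_, hder⟩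
  exact hk

/-! ### Interior regularity -/

/-- The representation formula behind the regularity theory: a continuous weak solution differs
from its smooth mean only by `gain` of `W u`. It is the integral over `0 < t ≤ r` of the formula for
the derivative of the means. -/
lemma mean_sub_eq_gain {W u : Eu n → ℝ} {U : Set (Eu n)} (hW : Continuous W) (hu : Continuous u)
    (hs : IsWeakSol W (fun _ => 0) u U) {r : ℝ} (hr : 0 < r) {y : Eu n}
    (hy : Metric.closedBall y r ⊆ U) :
    (mean u r y) - kap n * u y =
      gain (fun z => etaK 1 z) (fun x => W x * u x) r y := by
  have hrc : Continuous (fun z : Eu n => rhoK 1 z) := (contDiff_ker contDiff_r1 1).continuous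
  have hec : Continuous (fun z : Eu n => etaK 1 z) := (contDiff_ker contDiff_e 1).continuous
  have hrs : HasCompactSupport (fun z : Eu n => rhoK 1 z) :=
    hasCompactSupport_ker r1_of_nonpos one_pos
  have hes : HasCompactSupport (fun z : Eu n => etaK 1 z) :=
    hasCompactSupport_ker e_of_nonpos one_pos
  have hB1 : Continuous (fun t : ℝ => scaledConv (fun z => rhoK 1 z) u t y) :=
    ((contDiff_scaledConv hrc hrs (k := 0) (contDiff_zero.2 hu)).continuous).comp
      (by fun_prop : Continuous fun t : ℝ => (t, y))
  have hB2 : Continuous (fun t : ℝ => t * scaledConv (fun z => etaK 1 z) (fun x => W x * u x) t y) :=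
    continuous_id.mul
    (((contDiff_scaledConv hec hes (k := 0) (contDiff_zero.2 (hW.mul hu))).continuous).comp
      (by fun_prop : Continuous fun t : ℝ => (t, y)))
  have hm : ∀ t : ℝ, 0 < t → mean u t y = scaledConv (fun z => rhoK 1 z) u t y := fun t ht =>
    integral_ker_mul r1 u ht y
  have h0 : scaledConv (fun z => rhoK 1 z) u 0 y = kap n * u y := by
    simp [scaledConv, kap, integral_mul_const]
  have key := intervalIntegral.integral_eq_sub_of_hasDerivAt_of_tendsto hr
    (f := fun t => mean u t y)
    (f' := fun t => t * scaledConv (fun z => etaK 1 z) (fun x => W x * u x) t y)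
    (fa := kap n * u y) (fb := mean u r y) ?_ (hB2.intervalIntegrable _ _) ?_ ?_
  · rw [← key, intervalIntegral.integral_of_le hr.le, gain]
  · intro t ht
    have h1 := (hasDerivAt_mean hu.locallyIntegrable ht.1 y).2
    rw [deriv_mean_eq hW hu.locallyIntegrable hs ht.1
      ((Metric.closedBall_subset_closedBall ht.2.le).trans hy)] at h1
    rw [← integral_ker_mul expNegInvGlue (fun x => W x * u x) ht.1 y]
    simpa using h1
  · rw [← h0]
    refine ((hB1.tendsto 0).mono_left nhdsWithin_le_nhds).congr' ?_
    filter_upwards [self_mem_nhdsWithin] with t ht using (hm t ht).symm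
  · rw [hm r hr]
    refine ((hB1.tendsto r).mono_left nhdsWithin_le_nhds).congr' ?_
    filter_upwards [Ioo_mem_nhdsLT hr] with t ht using (hm t ht.1).symm

/-- Means at a fixed scale are smooth, all derivatives falling on the kernel. -/
lemma contDiff_mean {u : Eu n → ℝ} (hu : Continuous u) (hus : HasCompactSupport u) (r : ℝ)
    (k : ℕ) : ContDiff ℝ k (mean u r) := by
  have := contDiff_param (ContinuousLinearMap.mul ℝ ℝ).flip (μ := volume) hu.locallyIntegrable
    hus.isCompact (fun x hx => image_eq_zero_of_notMem_tsupport hx) (k := k)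
    (h := fun q : Eu n × Eu n => rhoK r (q.1 - q.2))
    (((contDiff_ker contDiff_r1 r).of_le (by exact_mod_cast le_top)).comp
      (contDiff_fst.sub contDiff_snd))
  refine (congrArg (ContDiff ℝ k) (funext fun y => ?_)).mp this
  simp [mean, mul_comm]

/-- A smooth cutoff near `x₀` subordinate to the open set `U`. -/
lemma exists_cutoff {U : Set (Eu n)} (hU : IsOpen U) {x₀ : Eu n} (hx : x₀ ∈ U) :
    ∃ r > 0, ∃ b : Eu n → ℝ, b ∈ TestFn U ∧ Metric.closedBall x₀ (2 * r) ⊆ U ∧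
      ∀ x ∈ Metric.closedBall x₀ (2 * r), b x = 1 := by
  obtain ⟨ε, hε, hεU⟩ := Metric.nhds_basis_closedBall.mem_iff.1 (hU.mem_nhds hx)
  let b : ContDiffBump x₀ := ⟨ε / 2, ε, by positivity, by linarith⟩
  refine ⟨ε / 4, by positivity, b, ⟨b.contDiff, b.hasCompactSupport, ?_⟩, ?_, fun x hx => ?_⟩
  · rw [b.tsupport_eq]; exact hεU
  · exact (Metric.closedBall_subset_closedBall (by linarith)).trans hεU
  · refine b.one_of_mem_closedBall ?_
    have : b.rIn = ε / 2 := rfl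
    rw [this]
    exact Metric.closedBall_subset_closedBall (by linarith) hx

lemma contDiff_cutoff_mul {U : Set (Eu n)} {b v : Eu n → ℝ} (hb : b ∈ TestFn U) {k : ℕ∞}
    (hv : ∀ x ∈ U, ContDiffAt ℝ k v x) : ContDiff ℝ k (fun x => b x * v x) := by
  rw [contDiff_iff_contDiffAt]
  intro x
  by_cases hx : x ∈ tsupport b
  · exact ((hb.1.of_le (by exact_mod_cast le_top)).contDiffAt).mul (hv x (hb.2.2 hx))
  · have h0 : (fun x => b x * v x) =ᶠ[𝓝 x] fun _ => 0 := by
      filter_upwards [(notMem_tsupport_iff_eventuallyEq).1 hx] with z hz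
      simp [hz]
    exact contDiffAt_const.congr_of_eventuallyEq h0

lemma isWeakSol_cutoff_mul {W b v : Eu n → ℝ} {U B : Set (Eu n)}
    (hs : IsWeakSol W (fun _ => 0) v U) (hB : B ⊆ U) (hb : ∀ x ∈ B, b x = 1) :
    IsWeakSol W (fun _ => 0) (fun x => b x * v x) B := by
  intro φ hφ
  rw [← hs φ (TestFn.mono hB hφ)]
  refine integral_congr_ae (Eventually.of_forall fun x => ?_)
  by_cases hx : x ∈ B
  · simp [hb x hx]
  · have h1 : φ x = 0 := image_eq_zero_of_notMem_tsupport fun h => hx (hφ.2.2 h)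
    have h2 : euclideanLaplacian φ x = 0 :=
      image_eq_zero_of_notMem_tsupport fun h => hx ((lap_mem hφ).2.2 h)
    simp [h1, h2]

/-- Elliptic regularity, by bootstrapping in the representation formula `mean_sub_eq_gain` applied to
a cut off solution. -/
lemma contDiffAt_weakSol {V v : Eu n → ℝ} {U : Set (Eu n)} (hV : ContDiff ℝ (⊤ : ℕ∞) V)
    (hU : IsOpen U) (hv : ContinuousOn v U) (hs : IsWeakSol V (fun _ => 0) v U) :
    ∀ x ∈ U, ContDiffAt ℝ (⊤ : ℕ∞) v x := by
  have main : ∀ k : ℕ, ∀ x ∈ U, ContDiffAt ℝ k v x := by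
    intro k
    induction k with
    | zero =>
      intro x hx
      exact (contDiffOn_zero.2 hv).contDiffAt (hU.mem_nhds hx)
    | succ k ih =>
      intro x₀ hx₀
      obtain ⟨r, hr, b, hb, hrU, hb1⟩ := exists_cutoff hU hx₀
      have hsm : ContDiff ℝ k (fun x => b x * v x) := contDiff_cutoff_mul hb ih
      have hcs : HasCompactSupport (fun x => b x * v x) := hb.2.1.mul_right
      have hVv : ContDiff ℝ k (fun x => V x * (b x * v x)) :=
        (hV.of_le (by exact_mod_cast le_top)).mul hsm
      have hg := contDiff_gain (contDiff_ker (n := n) contDiff_e 1)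
        (hasCompactSupport_ker e_of_nonpos one_pos) hVv r
      have hR : ContDiff ℝ (k + 1 : ℕ) (fun y => (kap n)⁻¹ * ((mean (fun x => b x * v x) r y) -
          gain (fun z => etaK 1 z) (fun x => V x * (b x * v x)) r y)) :=
        contDiff_const.mul ((contDiff_mean hsm.continuous hcs r (k + 1)).sub hg)
      refine hR.contDiffAt.congr_of_eventuallyEq ?_
      filter_upwards [Metric.closedBall_mem_nhds x₀ hr] with y hy
      have := mean_sub_eq_gain hV.continuous hsm.continuous
        (isWeakSol_cutoff_mul hs hrU hb1) hr (y := y)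
        (Metric.closedBall_subset_closedBall' (by rw [Metric.mem_closedBall] at hy; linarith))
      rw [← this, sub_sub_cancel, hb1 y (Metric.closedBall_subset_closedBall (by linarith) hy),
        one_mul, inv_mul_cancel_left₀ kap_pos.ne']
  intro x hx
  exact contDiffAt_infty.2 fun k => main k x hx

lemma lap_congr {f g : Eu n → ℝ} {x : Eu n} (h : f =ᶠ[𝓝 x] g) :
    euclideanLaplacian f x = euclideanLaplacian g x := by
  unfold euclideanLaplacian
  refine Finset.sum_congr rfl fun i _ => ?_
  have : (fun y => fderiv ℝ f y (EuclideanSpace.single i 1)) =ᶠ[𝓝 x]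
      fun y => fderiv ℝ g y (EuclideanSpace.single i 1) := by
    filter_upwards [h.fderiv (𝕜 := ℝ)] with y hy
    rw [hy]
  rw [this.fderiv_eq]

lemma continuous_lap {f : Eu n → ℝ} (hf : ContDiff ℝ (⊤ : ℕ∞) f) :
    Continuous (euclideanLaplacian f) :=
  continuous_finsetSum _ fun i _ => (contDiff_pd (contDiff_pd hf i) i).continuous

/-- A weak solution is a classical one. -/
lemma lap_eq_of_isWeakSol {V v : Eu n → ℝ} {U : Set (Eu n)} (hV : ContDiff ℝ (⊤ : ℕ∞) V)
    (hU : IsOpen U) (hv : ContinuousOn v U) (hs : IsWeakSol V (fun _ => 0) v U) :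
    ∀ x ∈ U, euclideanLaplacian v x = V x * v x := by
  intro x₀ hx₀
  obtain ⟨r, hr, b, hb, hrU, hb1⟩ := exists_cutoff hU hx₀
  have hsm : ContDiff ℝ (⊤ : ℕ∞) (fun x => b x * v x) :=
    contDiff_cutoff_mul hb (contDiffAt_weakSol hV hU hv hs)
  have hw := isWeakSol_cutoff_mul hs hrU hb1
  set w : Eu n → ℝ := fun x => b x * v x with hwdef
  have hc : Continuous (fun x => V x * w x - euclideanLaplacian w x) :=
    (hV.continuous.mul hsm.continuous).sub (continuous_lap hsm)
  have hae := Metric.isOpen_ball.ae_eq_zero_of_integral_contDiff_smul_eq_zero (μ := volume)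
    (U := Metric.ball x₀ (2 * r)) (hc.locallyIntegrable.locallyIntegrableOn _) ?_
  · have h0 : EqOn (fun x => V x * w x - euclideanLaplacian w x) (fun _ => 0)
        (Metric.ball x₀ (2 * r)) :=
      Measure.eqOn_open_of_ae_eq (μ := volume)
        ((ae_restrict_iff' Metric.isOpen_ball.measurableSet).2 hae) Metric.isOpen_ball
        hc.continuousOn continuousOn_const
    have h1 := h0 (Metric.mem_ball_self (by positivity))
    have h2 : w =ᶠ[𝓝 x₀] v := by
      filter_upwards [Metric.closedBall_mem_nhds x₀ (by positivity : 0 < 2 * r)] with y hy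
      simp [hwdef, hb1 y hy]
    simp only [lap_congr h2, h2.eq_of_nhds] at h1
    linarith
  · intro φ hφ hφs hφB
    have h1 := hw φ ⟨hφ, hφs, hφB.trans Metric.ball_subset_closedBall⟩
    have h2 := integral_mul_lap hsm hφ hφs
    have i1 : Integrable (fun x => w x * (V x * φ x)) :=
      (hsm.continuous.mul (hV.continuous.mul hφ.continuous)).integrable_of_hasCompactSupport
        (hφs.mul_left.mul_left)
    have i2 : Integrable (fun x => w x * euclideanLaplacian φ x) :=
      (hsm.continuous.mul (continuous_lap hφ)).integrable_of_hasCompactSupport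
        ((lap_mem (U := univ) ⟨hφ, hφs, subset_univ _⟩).2.1.mul_left)
    have i3 : Integrable (fun x => euclideanLaplacian w x * φ x) :=
      ((continuous_lap hsm).mul hφ.continuous).integrable_of_hasCompactSupport hφs.mul_left
    simp only [mul_sub, zero_mul, integral_zero] at h1
    rw [integral_sub i1 i2, h2, ← integral_sub i1 i3] at h1
    rw [← h1]
    refine integral_congr_ae (Eventually.of_forall fun x => ?_)
    simp only [smul_eq_mul]
    ring

/-! ### Positive solutions outside a ball -/

/-- Positivity of the form on an open set with nonempty complement yields a smooth positive
solution there, by treating the connected components one at a time. -/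
lemma exists_pos_solution {V : Eu n → ℝ} (hV : ContDiff ℝ (⊤ : ℕ∞) V) {Ω : Set (Eu n)}
    (hΩ : IsOpen Ω) (hΩc : Ωᶜ.Nonempty) (hpos : ∀ f ∈ TestFn Ω, 0 ≤ qf V f f) :
    ∃ ψ : Eu n → ℝ, ∀ x ∈ Ω, 0 < ψ x ∧ ContDiffAt ℝ (⊤ : ℕ∞) ψ x ∧
      euclideanLaplacian ψ x = V x * ψ x := by
  have h1 : ∀ C : Set (Eu n), ∃ v : Eu n → ℝ, (∃ x ∈ Ω, C = connectedComponentIn Ω x) →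
      ∀ x ∈ C, 0 < v x ∧ ContDiffAt ℝ (⊤ : ℕ∞) v x ∧ euclideanLaplacian v x = V x * v x := by
    intro C
    by_cases hC : ∃ x ∈ Ω, C = connectedComponentIn Ω x
    · obtain ⟨x, hx, rfl⟩ := hC
      have hsub := connectedComponentIn_subset Ω x
      have hop : IsOpen (connectedComponentIn Ω x) := hΩ.connectedComponentIn
      obtain ⟨v, hv0, hvc, hvs⟩ := exists_pos_weakSol hV.continuous hop
        isPreconnected_connectedComponentIn ⟨x, mem_connectedComponentIn hx⟩
        (hΩc.mono (compl_subset_compl.2 hsub)) (fun f hf => hpos f (TestFn.mono hsub hf))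
      exact ⟨v, fun _ y hy => ⟨hv0 y hy, contDiffAt_weakSol hV hop hvc hvs y hy,
        lap_eq_of_isWeakSol hV hop hvc hvs y hy⟩⟩
    · exact ⟨0, fun h => absurd h hC⟩
  choose v hv using h1
  refine ⟨fun x => v (connectedComponentIn Ω x) x, fun x hx => ?_⟩
  have h2 := hv (connectedComponentIn Ω x) ⟨x, hx, rfl⟩ x (mem_connectedComponentIn hx)
  have h3 : (fun x => v (connectedComponentIn Ω x) x) =ᶠ[𝓝 x] v (connectedComponentIn Ω x) := by
    filter_upwards [hΩ.connectedComponentIn.mem_nhds (mem_connectedComponentIn hx)] with y hy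
    rw [connectedComponentIn_eq hy]
  exact ⟨h2.1, h2.2.1.congr_of_eventuallyEq h3, by rw [lap_congr h3]; exact h2.2.2⟩

/-- A positive solution outside a ball can be modified inside to be globally smooth and positive. -/
lemma exists_extension {V ψ : Eu n → ℝ} {R : ℝ} (hR : 0 ≤ R)
    (hψ : ∀ x : Eu n, R < ‖x‖ → 0 < ψ x ∧ ContDiffAt ℝ (⊤ : ℕ∞) ψ x ∧
      euclideanLaplacian ψ x = V x * ψ x) :
    ∃ φ : Eu n → ℝ, ContDiff ℝ (⊤ : ℕ∞) φ ∧ (∀ x, 0 < φ x) ∧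
      ∀ x ∉ Metric.closedBall (0 : Eu n) (R + 2), euclideanLaplacian φ x = V x * φ x := by
  let b : ContDiffBump (0 : Eu n) := ⟨R + 1, R + 2, by linarith, by linarith⟩
  refine ⟨fun x => b x + (1 - b x) * ψ x, ?_, fun x => ?_, fun x hx => ?_⟩
  · rw [contDiff_iff_contDiffAt]
    intro x
    rcases lt_or_ge R ‖x‖ with h | h
    · exact b.contDiff.contDiffAt.add ((contDiffAt_const.sub b.contDiff.contDiffAt).mul (hψ x h).2.1)
    · have h0 : (fun x => b x + (1 - b x) * ψ x) =ᶠ[𝓝 x] fun _ => 1 := by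
        have hx : x ∈ Metric.ball (0 : Eu n) (R + 1) := by
          rw [mem_ball_zero_iff]; linarith
        filter_upwards [Metric.isOpen_ball.mem_nhds hx] with y hy
        simp [b.one_of_mem_closedBall (Metric.ball_subset_closedBall hy)]
      exact contDiffAt_const.congr_of_eventuallyEq h0
  · rcases lt_or_ge R ‖x‖ with h | h
    · have h1 := (hψ x h).1
      rcases (b.nonneg (x := x)).eq_or_lt with h0 | h0
      · simpa [← h0] using h1
      · have := mul_nonneg (sub_nonneg.2 (b.le_one (x := x))) h1.le
        linarith
    · have hx : x ∈ Metric.closedBall (0 : Eu n) (R + 1) := by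
        rw [mem_closedBall_zero_iff]; linarith
      simp [b.one_of_mem_closedBall hx]
  · have h0 : (fun x => b x + (1 - b x) * ψ x) =ᶠ[𝓝 x] ψ := by
      filter_upwards [Metric.isClosed_closedBall.isOpen_compl.mem_nhds hx] with y hy
      have : b y = 0 := b.zero_of_le_dist (by
        simp only [mem_compl_iff, Metric.mem_closedBall, not_le] at hy; exact hy.le)
      simp [this]
    have h1 : b x + (1 - b x) * ψ x = ψ x := h0.eq_of_nhds
    rw [lap_congr h0]
    simp only [h1]
    refine (hψ x ?_).2.2
    rw [mem_closedBall_zero_iff] at hx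
    linarith

end FiniteMorse

theorem stmt_1 (n : ℕ) (hn : 1 ≤ n) (V : EuclideanSpace ℝ (Fin n) → ℝ)
    (hV : ContDiff ℝ (⊤ : ℕ∞) V)
    (c : ℝ) (hc : 0 ≤ c)
    (hbound : ∀ f : EuclideanSpace ℝ (Fin n) → ℝ, ContDiff ℝ (⊤ : ℕ∞) f → HasCompactSupport f →
      -c * ∫ x, f x ^ 2 ≤ ∫ x, (‖gradient f x‖ ^ 2 + V x * f x ^ 2))
    (N : ℕ)
    (hMorse : ∀ F : Submodule ℝ (EuclideanSpace ℝ (Fin n) → ℝ),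
      (∀ f ∈ F, ContDiff ℝ (⊤ : ℕ∞) f ∧ HasCompactSupport f) →
      (∀ f ∈ F, f ≠ 0 → (∫ x, (‖gradient f x‖ ^ 2 + V x * f x ^ 2)) < 0) →
      Module.rank ℝ F ≤ N) :
    ∃ (K : Set (EuclideanSpace ℝ (Fin n))) (φ : EuclideanSpace ℝ (Fin n) → ℝ),
      IsCompact K ∧ ContDiff ℝ (⊤ : ℕ∞) φ ∧ (∀ x, 0 < φ x) ∧
      ∀ x ∉ K, euclideanLaplacian φ x = V x * φ x := by
  obtain ⟨R, hR, hpos⟩ := FiniteMorse.nonneg_outside_ball V hV.continuous N hMorse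
  obtain ⟨ψ, hψ⟩ := FiniteMorse.exists_pos_solution hV (Ω := {x | R < ‖x‖})
    (isOpen_lt continuous_const continuous_norm) ⟨0, by simpa using hR⟩ hpos
  obtain ⟨φ, h1, h2, h3⟩ := FiniteMorse.exists_extension hR hψ
  exact ⟨Metric.closedBall 0 (R + 2), φ, isCompact_closedBall _ _, h1, h2, h3⟩
end

section
/- Let n ≥ 1, let Ω ⊆ ℝⁿ be open, let V : Ω → ℝ be a locally bounded measurable function, and let φ : Ω → ℝ be a C² function with φ(x) > 0 for all x ∈ Ω such that Δφ(x) ≤ V(x)·φ(x) for all x ∈ Ω (i.e., in the geometer's convention, φ is a positive supersolution: (−Δ + V)φ ≥ 0 on Ω). Then the quadratic form of −Δ + V is nonnegative on Ω: for every f ∈ C_c^∞(Ω), ∫_Ω (‖∇f‖² + V·f²) ≥ 0. -/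
/-!
The proof tests the supersolution inequality against `f² / φ`. The vector field
`X = (f² / φ) ∇φ`, extended by zero, is `C¹` with compact support, so `∫ div X = 0`. On `Ω`,
`div X = 2 f ⟨∇f, ∇φ⟩ / φ - f² ‖∇φ‖² / φ² + f² Δφ / φ`,
and completing the square gives
`‖∇f‖² + V f² - div X = ‖∇f - (f / φ) ∇φ‖² + (f² / φ) (V φ - Δφ) ≥ 0`.
Integrating this pointwise bound proves the claim.
-/

open MeasureTheory

/-- Divergence theorem, one direction at a time, for compactly supported `C¹` functions. -/
lemma integral_fderiv_apply_eq_zero {n : ℕ} {g : EuclideanSpace ℝ (Fin n) → ℝ}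
    (hg : ContDiff ℝ 1 g) (hc : HasCompactSupport g) (v : EuclideanSpace ℝ (Fin n)) :
    Integrable (fun x => fderiv ℝ g x v) ∧ ∫ x, fderiv ℝ g x v = 0 := by
  have hI : Integrable (fun x => fderiv ℝ g x v) :=
    ((hg.continuous_fderiv one_ne_zero).clm_apply continuous_const).integrable_of_hasCompactSupport
      (hc.fderiv_apply ℝ v)
  have hJ : Integrable g := hg.continuous.integrable_of_hasCompactSupport hc
  refine ⟨hI, ?_⟩
  have h := integral_mul_fderiv_eq_neg_fderiv_mul_of_integrable (𝕜 := ℝ)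
    (μ := (volume : Measure (EuclideanSpace ℝ (Fin n))))
    (f := fun _ => (1 : ℝ)) (g := g) (v := v)
    (by simp) (by simpa using hI) (by simpa using hJ)
    (fun _ _ => differentiableAt_const _) (fun _ _ => hg.differentiable one_ne_zero _)
  simpa using h

lemma norm_gradient_sq {n : ℕ} (f : EuclideanSpace ℝ (Fin n) → ℝ)
    (x : EuclideanSpace ℝ (Fin n)) :
    ‖gradient f x‖ ^ 2 = ∑ i, (fderiv ℝ f x (EuclideanSpace.single i 1)) ^ 2 := by
  rw [EuclideanSpace.real_norm_sq_eq]
  refine Finset.sum_congr rfl fun i _ => ?_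
  have h : inner ℝ (gradient f x) (EuclideanSpace.single i (1 : ℝ)) =
      fderiv ℝ f x (EuclideanSpace.single i 1) := by
    rw [gradient, InnerProductSpace.toDual_symm_apply]
  rw [← h, EuclideanSpace.inner_single_right]
  simp

/-- The `v`-component of the field `(f² / φ) ∇φ`. -/
noncomputable def fieldComponent {n : ℕ} (f φ : EuclideanSpace ℝ (Fin n) → ℝ)
    (v : EuclideanSpace ℝ (Fin n)) (x : EuclideanSpace ℝ (Fin n)) : ℝ :=
  f x ^ 2 * ((φ x)⁻¹ * fderiv ℝ φ x v)

/-- Although `φ` is only controlled on `Ω`, the field is `C¹` on the whole space, because it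
vanishes identically near every point outside `tsupport f ⊆ Ω`. -/
lemma contDiff_fieldComponent {n : ℕ} {Ω : Set (EuclideanSpace ℝ (Fin n))} (hΩ : IsOpen Ω)
    {f φ : EuclideanSpace ℝ (Fin n) → ℝ} (hφ : ContDiffOn ℝ 2 φ Ω) (hφpos : ∀ x ∈ Ω, 0 < φ x)
    (hf : ContDiff ℝ 1 f) (hfΩ : tsupport f ⊆ Ω) (v : EuclideanSpace ℝ (Fin n)) :
    ContDiff ℝ 1 (fieldComponent f φ v) := by
  refine contDiff_iff_contDiffAt.2 fun x => ?_
  by_cases hx : x ∈ tsupport f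
  · have hxΩ := hfΩ hx
    have hφx : ContDiffAt ℝ 2 φ x := hφ.contDiffAt (hΩ.mem_nhds hxΩ)
    have h1 : ContDiffAt ℝ 1 φ x := hφx.of_le (by norm_num)
    have h2 : ContDiffAt ℝ 1 (fderiv ℝ φ) x := hφx.fderiv_right (by norm_num)
    exact (hf.contDiffAt.pow 2).mul
      ((h1.inv (hφpos x hxΩ).ne').mul (h2.clm_apply contDiffAt_const))
  · refine (contDiffAt_const (c := (0 : ℝ))).congr_of_eventuallyEq ?_
    filter_upwards [notMem_tsupport_iff_eventuallyEq.1 hx] with y hy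
    simp [fieldComponent, hy]

lemma hasCompactSupport_fieldComponent {n : ℕ} {f : EuclideanSpace ℝ (Fin n) → ℝ}
    (hc : HasCompactSupport f) (φ : EuclideanSpace ℝ (Fin n) → ℝ)
    (v : EuclideanSpace ℝ (Fin n)) : HasCompactSupport (fieldComponent f φ v) := by
  refine hc.mono fun x hx h => hx ?_
  simp [fieldComponent, h]

lemma fderiv_fieldComponent {n : ℕ} {f φ : EuclideanSpace ℝ (Fin n) → ℝ}
    {x : EuclideanSpace ℝ (Fin n)} (hφ : ContDiffAt ℝ 2 φ x) (hφpos : 0 < φ x)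
    (hf : DifferentiableAt ℝ f x) (v : EuclideanSpace ℝ (Fin n)) :
    fderiv ℝ (fieldComponent f φ v) x v =
      2 * f x * fderiv ℝ f x v * (fderiv ℝ φ x v / φ x) - (f x * (fderiv ℝ φ x v / φ x)) ^ 2 +
        f x ^ 2 / φ x * fderiv ℝ (fun y => fderiv ℝ φ y v) x v := by
  have h1 : HasFDerivAt φ (fderiv ℝ φ x) x :=
    (hφ.differentiableAt (by norm_num)).hasFDerivAt
  have h2 : HasFDerivAt (fun y => fderiv ℝ φ y v) (fderiv ℝ (fun y => fderiv ℝ φ y v) x) x :=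
    (((hφ.fderiv_right (m := 1) (by norm_num)).differentiableAt one_ne_zero).clm_apply
      (differentiableAt_const v)).hasFDerivAt
  have h3 := (hasDerivAt_inv hφpos.ne').comp_hasFDerivAt x h1
  have h4 := (hf.hasFDerivAt.pow 2).mul (h3.mul h2)
  have h5 : fderiv ℝ (fieldComponent f φ v) x = _ := h4.fderiv
  rw [h5]
  simp
  field_simp
  ring

/-- The pointwise inequality `div ((f² / φ) ∇φ) ≤ ‖∇f‖² + V f²` at a point where `φ` is a positive
supersolution. -/
lemma sum_fderiv_fieldComponent_le {n : ℕ} {f φ : EuclideanSpace ℝ (Fin n) → ℝ}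
    {x : EuclideanSpace ℝ (Fin n)} {c : ℝ} (hφ : ContDiffAt ℝ 2 φ x) (hφpos : 0 < φ x)
    (hf : DifferentiableAt ℝ f x) (hsuper : euclideanLaplacian φ x ≤ c * φ x) :
    ∑ i, fderiv ℝ (fieldComponent f φ (EuclideanSpace.single i 1)) x (EuclideanSpace.single i 1) ≤
      ‖gradient f x‖ ^ 2 + c * f x ^ 2 := by
  have hV : f x ^ 2 / φ x * euclideanLaplacian φ x ≤ c * f x ^ 2 := by
    calc f x ^ 2 / φ x * euclideanLaplacian φ x ≤ f x ^ 2 / φ x * (c * φ x) := by gcongr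
      _ = c * f x ^ 2 := by field_simp
  rw [norm_gradient_sq]
  refine le_trans ?_ (add_le_add_right hV _)
  rw [euclideanLaplacian, Finset.mul_sum, ← Finset.sum_add_distrib]
  refine Finset.sum_le_sum fun i _ => ?_
  rw [fderiv_fieldComponent hφ hφpos hf]
  nlinarith [sq_nonneg (fderiv ℝ f x (EuclideanSpace.single i 1) -
    f x * (fderiv ℝ φ x (EuclideanSpace.single i 1) / φ x))]

/-- Local boundedness of `V` makes the integrand of the quadratic form genuinely integrable. -/
lemma integrable_quadraticForm {n : ℕ} {f V : EuclideanSpace ℝ (Fin n) → ℝ}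
    (hVmeas : Measurable V) (hV : ∃ C : ℝ, ∀ x ∈ tsupport f, |V x| ≤ C)
    (hf : ContDiff ℝ 1 f) (hc : HasCompactSupport f) :
    Integrable (fun x => ‖gradient f x‖ ^ 2 + V x * f x ^ 2) := by
  refine Integrable.add ?_ ?_
  · simp_rw [norm_gradient_sq]
    refine integrable_finsetSum _ fun i _ => ?_
    refine Continuous.integrable_of_hasCompactSupport
      (((hf.continuous_fderiv one_ne_zero).clm_apply continuous_const).pow 2) ?_
    exact (hc.fderiv_apply ℝ _).comp_left (g := fun t : ℝ => t ^ 2) (by simp)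
  · obtain ⟨C, hC⟩ := hV
    have hs : HasCompactSupport (fun x => f x ^ 2) :=
      hc.comp_left (g := fun t : ℝ => t ^ 2) (by simp)
    have hcont : Continuous (fun x => f x ^ 2) := hf.continuous.pow 2
    have hf2 : Integrable (fun x => C * f x ^ 2) :=
      (hcont.integrable_of_hasCompactSupport hs).const_mul C
    have hm : Measurable (fun x => V x * f x ^ 2) := hVmeas.mul hcont.measurable
    refine hf2.mono' hm.aestronglyMeasurable (Filter.Eventually.of_forall fun x => ?_)
    by_cases hx : x ∈ tsupport f
    · rw [Real.norm_eq_abs, abs_mul, abs_of_nonneg (sq_nonneg (f x))]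
      exact mul_le_mul_of_nonneg_right (hC x hx) (sq_nonneg _)
    · simp [image_eq_zero_of_notMem_tsupport hx]

theorem stmt_8 (n : ℕ) (hn : 1 ≤ n) (Ω : Set (EuclideanSpace ℝ (Fin n))) (hΩ : IsOpen Ω)
    (V : EuclideanSpace ℝ (Fin n) → ℝ) (hVmeas : Measurable V)
    (hVloc : ∀ K : Set (EuclideanSpace ℝ (Fin n)), IsCompact K → K ⊆ Ω →
      ∃ C : ℝ, ∀ x ∈ K, |V x| ≤ C)
    (φ : EuclideanSpace ℝ (Fin n) → ℝ) (hφ : ContDiffOn ℝ 2 φ Ω)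
    (hφpos : ∀ x ∈ Ω, 0 < φ x)
    (hsuper : ∀ x ∈ Ω, euclideanLaplacian φ x ≤ V x * φ x) :
    ∀ f : EuclideanSpace ℝ (Fin n) → ℝ, ContDiff ℝ (⊤ : ℕ∞) f → HasCompactSupport f →
      tsupport f ⊆ Ω →
      0 ≤ ∫ x in Ω, (‖gradient f x‖ ^ 2 + V x * f x ^ 2) := by
  intro f hf' hc hfΩ
  have hf : ContDiff ℝ 1 f := hf'.of_le (by exact_mod_cast le_top)
  have hfd : Differentiable ℝ f := hf.differentiable one_ne_zero
  have hX := fun i : Fin n => integral_fderiv_apply_eq_zero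
    (contDiff_fieldComponent hΩ hφ hφpos hf hfΩ (EuclideanSpace.single i 1))
    (hasCompactSupport_fieldComponent hc φ _) (EuclideanSpace.single i 1)
  have hdiv : ∫ x, ∑ i, fderiv ℝ (fieldComponent f φ (EuclideanSpace.single i 1)) x
      (EuclideanSpace.single i 1) = 0 := by
    rw [integral_finsetSum _ fun i _ => (hX i).1]
    exact Finset.sum_eq_zero fun i _ => (hX i).2
  have hgrad : ∀ x ∉ tsupport f, gradient f x = 0 := fun x hx => by
    have h := image_eq_zero_of_notMem_tsupport fun h => hx (tsupport_fderiv_subset ℝ h)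
    simp [gradient, h]
  rw [setIntegral_eq_integral_of_forall_compl_eq_zero fun x hx => by
    have hx' : x ∉ tsupport f := fun h => hx (hfΩ h)
    simp [hgrad x hx', image_eq_zero_of_notMem_tsupport hx'], ← hdiv]
  refine integral_mono (integrable_finsetSum _ fun i _ => (hX i).1)
    (integrable_quadraticForm hVmeas (hVloc _ hc hfΩ) hf hc) fun x => ?_
  by_cases hx : x ∈ tsupport f
  · have hxΩ := hfΩ hx
    exact sum_fderiv_fieldComponent_le (hφ.contDiffAt (hΩ.mem_nhds hxΩ)) (hφpos x hxΩ) (hfd x)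
      (hsuper x hxΩ)
  · have hzero : ∀ v, fderiv ℝ (fieldComponent f φ v) x = 0 := fun v => by
      have h : fieldComponent f φ v =ᶠ[nhds x] fun _ => 0 := by
        filter_upwards [notMem_tsupport_iff_eventuallyEq.1 hx] with y hy
        simp [fieldComponent, hy]
      simp [h.fderiv_eq]
    simp [hzero, hgrad x hx, image_eq_zero_of_notMem_tsupport hx]
end
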